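/- Let Q be one of the graphs A_n (n ≥ 1), D_n (n ≥ 4), E_6, E_7 or E_8. Then the Birman–Murakami–Wenzl algebra B(Q) over the rational function field K = ℚ(l,δ) is a semisimple ring. -/

import Mathlib

open FreeAlgebra

/-- The path graph (Coxeter diagram of type `A_n`) on nodes `1, …, n`
(realized as `Fin n`, node `i` corresponding to index `i-1`): node `i` is
adjacent to node `i+1` for `1 ≤ i ≤ n-1`. -/
def typeA (n : ℕ) : SimpleGraph (Fin n) :=
  SimpleGraph.fromRel (fun i j => (i : ℕ) + 1 = (j : ℕ))

/-- The Coxeter diagram of type `D_n` (`n ≥ 4`) on nodes `1, …, n` (realized as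
`Fin n`, node `i` corresponding to index `i-1`): nodes `1` and `2` are both
adjacent to node `3`, and nodes `i`, `i+1` are adjacent for `3 ≤ i ≤ n-1`. -/
def typeD (n : ℕ) : SimpleGraph (Fin n) :=
  SimpleGraph.fromRel (fun i j =>
    ((i : ℕ) = 0 ∧ (j : ℕ) = 2) ∨ ((i : ℕ) = 1 ∧ (j : ℕ) = 2) ∨
      (2 ≤ (i : ℕ) ∧ (i : ℕ) + 1 = (j : ℕ)))

/-- The Coxeter diagram of type `E_n` (`n = 6, 7, 8`) on nodes `1, …, n`
(realized as `Fin n`, node `i` corresponding to index `i-1`): a path on nodes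
`1, 3, 4, …, n` together with node `2` attached to node `4`. -/
def typeE (n : ℕ) : SimpleGraph (Fin n) :=
  SimpleGraph.fromRel (fun i j =>
    ((i : ℕ) = 0 ∧ (j : ℕ) = 2) ∨ ((i : ℕ) = 1 ∧ (j : ℕ) = 3) ∨
      (2 ≤ (i : ℕ) ∧ (i : ℕ) + 1 = (j : ℕ)))
/-- The field `K = ℚ(l,δ)` of rational functions over `ℚ` in two independent
variables `l` and `δ`, realized as an iterated rational function field. -/
abbrev BMWField : Type := RatFunc (RatFunc ℚ)

/-- The variable `l` of `K = ℚ(l,δ)`. -/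
noncomputable def lVar : BMWField := RatFunc.X

/-- The variable `δ` of `K = ℚ(l,δ)`. -/
noncomputable def deltaVar : BMWField := RatFunc.C RatFunc.X

/-- The element `m = (l - l⁻¹)/(1 - δ)` of `K = ℚ(l,δ)`. -/
noncomputable def mVar : BMWField := (lVar - lVar⁻¹) / (1 - deltaVar)

/-- The defining relations of the Birman–Murakami–Wenzl algebra `B(Q)` of the
simply-laced type given by the graph `Q`, imposed on the free algebra over
`K = ℚ(l,δ)` on the generators `g_1, …, g_n` (encoded as `Sum.inl i`) and
`e_1, …, e_n` (encoded as `Sum.inr i`). -/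
inductive BMWRel (n : ℕ) (Q : SimpleGraph (Fin n)) :
    FreeAlgebra BMWField (Fin n ⊕ Fin n) → FreeAlgebra BMWField (Fin n ⊕ Fin n) → Prop
  /-- `g_i g_j = g_j g_i` whenever `i ≁ j` -/
  | gg (i j : Fin n) (hne : i ≠ j) (hadj : ¬ Q.Adj i j) :
      BMWRel n Q (ι BMWField (.inl i) * ι BMWField (.inl j))
        (ι BMWField (.inl j) * ι BMWField (.inl i))
  /-- `g_i g_j g_i = g_j g_i g_j` whenever `i ∼ j` -/
  | braid (i j : Fin n) (hadj : Q.Adj i j) :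
      BMWRel n Q (ι BMWField (.inl i) * ι BMWField (.inl j) * ι BMWField (.inl i))
        (ι BMWField (.inl j) * ι BMWField (.inl i) * ι BMWField (.inl j))
  /-- `m·e_i = l·(g_i² + m·g_i - 1)` -/
  | quad (i : Fin n) :
      BMWRel n Q (mVar • ι BMWField (.inr i))
        (lVar • (ι BMWField (.inl i) * ι BMWField (.inl i)
          + mVar • ι BMWField (.inl i) - 1))
  /-- `g_i e_i = l⁻¹·e_i` -/
  | ge (i : Fin n) :
      BMWRel n Q (ι BMWField (.inl i) * ι BMWField (.inr i)) (lVar⁻¹ • ι BMWField (.inr i))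
  /-- `e_i g_j e_i = l·e_i` whenever `i ∼ j` -/
  | ege (i j : Fin n) (hadj : Q.Adj i j) :
      BMWRel n Q (ι BMWField (.inr i) * ι BMWField (.inl j) * ι BMWField (.inr i))
        (lVar • ι BMWField (.inr i))

/-- The Birman–Murakami–Wenzl algebra `B(Q)` of simply-laced type `Q` over
the rational function field `K = ℚ(l,δ)`. -/
abbrev BMWAlgebra (n : ℕ) (Q : SimpleGraph (Fin n)) : Type :=
  RingQuot (BMWRel n Q)

/-! The relation `m e = l (g² + m g - 1)` expresses every `e i` through `g i`. With `f i = δ⁻¹ e i`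
the defining relations have coefficients in any valuation ring `V` of `ℚ(l, δ)` that dominates the
local ring of `ℚ[δ⁻¹][l]` at the point `l = 1`, `δ⁻¹ = 0`, and there `m` and `m δ` vanish.
The `V`-algebra generated by all `g i` and `f i` is finitely generated as a `V`-module because the
quadratic form of `Q` is positive definite, hence has finitely many roots. In its special fibre the
`g i` are involutions, the `f i` are commuting idempotents, and the two families together generate a
quotient of the algebra of a finite group over a field of characteristic zero. This is semisimple by
Maschke's theorem, and semisimplicity passes from the special fibre to the generic one. -/

namespace BMW

/-! ### Positive roots of a graph -/

section SimpleRoots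

variable {ι : Type*}

/-- The height of a lattice vector: the sum of its coordinates on the simple roots. -/
def height [Fintype ι] : (ι → ℤ) →ₗ[ℤ] ℤ := ∑ i, LinearMap.proj i

lemma height_apply [Fintype ι] (b : ι → ℤ) : height b = ∑ i, b i := by simp [height]

variable [DecidableEq ι]

/-- The simple root `α_k`, as the `k`-th basis vector of the root lattice `ι → ℤ`. -/
def simpleRoot (k : ι) : ι → ℤ := Pi.single k 1

lemma simpleRoot_self (k : ι) : simpleRoot k k = 1 := by simp [simpleRoot]

lemma simpleRoot_of_ne {i k : ι} (h : i ≠ k) : simpleRoot k i = 0 := by simp [simpleRoot, h]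

lemma simpleRoot_nonneg (k i : ι) : 0 ≤ simpleRoot k i := by
  by_cases h : i = k
  · rw [h, simpleRoot_self]; exact zero_le_one
  · rw [simpleRoot_of_ne h]

lemma simpleRoot_injective : Function.Injective (simpleRoot : ι → ι → ℤ) := by
  intro i k h
  by_contra hne
  have := congrFun h i
  rw [simpleRoot_self, simpleRoot_of_ne hne] at this
  exact one_ne_zero this

lemma height_simpleRoot [Fintype ι] (k : ι) : height (simpleRoot k) = 1 := by
  simp [height_apply, simpleRoot]

end SimpleRoots

section TitsForm

variable {ι : Type*} [Fintype ι] [DecidableEq ι] (Q : SimpleGraph ι)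

open scoped Classical in
/-- The Tits form of the graph `Q` on the root lattice `ι → ℤ`: the symmetric bilinear form whose
Gram matrix is the simply laced Cartan matrix of `Q`. -/
noncomputable def titsForm : LinearMap.BilinForm ℤ (ι → ℤ) :=
  Matrix.toBilin' ((2 : ℤ) • (1 : Matrix ι ι ℤ) - Q.adjMatrix ℤ)

/-- The simple coroot at `k`, as the linear form `(α_k, ·)` on the root lattice. -/
noncomputable def coroot (k : ι) : (ι → ℤ) →ₗ[ℤ] ℤ := titsForm Q (simpleRoot k)

/-- The simple reflection at `k`, acting on the root lattice. -/
noncomputable def reflect (k : ι) (b : ι → ℤ) : ι → ℤ := b - coroot Q k b • simpleRoot k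

open scoped Classical in
lemma coroot_apply (k : ι) (b : ι → ℤ) : coroot Q k b = 2 * b k - ∑ i with Q.Adj k i, b i := by
  rw [coroot, titsForm, Matrix.toBilin'_apply', simpleRoot, single_one_dotProduct,
    Matrix.sub_mulVec, Pi.sub_apply, SimpleGraph.adjMatrix_mulVec_apply, Matrix.smul_mulVec,
    Matrix.one_mulVec, Pi.smul_apply, smul_eq_mul, SimpleGraph.neighborFinset_eq_filter]

lemma titsForm_comm (a b : ι → ℤ) : titsForm Q a b = titsForm Q b a := by
  simp only [titsForm, Matrix.toBilin'_apply', Matrix.dotProduct_mulVec, dotProduct_comm _ b,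
    ← Matrix.mulVec_transpose, Matrix.transpose_sub, Matrix.transpose_smul, Matrix.transpose_one,
    SimpleGraph.transpose_adjMatrix]

lemma titsForm_simpleRoot_right (b : ι → ℤ) (k : ι) :
    titsForm Q b (simpleRoot k) = coroot Q k b := titsForm_comm Q b _

lemma titsForm_apply (a b : ι → ℤ) : titsForm Q a b = ∑ i, a i * coroot Q i b := by
  conv_lhs => rw [pi_eq_sum_univ' a]
  simp only [map_sum, map_smul, LinearMap.sum_apply, LinearMap.smul_apply, smul_eq_mul]
  rfl

lemma coroot_simpleRoot_self (k : ι) : coroot Q k (simpleRoot k) = 2 := by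
  classical simp [coroot_apply, simpleRoot, Pi.single_apply]

variable {Q} in
lemma coroot_simpleRoot_of_adj {i k : ι} (h : Q.Adj i k) : coroot Q i (simpleRoot k) = -1 := by
  classical simp [coroot_apply, simpleRoot, Pi.single_apply, h, h.ne]

variable {Q} in
lemma coroot_simpleRoot_of_not_adj {i k : ι} (hne : i ≠ k) (h : ¬ Q.Adj i k) :
    coroot Q i (simpleRoot k) = 0 := by
  classical simp [coroot_apply, simpleRoot, Pi.single_apply, h, hne]

lemma coroot_simpleRoot_ne_one (i k : ι) : coroot Q i (simpleRoot k) ≠ 1 := by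
  by_cases h : i = k
  · subst h; rw [coroot_simpleRoot_self]; decide
  by_cases ha : Q.Adj i k
  · rw [coroot_simpleRoot_of_adj ha]; decide
  · rw [coroot_simpleRoot_of_not_adj h ha]; decide

lemma titsForm_add_self (a b : ι → ℤ) :
    titsForm Q (a + b) (a + b) = titsForm Q a a + 2 * titsForm Q a b + titsForm Q b b := by
  simp only [map_add, LinearMap.add_apply]
  rw [titsForm_comm Q b a]
  ring

lemma titsForm_sub_self (a b : ι → ℤ) :
    titsForm Q (a - b) (a - b) = titsForm Q a a - 2 * titsForm Q a b + titsForm Q b b := by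
  simp only [map_sub, LinearMap.sub_apply]
  rw [titsForm_comm Q b a]
  ring

lemma titsForm_simpleRoot_self (k : ι) : titsForm Q (simpleRoot k) (simpleRoot k) = 2 :=
  coroot_simpleRoot_self Q k

lemma titsForm_add_simpleRoot (b : ι → ℤ) (k : ι) :
    titsForm Q (b + simpleRoot k) (b + simpleRoot k) = titsForm Q b b + 2 * coroot Q k b + 2 := by
  rw [titsForm_add_self, titsForm_simpleRoot_right, titsForm_simpleRoot_self]

lemma titsForm_sub_simpleRoot (b : ι → ℤ) (k : ι) :
    titsForm Q (b - simpleRoot k) (b - simpleRoot k) = titsForm Q b b - 2 * coroot Q k b + 2 := by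
  rw [titsForm_sub_self, titsForm_simpleRoot_right, titsForm_simpleRoot_self]

lemma even_titsForm_self (b : ι → ℤ) : Even (titsForm Q b b) := by
  have partial_sums (T : Finset ι) :
      Even (titsForm Q (∑ i ∈ T, b i • simpleRoot i) (∑ i ∈ T, b i • simpleRoot i)) := by
    induction T using Finset.induction_on with
    | empty => simp
    | insert i T hi ih =>
      rw [Finset.sum_insert hi, titsForm_add_self]
      refine (Even.add ?_ (even_two_mul _)).add ih
      simp only [map_smul, LinearMap.smul_apply, titsForm_simpleRoot_self, smul_eq_mul]
      exact ⟨b i * b i, by ring⟩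
  have sum_eq : ∑ i, b i • simpleRoot i = b := (pi_eq_sum_univ' b).symm
  exact sum_eq ▸ partial_sums Finset.univ

lemma coroot_reflect_self (k : ι) (b : ι → ℤ) : coroot Q k (reflect Q k b) = -coroot Q k b := by
  rw [reflect, map_sub, map_smul, coroot_simpleRoot_self, smul_eq_mul]; ring

variable {Q} in
lemma coroot_reflect_of_adj {i k : ι} (h : Q.Adj i k) (b : ι → ℤ) :
    coroot Q i (reflect Q k b) = coroot Q i b + coroot Q k b := by
  rw [reflect, map_sub, map_smul, coroot_simpleRoot_of_adj h, smul_eq_mul]; ring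

variable {Q} in
lemma coroot_reflect_of_not_adj {i k : ι} (hne : i ≠ k) (h : ¬ Q.Adj i k) (b : ι → ℤ) :
    coroot Q i (reflect Q k b) = coroot Q i b := by
  rw [reflect, map_sub, map_smul, coroot_simpleRoot_of_not_adj hne h, smul_zero, sub_zero]

lemma reflect_reflect (k : ι) (b : ι → ℤ) : reflect Q k (reflect Q k b) = b := by
  rw [reflect, coroot_reflect_self, reflect]; module

variable {Q} in
lemma reflect_comm {i k : ι} (hne : i ≠ k) (h : ¬ Q.Adj i k) (b : ι → ℤ) :
    reflect Q k (reflect Q i b) = reflect Q i (reflect Q k b) := by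
  rw [reflect, coroot_reflect_of_not_adj hne.symm (fun h' => h h'.symm), reflect,
    reflect.eq_def Q i, coroot_reflect_of_not_adj hne h, reflect]
  abel

variable {Q} in
lemma reflect_braid {i k : ι} (h : Q.Adj i k) (b : ι → ℤ) :
    reflect Q k (reflect Q i (reflect Q k (reflect Q i b))) = reflect Q i (reflect Q k b) := by
  simp only [reflect, map_sub, map_smul, coroot_simpleRoot_self, coroot_simpleRoot_of_adj h,
    coroot_simpleRoot_of_adj h.symm, smul_eq_mul]
  module

lemma titsForm_reflect_self (k : ι) (b : ι → ℤ) :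
    titsForm Q (reflect Q k b) (reflect Q k b) = titsForm Q b b := by
  rw [reflect, titsForm_sub_self]
  simp only [map_smul, LinearMap.smul_apply, titsForm_simpleRoot_right, coroot_simpleRoot_self,
    smul_eq_mul]
  ring

/-- `Q` is positive definite if its Tits form is; the connected such graphs are exactly the
simply laced Dynkin diagrams. -/
def IsPosDef : Prop := ∀ b : ι → ℤ, b ≠ 0 → 0 < titsForm Q b b

variable {Q}

lemma IsPosDef.two_le (hQ : IsPosDef Q) {b : ι → ℤ} (hb : b ≠ 0) : 2 ≤ titsForm Q b b := by
  obtain ⟨r, hr⟩ := even_titsForm_self Q b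
  have := hQ b hb
  omega

lemma IsPosDef.nonneg (hQ : IsPosDef Q) (b : ι → ℤ) : 0 ≤ titsForm Q b b := by
  by_cases hb : b = 0
  · simp [hb]
  · exact (hQ b hb).le

/- The columns of the adjugate of the Gram matrix give a vector `c` with `(c, b) = det · b i`, and
`|b i|` is then bounded by Cauchy–Schwarz. -/
lemma IsPosDef.exists_sq_le (hQ : IsPosDef Q) (i : ι) :
    ∃ C : ℤ, ∀ b : ι → ℤ, b i ^ 2 ≤ C * titsForm Q b b := by
  classical
  set G : Matrix ι ι ℤ := (2 : ℤ) • (1 : Matrix ι ι ℤ) - Q.adjMatrix ℤ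
  have form_eq (a b : ι → ℤ) : titsForm Q a b = a ⬝ᵥ G.mulVec b := Matrix.toBilin'_apply' _ _ _
  have det_ne : G.det ≠ 0 := by
    intro h
    obtain ⟨b, hb, hGb⟩ := Matrix.exists_mulVec_eq_zero_iff.2 h
    have := hQ b hb
    simp [form_eq, hGb] at this
  set c : ι → ℤ := G.adjugate.mulVec (Pi.single i 1) with hc
  have form_c (b : ι → ℤ) : titsForm Q b c = G.det * b i := by
    rw [form_eq, hc, Matrix.mulVec_mulVec, Matrix.mul_adjugate, Matrix.smul_mulVec,
      Matrix.one_mulVec, dotProduct_smul, dotProduct_single_one, smul_eq_mul]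
  refine ⟨titsForm Q c c, fun b => ?_⟩
  have cauchy_schwarz :=
    (titsForm Q).apply_sq_le_of_symm hQ.nonneg ⟨fun a b => titsForm_comm Q a b⟩ b c
  rw [form_c, mul_pow] at cauchy_schwarz
  have one_le_det : 1 ≤ G.det ^ 2 := by have := pow_pos (abs_pos.2 det_ne) 2; rwa [sq_abs] at this
  nlinarith [sq_nonneg (b i)]

lemma IsPosDef.finite_titsForm_eq (hQ : IsPosDef Q) (q : ℤ) :
    {b : ι → ℤ | titsForm Q b b = q}.Finite := by
  choose C hC using hQ.exists_sq_le
  refine (Set.Finite.pi' fun i => Set.finite_Icc (-(C i * q)) (C i * q)).subset fun b hb i => ?_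
  have sq_le : b i ^ 2 ≤ C i * q := by
    have := hC i b
    rwa [show titsForm Q b b = q from hb] at this
  exact ⟨by linarith [Int.le_self_sq (-b i), neg_sq (b i)], (Int.le_self_sq _).trans sq_le⟩

lemma IsPosDef.exists_leaf (hQ : IsPosDef Q) {T : Finset ι} (hT : T.Nonempty) :
    ∃ i ∈ T, ∀ j ∈ T, ∀ k ∈ T, Q.Adj i j → Q.Adj i k → j = k := by
  classical
  by_contra! two_neighbours
  have one_apply (i : ι) : (∑ k ∈ T, simpleRoot k) i = if i ∈ T then 1 else 0 := by
    simp [Finset.sum_apply, simpleRoot, Pi.single_apply]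
  have pairing_le (i : ι) (hi : i ∈ T) : coroot Q i (∑ k ∈ T, simpleRoot k) ≤ 0 := by
    obtain ⟨j, hj, k, hk, haj, hak, hjk⟩ := two_neighbours i hi
    have pair_le : ∑ p ∈ {j, k}, (if p ∈ T then (1 : ℤ) else 0) ≤
        ∑ p with Q.Adj i p, if p ∈ T then 1 else 0 := by
      refine Finset.sum_le_sum_of_subset_of_nonneg ?_ fun p _ _ => by positivity
      simp [Finset.insert_subset_iff, haj, hak]
    rw [Finset.sum_pair hjk, if_pos hj, if_pos hk] at pair_le
    simp only [coroot_apply, one_apply, if_pos hi]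
    linarith
  have ne_zero : ∑ k ∈ T, simpleRoot k ≠ 0 := fun h => by
    obtain ⟨i, hi⟩ := hT
    have := one_apply i
    rw [h, if_pos hi] at this
    exact zero_ne_one this
  have form_pos := hQ _ ne_zero
  simp only [titsForm_apply, one_apply, ite_mul, one_mul, zero_mul] at form_pos
  rw [Finset.sum_ite_mem, Finset.univ_inter] at form_pos
  exact form_pos.not_ge (Finset.sum_nonpos pairing_le)

lemma IsPosDef.not_adj_of_adj_of_adj (hQ : IsPosDef Q) {i j k : ι} (hij : Q.Adj i j)
    (hik : Q.Adj i k) : ¬ Q.Adj j k := by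
  intro hjk
  obtain ⟨p, hp, leaf⟩ := hQ.exists_leaf (T := {i, j, k}) ⟨i, by simp⟩
  simp only [Finset.mem_insert, Finset.mem_singleton] at hp
  rcases hp with rfl | rfl | rfl
  · exact hjk.ne (leaf j (by simp) k (by simp) hij hik)
  · exact hik.ne (leaf i (by simp) k (by simp) hij.symm hjk)
  · exact hij.ne (leaf i (by simp) j (by simp) hik.symm hjk.symm)

end TitsForm

section PosRoots

variable {ι : Type*} [Fintype ι] [DecidableEq ι] {Q : SimpleGraph ι} {S : Finset ι} {b : ι → ℤ}

variable (Q S b) in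
/-- `b` is a positive root of the parabolic subsystem of `Q` spanned by the nodes in `S`. -/
structure IsPosRoot : Prop where
  nonneg (i : ι) : 0 ≤ b i
  eq_zero {i : ι} (hi : i ∉ S) : b i = 0
  norm : titsForm Q b b = 2

variable (Q S b) in
/-- `b` lies in the closed dominant chamber of the parabolic subsystem spanned by `S`. -/
def IsDominant : Prop := ∀ k ∈ S, 0 ≤ coroot Q k b

variable (Q S) in
/-- `S` induces a connected subgraph of `Q`: a nonempty part of `S` that is closed under adjacency
in `S` is all of `S`. In this encoding the empty set is connected. -/
def IsConnectedOn : Prop :=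
  ∀ T ⊆ S, T.Nonempty → (∀ i ∈ T, ∀ k ∈ S, Q.Adj i k → k ∈ T) → T = S

lemma coroot_le_of_nonneg (hb : ∀ i, 0 ≤ b i) (k : ι) : coroot Q k b ≤ 2 * b k := by
  classical
  rw [coroot_apply]
  linarith [Finset.sum_nonneg fun i (_ : i ∈ Finset.univ.filter (Q.Adj k)) => hb i]

lemma IsDominant.titsForm_nonneg (hb : IsDominant Q S b) {a : ι → ℤ} (ha : ∀ i, 0 ≤ a i)
    (haS : ∀ i ∉ S, a i = 0) : 0 ≤ titsForm Q a b := by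
  rw [titsForm_apply]
  refine Finset.sum_nonneg fun i _ => ?_
  by_cases hi : i ∈ S
  · exact mul_nonneg (ha i) (hb i hi)
  · rw [haS i hi, zero_mul]

lemma isPosRoot_simpleRoot {k : ι} (hk : k ∈ S) : IsPosRoot Q S (simpleRoot k) where
  nonneg := simpleRoot_nonneg k
  eq_zero hi := simpleRoot_of_ne fun h => hi (h ▸ hk)
  norm := titsForm_simpleRoot_self Q k

namespace IsPosRoot

lemma mono {T : Finset ι} (h : IsPosRoot Q S b) (hST : S ⊆ T) : IsPosRoot Q T b :=
  ⟨h.nonneg, fun hi => h.eq_zero fun hi' => hi (hST hi'), h.norm⟩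

lemma mem_of_simpleRoot {k : ι} (h : IsPosRoot Q S (simpleRoot k)) : k ∈ S := by
  by_contra hk
  have := h.eq_zero hk
  rw [simpleRoot_self] at this
  exact one_ne_zero this

lemma ne_zero (h : IsPosRoot Q S b) : b ≠ 0 := by
  rintro rfl
  simpa using h.norm

lemma height_pos (h : IsPosRoot Q S b) : 0 < height b := by
  rw [height_apply]
  refine (Finset.sum_nonneg fun i _ => h.nonneg i).lt_of_ne' fun h0 => h.ne_zero ?_
  rw [Finset.sum_eq_zero_iff_of_nonneg fun i _ => h.nonneg i] at h0
  exact funext fun i => h0 i (Finset.mem_univ i)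

lemma coroot_le_one (hQ : IsPosDef Q) (h : IsPosRoot Q S b) {k : ι} (hne : b ≠ simpleRoot k) :
    coroot Q k b ≤ 1 := by
  have := hQ.two_le (sub_ne_zero.2 hne)
  rw [titsForm_sub_simpleRoot, h.norm] at this
  omega

lemma eq_simpleRoot (hQ : IsPosDef Q) (h : IsPosRoot Q S b) {k : ι} (h2 : 2 ≤ coroot Q k b) :
    b = simpleRoot k := by
  by_contra hne
  have := h.coroot_le_one hQ hne
  omega

lemma neg_one_le_coroot (hQ : IsPosDef Q) (h : IsPosRoot Q S b) (k : ι) : -1 ≤ coroot Q k b := by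
  have hne : b + simpleRoot k ≠ 0 := by
    intro h0
    have := congrFun h0 k
    have := h.nonneg k
    simp only [Pi.add_apply, simpleRoot_self, Pi.zero_apply] at *
    omega
  have := hQ.two_le hne
  rw [titsForm_add_simpleRoot, h.norm] at this
  omega

lemma apply_pos (h : IsPosRoot Q S b) {k : ι} (hc : 0 < coroot Q k b) : 0 < b k := by
  have := coroot_le_of_nonneg (Q := Q) h.nonneg k
  omega

lemma mem_of_coroot_pos (h : IsPosRoot Q S b) {k : ι} (hc : 0 < coroot Q k b) : k ∈ S := by
  by_contra hk
  exact (h.apply_pos hc).ne' (h.eq_zero hk)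

lemma sub_simpleRoot (h : IsPosRoot Q S b) {k : ι} (hc : coroot Q k b = 1) :
    IsPosRoot Q S (b - simpleRoot k) where
  nonneg i := by
    by_cases hik : i = k
    · have := h.apply_pos (hc ▸ one_pos)
      simp only [hik, Pi.sub_apply, simpleRoot_self]
      omega
    · simp [simpleRoot_of_ne hik, h.nonneg i]
  eq_zero {i} hi := by
    have hik : i ≠ k := by rintro rfl; exact hi (h.mem_of_coroot_pos (hc ▸ one_pos))
    simp [simpleRoot_of_ne hik, h.eq_zero hi]
  norm := by rw [titsForm_sub_simpleRoot, h.norm, hc]; norm_num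

lemma add_simpleRoot (h : IsPosRoot Q S b) {k : ι} (hk : k ∈ S) (hc : coroot Q k b = -1) :
    IsPosRoot Q S (b + simpleRoot k) where
  nonneg i := add_nonneg (h.nonneg i) (simpleRoot_nonneg k i)
  eq_zero {i} hi := by
    have hik : i ≠ k := by rintro rfl; exact hi hk
    simp [simpleRoot_of_ne hik, h.eq_zero hi]
  norm := by rw [titsForm_add_simpleRoot, h.norm, hc]; norm_num

lemma exists_coroot_pos (h : IsPosRoot Q S b) : ∃ k ∈ S, 0 < coroot Q k b := by
  by_contra! hc
  have : titsForm Q b b ≤ 0 := by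
    rw [titsForm_apply]
    refine Finset.sum_nonpos fun i _ => ?_
    by_cases hi : i ∈ S
    · exact mul_nonpos_of_nonneg_of_nonpos (h.nonneg i) (hc i hi)
    · rw [h.eq_zero hi, zero_mul]
  rw [h.norm] at this
  omega

lemma simpleRoot_or_coroot_eq_one (hQ : IsPosDef Q) (h : IsPosRoot Q S b) :
    (∃ k ∈ S, b = simpleRoot k) ∨ ∃ k ∈ S, coroot Q k b = 1 := by
  obtain ⟨k, hk, hc⟩ := h.exists_coroot_pos
  by_cases hne : b = simpleRoot k
  · exact Or.inl ⟨k, hk, hne⟩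
  · exact Or.inr ⟨k, hk, by have := h.coroot_le_one hQ hne; omega⟩

lemma eq_add_of_adj (hQ : IsPosDef Q) (h : IsPosRoot Q S b) {i k : ι} (ha : Q.Adj i k)
    (hi : coroot Q i b = 1) (hk : coroot Q k b = 1) : b = simpleRoot i + simpleRoot k := by
  have pairing : coroot Q i (b - simpleRoot k) = 2 := by
    rw [map_sub, coroot_simpleRoot_of_adj ha, hi]; norm_num
  exact sub_eq_iff_eq_add.1 ((h.sub_simpleRoot hk).eq_simpleRoot hQ pairing.ge)

lemma apply_pos_of_isDominant (hS : IsConnectedOn Q S) (h : IsPosRoot Q S b)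
    (hd : IsDominant Q S b) {i : ι} (hi : i ∈ S) : 0 < b i := by
  classical
  suffices support_eq : {i ∈ S | 0 < b i} = S by
    rw [← support_eq] at hi
    exact (Finset.mem_filter.1 hi).2
  refine hS _ (Finset.filter_subset _ _) ?_ fun i hi k hk ha => ?_
  · obtain ⟨k, hk, hc⟩ := h.exists_coroot_pos
    exact ⟨k, Finset.mem_filter.2 ⟨hk, h.apply_pos hc⟩⟩
  · refine Finset.mem_filter.2 ⟨hk, ?_⟩
    by_contra! hbk
    have pairing_nonneg := hd k hk
    have le_sum : b i ≤ ∑ j with Q.Adj k j, b j :=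
      Finset.single_le_sum (fun j _ => h.nonneg j) (by simp [ha.symm])
    rw [coroot_apply] at pairing_nonneg
    have := (Finset.mem_filter.1 hi).2
    omega

end IsPosRoot

lemma IsPosDef.exists_height_le (hQ : IsPosDef Q) (S : Finset ι) :
    ∃ N : ℕ, ∀ b, IsPosRoot Q S b → height b ≤ N := by
  obtain ⟨N, hN⟩ := ((hQ.finite_titsForm_eq 2).image height).bddAbove
  exact ⟨N.toNat, fun b hb => (hN ⟨b, hb.norm, rfl⟩).trans (Int.self_le_toNat N)⟩

lemma IsPosDef.exists_isDominant (hQ : IsPosDef Q) (hS : S.Nonempty) :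
    ∃ b, IsPosRoot Q S b ∧ IsDominant Q S b := by
  obtain ⟨k, hk⟩ := hS
  obtain ⟨b, hb, hmax⟩ := Set.exists_max_image {b | IsPosRoot Q S b} height
    ((hQ.finite_titsForm_eq 2).subset fun b hb => hb.norm) ⟨_, isPosRoot_simpleRoot hk⟩
  refine ⟨b, hb, fun i hi => ?_⟩
  by_contra! hc
  have := hb.neg_one_le_coroot hQ i
  have := hmax _ (hb.add_simpleRoot hi (by omega))
  rw [map_add, height_simpleRoot] at this
  omega

lemma titsForm_posPart_negPart_nonpos (b : ι → ℤ) : titsForm Q b⁺ b⁻ ≤ 0 := by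
  classical
  rw [titsForm_apply]
  refine Finset.sum_nonpos fun i _ => ?_
  have disjoint : b⁺ i * b⁻ i = 0 := by
    rw [Pi.posPart_apply, Pi.negPart_apply]
    rcases le_total (b i) 0 with h | h
    · rw [posPart_eq_zero.2 h, zero_mul]
    · rw [negPart_eq_zero.2 h, mul_zero]
  have sum_nonneg : 0 ≤ b⁺ i * ∑ k with Q.Adj i k, b⁻ k :=
    mul_nonneg (posPart_nonneg b i) (Finset.sum_nonneg fun k _ => negPart_nonneg b k)
  rw [coroot_apply]
  linarith

lemma IsPosDef.nonneg_or_nonpos (hQ : IsPosDef Q) (hb : titsForm Q b b = 2) : 0 ≤ b ∨ b ≤ 0 := by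
  by_contra! h
  have pos := hQ.two_le (mt posPart_eq_zero.1 h.2)
  have neg := hQ.two_le (mt negPart_eq_zero.1 h.1)
  have := titsForm_posPart_negPart_nonpos (Q := Q) b
  rw [← posPart_sub_negPart b, titsForm_sub_self] at hb
  omega

lemma IsPosDef.eq_of_isDominant (hQ : IsPosDef Q) (hS : IsConnectedOn Q S) {a b : ι → ℤ}
    (ha : IsPosRoot Q S a) (hda : IsDominant Q S a) (hb : IsPosRoot Q S b)
    (hdb : IsDominant Q S b) : a = b := by
  by_contra hne
  have one_le : 1 ≤ titsForm Q a b := by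
    obtain ⟨k, hk, hc⟩ := hb.exists_coroot_pos
    have nonneg := hdb.titsForm_nonneg (a := a - simpleRoot k) (fun i => ?_) (fun i hi => ?_)
    · rw [map_sub, LinearMap.sub_apply] at nonneg
      have : titsForm Q (simpleRoot k) b = coroot Q k b := rfl
      omega
    · by_cases hik : i = k
      · have := ha.apply_pos_of_isDominant hS hda hk
        simp only [hik, Pi.sub_apply, simpleRoot_self]
        omega
      · simp [simpleRoot_of_ne hik, ha.nonneg i]
    · have hik : i ≠ k := by rintro rfl; exact hi hk
      simp [simpleRoot_of_ne hik, ha.eq_zero hi]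
  have norm_sub : titsForm Q (a - b) (a - b) = 4 - 2 * titsForm Q a b := by
    rw [titsForm_sub_self, ha.norm, hb.norm]; ring
  have := hQ.two_le (sub_ne_zero.2 hne)
  rcases hQ.nonneg_or_nonpos (b := a - b) (by omega) with h | h
  · have := hdb.titsForm_nonneg h fun i hi => by simp [ha.eq_zero hi, hb.eq_zero hi]
    rw [map_sub, LinearMap.sub_apply, hb.norm] at this
    omega
  · have := hda.titsForm_nonneg (a := b - a) (fun i => by simpa using h i)
      fun i hi => by simp [ha.eq_zero hi, hb.eq_zero hi]
    rw [map_sub, LinearMap.sub_apply, ha.norm, titsForm_comm Q b a] at this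
    omega

end PosRoots

/-! ### Systems of generators in a corner -/

section BraidFamily

variable {ι : Type*} {Q : SimpleGraph ι} {S T : Finset ι}

variable (Q S) in
/-- The elements `g i`, for `i ∈ S`, satisfy the braid relations of the graph `Q`. -/
structure IsBraidFamily {M : Type*} [Mul M] (g : ι → M) : Prop where
  comm {i j : ι} (hi : i ∈ S) (hj : j ∈ S) (hne : i ≠ j) (hij : ¬ Q.Adj i j) :
    g i * g j = g j * g i
  braid {i j : ι} (hi : i ∈ S) (hj : j ∈ S) (hij : Q.Adj i j) :
    g i * (g j * g i) = g j * (g i * g j)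

namespace IsBraidFamily

variable {M : Type*} [Semigroup M] {g : ι → M}

lemma mono (hg : IsBraidFamily Q S g) (hTS : T ⊆ S) : IsBraidFamily Q T g where
  comm hi hj := hg.comm (hTS hi) (hTS hj)
  braid hi hj := hg.braid (hTS hi) (hTS hj)

lemma comm_assoc (hg : IsBraidFamily Q S g) {i j : ι} (hi : i ∈ S) (hj : j ∈ S) (hne : i ≠ j)
    (hij : ¬ Q.Adj i j) (x : M) : g i * (g j * x) = g j * (g i * x) := by
  rw [← mul_assoc, hg.comm hi hj hne hij, mul_assoc]

lemma braid_assoc (hg : IsBraidFamily Q S g) {i j : ι} (hi : i ∈ S) (hj : j ∈ S)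
    (hij : Q.Adj i j) (x : M) : g i * (g j * (g i * x)) = g j * (g i * (g j * x)) := by
  rw [← mul_assoc (g j), ← mul_assoc (g i), hg.braid hi hj hij]
  simp only [mul_assoc]

end IsBraidFamily

end BraidFamily

/-- Nonzero parameters `l`, `m`, `δ` of a Birman–Murakami–Wenzl algebra over a field, with the
relation `m (1 - δ) = l - l⁻¹` and the genericity condition `l⁻¹ + m ≠ 0`. -/
structure Params (K : Type*) [Field K] where
  l : K
  m : K
  δ : K
  l_ne_zero : l ≠ 0
  m_ne_zero : m ≠ 0
  δ_ne_zero : δ ≠ 0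
  inv_add_ne_zero : l⁻¹ + m ≠ 0
  mul_one_sub : m * (1 - δ) = l - l⁻¹

section System

variable {K : Type*} [Field K] {A : Type*} [Ring A] [Algebra K A] (P : Params K)

namespace Params

/-- The element `e / δ` attached to a generator `g` in a corner with unit `o`; it is defined by the
quadratic relation `m e = l (g² + m g - o)`. -/
def idem (o g : A) : A := (P.l / (P.m * P.δ)) • (g * g + P.m • g - o)

lemma mul_self (o g : A) : g * g = o - P.m • g + (P.m * P.δ / P.l) • P.idem o g := by
  have coeff : P.m * P.δ / P.l * (P.l / (P.m * P.δ)) = 1 := by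
    have := P.l_ne_zero; have := P.m_ne_zero; have := P.δ_ne_zero; field_simp
  rw [idem, smul_smul, coeff, one_smul]; abel

lemma idem_op (o g : A) :
    P.idem (MulOpposite.op o) (MulOpposite.op g) = MulOpposite.op (P.idem o g) := by simp [idem]

lemma mul_idem_of_mul_eq {o o' x g g' : A} (hg : x * g = g' * x) (ho : x * o = o' * x) :
    x * P.idem o g = P.idem o' g' * x := by
  have hgg : x * (g * g) = g' * g' * x := by rw [← mul_assoc, hg, mul_assoc, hg, mul_assoc]
  simp only [idem, mul_smul_comm, smul_mul_assoc, mul_add, mul_sub, add_mul, sub_mul, hgg, hg, ho]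

/-- The inverse of a generator `g` in a corner with unit `o`. -/
def inv (o g : A) : A := g + P.m • o - (P.m * P.δ) • P.idem o g

end Params

variable {ι : Type*} (Q : SimpleGraph ι) (S : Finset ι)

/-- The elements `g i`, for `i ∈ S`, satisfy the defining relations of the
Birman–Murakami–Wenzl algebra of `Q` in the corner `o A o` with unit `o`, the generators `e i`
being eliminated in favour of `P.idem o (g i) = e i / δ`. -/
structure IsBMWSystem (o : A) (g : ι → A) : Prop extends IsBraidFamily Q S g where
  unit_mul_unit : o * o = o
  unit_mul {i : ι} (hi : i ∈ S) : o * g i = g i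
  mul_unit {i : ι} (hi : i ∈ S) : g i * o = g i
  mul_idem {i : ι} (hi : i ∈ S) : g i * P.idem o (g i) = P.l⁻¹ • P.idem o (g i)
  idem_mul_mul_idem {i j : ι} (hi : i ∈ S) (hj : j ∈ S) (hij : Q.Adj i j) :
    P.idem o (g i) * (g j * P.idem o (g i)) = (P.l / P.δ) • P.idem o (g i)

variable {P Q S}

namespace IsBMWSystem

variable {o : A} {g : ι → A} {i j : ι}

lemma mono (h : IsBMWSystem P Q S o g) {T : Finset ι} (hTS : T ⊆ S) : IsBMWSystem P Q T o g where
  toIsBraidFamily := h.toIsBraidFamily.mono hTS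
  unit_mul_unit := h.unit_mul_unit
  unit_mul hi := h.unit_mul (hTS hi)
  mul_unit hi := h.mul_unit (hTS hi)
  mul_idem hi := h.mul_idem (hTS hi)
  idem_mul_mul_idem hi hj := h.idem_mul_mul_idem (hTS hi) (hTS hj)

lemma unit_mul_idem (h : IsBMWSystem P Q S o g) (hi : i ∈ S) :
    o * P.idem o (g i) = P.idem o (g i) := by
  have := h.unit_mul hi
  simp only [Params.idem, mul_smul_comm, mul_add, mul_sub, this, h.unit_mul_unit, ← mul_assoc]

lemma idem_mul_unit (h : IsBMWSystem P Q S o g) (hi : i ∈ S) :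
    P.idem o (g i) * o = P.idem o (g i) := by
  have := h.mul_unit hi
  simp only [Params.idem, smul_mul_assoc, add_mul, sub_mul, this, h.unit_mul_unit, mul_assoc]

lemma idem_mul (h : IsBMWSystem P Q S o g) (hi : i ∈ S) :
    P.idem o (g i) * g i = P.l⁻¹ • P.idem o (g i) := by
  rw [← h.mul_idem hi, P.mul_idem_of_mul_eq rfl ((h.mul_unit hi).trans (h.unit_mul hi).symm)]

lemma op (h : IsBMWSystem P Q S o g) :
    IsBMWSystem P Q S (MulOpposite.op o) fun i => MulOpposite.op (g i) where
  comm hi hj hne hij := congrArg MulOpposite.op (h.comm hi hj hne hij).symm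
  braid hi hj hij := by
    simp only [← MulOpposite.op_mul, mul_assoc]
    rw [h.braid hi hj hij]
  unit_mul_unit := congrArg MulOpposite.op h.unit_mul_unit
  unit_mul hi := congrArg MulOpposite.op (h.mul_unit hi)
  mul_unit hi := congrArg MulOpposite.op (h.unit_mul hi)
  mul_idem hi := by rw [P.idem_op, ← MulOpposite.op_mul, h.idem_mul hi, MulOpposite.op_smul]
  idem_mul_mul_idem hi hj hij := by
    simp only [P.idem_op, ← MulOpposite.op_mul]
    rw [mul_assoc, h.idem_mul_mul_idem hi hj hij, MulOpposite.op_smul]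

lemma idem_mul_idem_self (h : IsBMWSystem P Q S o g) (hi : i ∈ S) :
    P.idem o (g i) * P.idem o (g i) = P.idem o (g i) := by
  have hgf := h.mul_idem hi
  have hggf : g i * (g i * P.idem o (g i)) = (P.l⁻¹ * P.l⁻¹) • P.idem o (g i) := by
    rw [hgf, mul_smul_comm, hgf, smul_smul]
  have expand : P.idem o (g i) * P.idem o (g i) = (P.l / (P.m * P.δ)) •
      ((P.l⁻¹ * P.l⁻¹) • P.idem o (g i) + P.m • P.l⁻¹ • P.idem o (g i) - P.idem o (g i)) := by
    conv_lhs => lhs; unfold Params.idem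
    rw [smul_mul_assoc, sub_mul, add_mul, mul_assoc, hggf, smul_mul_assoc, hgf, h.unit_mul_idem hi]
  have coeff : P.l / (P.m * P.δ) * (P.l⁻¹ * P.l⁻¹ + P.m * P.l⁻¹ - 1) = 1 := by
    have := P.l_ne_zero; have := P.m_ne_zero; have := P.δ_ne_zero; have e := P.mul_one_sub
    field_simp at e ⊢
    linear_combination e
  rw [expand]
  linear_combination (norm := module) coeff • P.idem o (g i)

lemma mul_mul_idem (h : IsBMWSystem P Q S o g) (hi : i ∈ S) (hj : j ∈ S) (hij : Q.Adj i j) :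
    g j * (g i * P.idem o (g j)) = P.idem o (g i) * (g j * g i) := by
  rw [← mul_assoc]
  refine P.mul_idem_of_mul_eq ?_ ?_
  · rw [mul_assoc, h.braid hj hi hij.symm]
  · rw [mul_assoc, h.mul_unit hi, ← mul_assoc, h.unit_mul hj]

/- Evaluate `fᵢ gⱼ² gᵢ fⱼ` in two ways: moving `gⱼ gᵢ fⱼ = fᵢ gⱼ gᵢ` to the left, and expanding
`gⱼ²`. -/
lemma idem_mul_idem_adj (h : IsBMWSystem P Q S o g) (hi : i ∈ S) (hj : j ∈ S) (hij : Q.Adj i j) :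
    P.idem o (g i) * P.idem o (g j) = P.δ⁻¹ • (g j * (g i * P.idem o (g j))) := by
  set fi := P.idem o (g i)
  set fj := P.idem o (g j)
  have swap : g j * (g i * fj) = fi * (g j * g i) := h.mul_mul_idem hi hj hij
  have moved : fi * (g j * g j * (g i * fj)) = (P.l / P.δ) • (g j * (g i * fj)) := by
    rw [mul_assoc, swap, ← mul_assoc (g j), ← mul_assoc, h.idem_mul_mul_idem hi hj hij,
      smul_mul_assoc]
  have unit_term : o * (g i * fj) = g i * fj := by rw [← mul_assoc, h.unit_mul hi]
  have fi_gi : fi * (g i * fj) = P.l⁻¹ • (fi * fj) := by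
    rw [← mul_assoc, h.idem_mul hi, smul_mul_assoc]
  have fi_gj_gi : fi * (g j * (g i * fj)) = g j * (g i * fj) := by
    rw [swap, ← mul_assoc, h.idem_mul_idem_self hi]
  have fi_fj_gi : fi * (fj * (g i * fj)) = (P.l / P.δ) • (fi * fj) := by
    rw [h.idem_mul_mul_idem hj hi hij.symm, mul_smul_comm]
  rw [P.mul_self o (g j), add_mul, sub_mul, smul_mul_assoc, smul_mul_assoc, mul_add, mul_sub,
    mul_smul_comm, mul_smul_comm, unit_term, fi_gi, fi_gj_gi, fi_fj_gi] at moved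
  have := P.l_ne_zero; have := P.m_ne_zero; have := P.δ_ne_zero
  have coeff₁ : P.m * P.δ / P.l * (P.l / P.δ) = P.m := by field_simp
  have coeff₂ : P.l / P.δ + P.m = (P.l⁻¹ + P.m) * P.δ⁻¹ := by
    have e := P.mul_one_sub; field_simp at e ⊢; linear_combination -e
  refine smul_right_injective _ P.inv_add_ne_zero ?_
  change (P.l⁻¹ + P.m) • (fi * fj) = (P.l⁻¹ + P.m) • P.δ⁻¹ • (g j * (g i * fj))
  rw [smul_smul, coeff₁] at moved
  rw [smul_smul, ← coeff₂]
  linear_combination (norm := module) moved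

lemma mul_sq_mul_idem (h : IsBMWSystem P Q S o g) (hi : i ∈ S) (hj : j ∈ S) (hij : Q.Adj i j) :
    g j * (g i * (g i * (g j * P.idem o (g i)))) = P.idem o (g i) := by
  set fi := P.idem o (g i)
  set fj := P.idem o (g j)
  have := P.l_ne_zero; have := P.m_ne_zero; have := P.δ_ne_zero
  have unit_term : o * (g j * fi) = g j * fi := by rw [← mul_assoc, h.unit_mul hj]
  have gj_sq : g j * (g j * fi) = fi - P.m • (g j * fi) + (P.m * P.δ / P.l) • (fj * fi) := by
    rw [← mul_assoc, P.mul_self o (g j), add_mul, sub_mul, smul_mul_assoc, smul_mul_assoc,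
      h.unit_mul_idem hi]
  have gj_gi_gj : g j * (g i * (g j * fi)) = P.l⁻¹ • (g i * (g j * fi)) := by
    rw [h.braid_assoc hj hi hij.symm, h.mul_idem hi]
    simp only [mul_smul_comm, fi]
  have fj_fi : fj * fi = P.δ⁻¹ • (g i * (g j * fi)) := h.idem_mul_idem_adj hj hi hij.symm
  rw [← mul_assoc (g i), P.mul_self o (g i), add_mul, sub_mul, smul_mul_assoc, smul_mul_assoc,
    mul_add, mul_sub, mul_smul_comm, mul_smul_comm, unit_term, gj_sq, gj_gi_gj,
    h.idem_mul_mul_idem hi hj hij, mul_smul_comm, fj_fi]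
  match_scalars
  · ring
  · field_simp; ring
  · field_simp; ring

lemma idem_mul_sq_mul (h : IsBMWSystem P Q S o g) (hi : i ∈ S) (hj : j ∈ S) (hij : Q.Adj i j) :
    P.idem o (g i) * (g j * (g i * (g i * g j))) = P.idem o (g i) := by
  have opposite := h.op.mul_sq_mul_idem hi hj hij
  simp only [P.idem_op, ← MulOpposite.op_mul] at opposite
  simpa only [mul_assoc] using MulOpposite.op_injective opposite

lemma idem_mul_comm (h : IsBMWSystem P Q S o g) (hi : i ∈ S) (hj : j ∈ S) (hne : i ≠ j)
    (hij : ¬ Q.Adj i j) : P.idem o (g i) * g j = g j * P.idem o (g i) :=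
  (P.mul_idem_of_mul_eq (h.comm hj hi hne.symm fun h' => hij h'.symm)
    ((h.mul_unit hj).trans (h.unit_mul hj).symm)).symm

lemma idem_mul_idem_comm (h : IsBMWSystem P Q S o g) (hi : i ∈ S) (hj : j ∈ S) (hne : i ≠ j)
    (hij : ¬ Q.Adj i j) : P.idem o (g i) * P.idem o (g j) = P.idem o (g j) * P.idem o (g i) :=
  P.mul_idem_of_mul_eq (h.idem_mul_comm hi hj hne hij)
    ((h.idem_mul_unit hi).trans (h.unit_mul_idem hi).symm)

lemma mul_inv (h : IsBMWSystem P Q S o g) (hi : i ∈ S) : g i * P.inv o (g i) = o := by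
  have := P.l_ne_zero
  rw [Params.inv, mul_sub, mul_add, mul_smul_comm, mul_smul_comm, h.mul_unit hi, h.mul_idem hi,
    P.mul_self o (g i)]
  module

lemma inv_mul (h : IsBMWSystem P Q S o g) (hi : i ∈ S) : P.inv o (g i) * g i = o := by
  have := P.l_ne_zero
  rw [Params.inv, sub_mul, add_mul, smul_mul_assoc, smul_mul_assoc, h.unit_mul hi, h.idem_mul hi,
    P.mul_self o (g i)]
  module

end IsBMWSystem

end System

/-! ### Minimal words and the exchange property -/

section MinWord

variable {ι : Type*} [Fintype ι] [DecidableEq ι] {Q : SimpleGraph ι} {S : Finset ι}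
  {M : Type*} [Monoid M] {g : ι → M} {θ : ι → ℤ}

variable (Q S g θ) in
/-- `MinWord Q S g θ b u d` says that `u` is a product `g k₁ * ⋯ * g k_d` of minimal length such
that the corresponding product of simple reflections takes the dominant vector `θ` to `b`. -/
inductive MinWord : (ι → ℤ) → M → ℕ → Prop
  | one : MinWord θ 1 0
  | mul {b : ι → ℤ} {u : M} {d : ℕ} {k : ι} (h : MinWord b u d) (hk : k ∈ S)
      (hc : 0 < coroot Q k b) : MinWord (reflect Q k b) (g k * u) (d + 1)

namespace MinWord

lemma exists_eq_mul (hθ : IsDominant Q S θ) (hg : IsBraidFamily Q S g) {d : ℕ} {b : ι → ℤ} {u : M}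
    {i : ι} (h : MinWord Q S g θ b u d) (hi : i ∈ S) (hc : coroot Q i b < 0) :
    ∃ u' d', d = d' + 1 ∧ u = g i * u' ∧ MinWord Q S g θ (reflect Q i b) u' d' := by
  induction d using Nat.strong_induction_on generalizing b u i with
  | _ d ih =>
  cases h with
  | one => exact absurd (hθ i hi) (by omega)
  | @mul b u d k h hk hp =>
    by_cases hik : i = k
    · subst hik
      exact ⟨u, d, rfl, rfl, by rwa [reflect_reflect]⟩
    by_cases ha : Q.Adj i k
    · rw [coroot_reflect_of_adj ha] at hc
      obtain ⟨u, d, rfl, rfl, h₁⟩ := ih d (by omega) h hi (by omega)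
      have pairing_k := coroot_reflect_of_adj ha.symm b
      obtain ⟨u, d, rfl, rfl, h₂⟩ := ih d (by omega) h₁ hk (by rw [pairing_k]; omega)
      have pairing_i : coroot Q i (reflect Q k (reflect Q i b)) = coroot Q k b := by
        rw [coroot_reflect_of_adj ha, coroot_reflect_self, pairing_k]; ring
      have h' := (h₂.mul hi (by rw [pairing_i]; exact hp)).mul hk
        (by rw [coroot_reflect_of_adj ha.symm, coroot_reflect_self, pairing_k, pairing_i]; omega)
      rw [reflect_braid ha] at h'
      exact ⟨_, _, rfl, (hg.braid_assoc hi hk ha u).symm, h'⟩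
    · rw [coroot_reflect_of_not_adj hik ha] at hc
      obtain ⟨u, d, rfl, rfl, h₁⟩ := ih d (by omega) h hi hc
      have pairing := coroot_reflect_of_not_adj (Ne.symm hik) (fun h' => ha h'.symm) b
      have h' := h₁.mul hk (by rw [pairing]; exact hp)
      rw [reflect_comm hik ha] at h'
      exact ⟨_, _, rfl, (hg.comm_assoc hi hk hik ha u).symm, h'⟩

lemma exists_mul_eq_mul (hθ : IsDominant Q S θ) (hg : IsBraidFamily Q S g) {d : ℕ} {b : ι → ℤ}
    {u : M} {i : ι} (h : MinWord Q S g θ b u d) (hi : i ∈ S) (hc : coroot Q i b = 0) :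
    ∃ j ∈ S, coroot Q j θ = 0 ∧ g i * u = u * g j := by
  induction d using Nat.strong_induction_on generalizing b u i with
  | _ d ih =>
  cases h with
  | one => exact ⟨i, hi, hc, by simp⟩
  | @mul b u d k h hk hp =>
    by_cases hik : i = k
    · subst hik
      rw [coroot_reflect_self] at hc
      omega
    by_cases ha : Q.Adj i k
    · rw [coroot_reflect_of_adj ha] at hc
      obtain ⟨u, d, rfl, rfl, h₁⟩ := h.exists_eq_mul hθ hg hi (by omega)
      have pairing := coroot_reflect_of_adj ha.symm b
      obtain ⟨j, hj, hjθ, hu⟩ := ih d (by omega) h₁ hk (by rw [pairing]; omega)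
      refine ⟨j, hj, hjθ, ?_⟩
      rw [hg.braid_assoc hi hk ha, hu]
      simp only [mul_assoc]
    · rw [coroot_reflect_of_not_adj hik ha] at hc
      obtain ⟨j, hj, hjθ, hu⟩ := ih d (by omega) h hi hc
      refine ⟨j, hj, hjθ, ?_⟩
      rw [hg.comm_assoc hi hk hik ha, hu, mul_assoc]

lemma unique (hθ : IsDominant Q S θ) (hg : IsBraidFamily Q S g) {d d' : ℕ} {b : ι → ℤ} {u u' : M}
    (h : MinWord Q S g θ b u d) (h' : MinWord Q S g θ b u' d') : u = u' := by
  induction h generalizing u' d' with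
  | one =>
    generalize hb : θ = b at h'
    cases h' with
    | one => rfl
    | mul h' hk hp =>
      have := hθ _ hk
      rw [hb, coroot_reflect_self] at this
      omega
  | mul _ hk hp ih =>
    obtain ⟨u', d', rfl, rfl, h₁⟩ :=
      h'.exists_eq_mul hθ hg hk (by rw [coroot_reflect_self]; omega)
    rw [reflect_reflect] at h₁
    rw [ih h₁]

lemma titsForm_eq {d : ℕ} {b : ι → ℤ} {u : M} (h : MinWord Q S g θ b u d) :
    titsForm Q b b = titsForm Q θ θ := by
  induction h with
  | one => rfl
  | mul h hk hp ih => rw [titsForm_reflect_self, ih]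

lemma finite (hQ : IsPosDef Q) (hθ : IsDominant Q S θ) (hg : IsBraidFamily Q S g) :
    {u : M | ∃ b d, MinWord Q S g θ b u d}.Finite := by
  have finite_union : (⋃ b ∈ {b | titsForm Q b b = titsForm Q θ θ},
      {u : M | ∃ d, MinWord Q S g θ b u d}).Finite :=
    (hQ.finite_titsForm_eq _).biUnion fun b _ =>
      Set.Subsingleton.finite fun u ⟨_, h⟩ u' ⟨_, h'⟩ => h.unique hθ hg h'
  exact finite_union.subset fun u ⟨b, d, h⟩ => Set.mem_biUnion (h.titsForm_eq) ⟨d, h⟩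

lemma mul_cases (hθ : IsDominant Q S θ) (hg : IsBraidFamily Q S g) {d : ℕ} {b : ι → ℤ} {u : M}
    (h : MinWord Q S g θ b u d) {i : ι} (hi : i ∈ S) :
    (∃ b' d', MinWord Q S g θ b' (g i * u) d') ∨
      (∃ j ∈ S, coroot Q j θ = 0 ∧ g i * u = u * g j) ∨
      ∃ u' b' d', u = g i * u' ∧ MinWord Q S g θ b' u' d' := by
  rcases lt_trichotomy (coroot Q i b) 0 with hc | hc | hc
  · obtain ⟨u', d', _, hu, h'⟩ := h.exists_eq_mul hθ hg hi hc
    exact Or.inr (Or.inr ⟨u', _, d', hu, h'⟩)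
  · exact Or.inr (Or.inl (h.exists_mul_eq_mul hθ hg hi hc))
  · exact Or.inl ⟨_, _, h.mul hi hc⟩

lemma mul_mem {R : Set M} {d : ℕ} {b : ι → ℤ} {u : M} (h : MinWord Q S g θ b u d)
    (hR : ∀ i ∈ S, ∀ y ∈ R, g i * y ∈ R) {x : M} (hx : x ∈ R) : u * x ∈ R := by
  induction h with
  | one => simpa using hx
  | mul h hk hp ih => rw [mul_assoc]; exact hR _ hk _ ih

end MinWord

end MinWord

section ParabolicInduction

variable {ι : Type*} [Fintype ι] [DecidableEq ι] {Q : SimpleGraph ι}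

/-- Induction along the stabilizers of dominant roots: `S` is reduced to the nodes orthogonal to a
dominant root supported in `S`. -/
lemma IsPosDef.parabolic_induction (hQ : IsPosDef Q) {C : Finset ι → Prop} (empty : C ∅)
    (step : ∀ (S : Finset ι) (θ : ι → ℤ), IsDominant Q S θ → C {i ∈ S | coroot Q i θ = 0} → C S)
    (S : Finset ι) : C S := by
  induction S using Finset.strongInduction with
  | H S ih =>
    rcases S.eq_empty_or_nonempty with rfl | hS
    · exact empty
    obtain ⟨θ, hθ, hd⟩ := hQ.exists_isDominant hS
    refine step S θ hd (ih _ (Finset.filter_ssubset.2 ?_))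
    obtain ⟨k, hk, hc⟩ := hθ.exists_coroot_pos
    exact ⟨k, hk, hc.ne'⟩

/- A minimal word `u` times a word in the stabilizer of `θ` is a normal form, so `MinWord.mul_cases`
shows that the products of the two kinds are closed under the generators. -/
lemma IsPosDef.exists_finite_closed {M : Type*} [Monoid M] (hQ : IsPosDef Q) {g : ι → M}
    {S : Finset ι} (hg : IsBraidFamily Q S g) (hsq : ∀ i ∈ S, g i * g i = 1) :
    ∃ W : Set M, W.Finite ∧ 1 ∈ W ∧ ∀ i ∈ S, ∀ w ∈ W, g i * w ∈ W := by
  induction S using hQ.parabolic_induction with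
  | empty => exact ⟨{1}, Set.finite_singleton _, rfl, by simp⟩
  | step S θ hθ ih =>
    have hsub : {i ∈ S | coroot Q i θ = 0} ⊆ S := Finset.filter_subset _ _
    obtain ⟨W, hW, one_mem, closed⟩ := ih (hg.mono hsub) fun i hi => hsq i (hsub hi)
    refine ⟨Set.image2 (· * ·) {u : M | ∃ b d, MinWord Q S g θ b u d} W,
      (MinWord.finite hQ hθ hg).image2 _ hW, ⟨1, ⟨θ, 0, .one⟩, 1, one_mem, mul_one 1⟩, ?_⟩
    rintro i hi _ ⟨u, ⟨b, d, hu⟩, w, hw, rfl⟩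
    rcases hu.mul_cases hθ hg hi with ⟨b', d', h'⟩ | ⟨j, hj, hjθ, hju⟩ | ⟨u', b', d', rfl, h'⟩
    · exact ⟨_, ⟨b', d', h'⟩, w, hw, mul_assoc _ _ _⟩
    · refine ⟨u, ⟨b, d, hu⟩, g j * w, closed j (Finset.mem_filter.2 ⟨hj, hjθ⟩) w hw, ?_⟩
      simp only [← mul_assoc, hju]
    · refine ⟨u', ⟨b', d', h'⟩, w, hw, ?_⟩
      simp only [← mul_assoc, hsq i hi, one_mul]

end ParabolicInduction

/-! ### Integral structures and finite generation modulo a left ideal -/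

section Integral

lemma span_mul_le {V A : Type*} [CommRing V] [Ring A] [Algebra V A] {T : Set A}
    {N L : Submodule V A} (h : ∀ u ∈ T, ∀ y ∈ N, u * y ∈ L) :
    Submodule.span V T * N ≤ L := by
  rw [← Submodule.span_eq N, Submodule.span_mul_span, Submodule.span_le]
  rintro _ ⟨u, hu, y, hy, rfl⟩
  exact h u hu y hy

variable (V : Type*) [CommRing V] {K : Type*} [Field K] [Algebra V K]

/-- The parameters `P`, and the coefficients needed to multiply the generators `g` and `e / δ`, are
defined over the subring `V` of `K`; this includes `δ⁻¹` but not `δ`. -/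
structure Params.IsIntegral (P : Params K) : Prop where
  l_mem : P.l ∈ (algebraMap V K).range
  inv_l_mem : P.l⁻¹ ∈ (algebraMap V K).range
  m_mem : P.m ∈ (algebraMap V K).range
  m_mul_δ_mem : P.m * P.δ ∈ (algebraMap V K).range
  inv_δ_mem : P.δ⁻¹ ∈ (algebraMap V K).range

namespace Params.IsIntegral

variable {V} {P : Params K}

lemma m_mul_δ_div_l_mem (h : P.IsIntegral V) : P.m * P.δ / P.l ∈ (algebraMap V K).range := by
  rw [div_eq_mul_inv]; exact mul_mem h.m_mul_δ_mem h.inv_l_mem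

lemma l_div_δ_mem (h : P.IsIntegral V) : P.l / P.δ ∈ (algebraMap V K).range := by
  rw [div_eq_mul_inv]; exact mul_mem h.l_mem h.inv_δ_mem

end Params.IsIntegral

variable {V} {A : Type*} [Ring A] [Algebra K A] [Algebra V A]

lemma smul_mem_of_mem_range [IsScalarTower V K A] {c : K} (hc : c ∈ (algebraMap V K).range)
    (N : Submodule V A) {x : A} (hx : x ∈ N) : c • x ∈ N := by
  obtain ⟨v, rfl⟩ := hc
  rw [algebraMap_smul]; exact N.smul_mem v hx

variable {ι : Type*} [Fintype ι] [DecidableEq ι] {Q : SimpleGraph ι}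

/- The quadratic relation `g i ^ 2 = 1 - m g i` holds modulo `J` only, so the normal form argument
of `IsPosDef.exists_finite_closed` produces a submodule that is stable modulo `J`. -/
lemma IsPosDef.exists_fg_mul_mem_sup [IsScalarTower V K A] (hQ : IsPosDef Q) {m : K}
    (hm : m ∈ (algebraMap V K).range) {g : ι → A} {o : A} {J R : Submodule V A} (ho : o ∈ R)
    {S : Finset ι} (hg : IsBraidFamily Q S g) (hR : ∀ i ∈ S, ∀ x ∈ R, g i * x ∈ R)
    (hJ : ∀ i ∈ S, ∀ x ∈ J, g i * x ∈ J)
    (quadratic : ∀ i ∈ S, ∀ x ∈ R, g i * (g i * x) - (x - m • (g i * x)) ∈ J) :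
    ∃ W : Submodule V A, W.FG ∧ W ≤ R ∧ o ∈ W ∧ ∀ i ∈ S, ∀ w ∈ W, g i * w ∈ W ⊔ J := by
  induction S using hQ.parabolic_induction with
  | empty =>
    exact ⟨Submodule.span V {o}, Submodule.fg_span_singleton _,
      by rwa [Submodule.span_singleton_le_iff_mem], Submodule.mem_span_singleton_self o, by simp⟩
  | step S θ hθ ih =>
    have hsub : {i ∈ S | coroot Q i θ = 0} ⊆ S := Finset.filter_subset _ _
    obtain ⟨W, hW, hWR, unit_mem, closed⟩ := ih (hg.mono hsub) (fun i hi => hR i (hsub hi))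
      (fun i hi => hJ i (hsub hi)) fun i hi => quadratic i (hsub hi)
    set U := {u : A | ∃ b d, MinWord Q S g θ b u d}
    have mul_mem_prod {u b d} (hu : MinWord Q S g θ b u d) {w} (hw : w ∈ W) :
        u * w ∈ Submodule.span V U * W :=
      Submodule.mul_mem_mul (Submodule.subset_span ⟨_, _, hu⟩) hw
    refine ⟨Submodule.span V U * W, (Submodule.fg_span (MinWord.finite hQ hθ hg)).mul hW,
      span_mul_le ?_, by simpa using mul_mem_prod .one unit_mem, fun i hi => ?_⟩
    · rintro u ⟨b, d, hu⟩ y hy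
      exact hu.mul_mem (R := (R : Set A)) hR (hWR hy)
    suffices Submodule.span V U * W ≤
        (Submodule.span V U * W ⊔ J).comap (LinearMap.mulLeft V (g i)) from fun w hw => this hw
    refine span_mul_le ?_
    rintro u ⟨b, d, hu⟩ w hw
    rw [Submodule.mem_comap, LinearMap.mulLeft_apply, ← mul_assoc]
    rcases hu.mul_cases hθ hg hi with ⟨b', d', h'⟩ | ⟨j, hj, hjθ, hju⟩ | ⟨u', b', d', rfl, h'⟩
    · exact Submodule.mem_sup_left (mul_mem_prod h' hw)
    · obtain ⟨w', hw', x, hx, hsum⟩ :=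
        Submodule.mem_sup.1 (closed j (Finset.mem_filter.2 ⟨hj, hjθ⟩) w hw)
      rw [hju, mul_assoc, ← hsum, mul_add]
      exact Submodule.add_mem_sup (mul_mem_prod hu hw') (hu.mul_mem (R := (J : Set A)) hJ hx)
    · have mem_J := quadratic i hi (u' * w) (h'.mul_mem (R := (R : Set A)) hR (hWR hw))
      rw [← mul_assoc (g i) u' w, ← mul_assoc (g i)] at mem_J
      rw [← sub_add_cancel (g i * (g i * u') * w) (u' * w - m • (g i * u' * w)), add_comm]
      exact Submodule.add_mem_sup
        (sub_mem (mul_mem_prod h' hw) (smul_mem_of_mem_range hm _ (mul_mem_prod hu hw))) mem_J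

end Integral

/-! ### Frames -/

section Connected

variable {ι : Type*} {Q : SimpleGraph ι} {S : Finset ι}

lemma IsConnectedOn.exists_adj (hS : IsConnectedOn Q S) {k : ι} (hk : k ∈ S) (hne : S ≠ {k}) :
    ∃ p ∈ S, Q.Adj k p := by
  by_contra! isolated
  refine hne (hS {k} (by simpa using hk) ⟨k, by simp⟩ fun i hi p hp ha => ?_).symm
  rw [Finset.mem_singleton.1 hi] at ha
  exact absurd ha (isolated p hp)

lemma IsConnectedOn.erase_leaf [DecidableEq ι] (hS : IsConnectedOn Q S) {k p : ι} (hk : k ∈ S)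
    (leaf : ∀ i ∈ S, Q.Adj k i → i = p) : IsConnectedOn Q (S.erase k) := by
  intro T hT hne closed
  have hkT : k ∉ T := fun h => Finset.notMem_erase k S (hT h)
  by_cases hpT : p ∈ T
  · suffices insert_eq : insert k T = S by rw [← insert_eq, Finset.erase_insert hkT]
    refine hS _ (Finset.insert_subset hk (hT.trans (Finset.erase_subset _ _)))
      (Finset.insert_nonempty _ _) fun i hi a ha hia => ?_
    rcases Finset.mem_insert.1 hi with rfl | hi
    · exact Finset.mem_insert_of_mem (leaf a ha hia ▸ hpT)
    · by_cases hak : a = k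
      · exact hak ▸ Finset.mem_insert_self _ _
      · exact Finset.mem_insert_of_mem (closed i hi a (Finset.mem_erase.2 ⟨hak, ha⟩) hia)
  · refine absurd ?_ (Finset.notMem_erase k S)
    refine hT ((hS T (hT.trans (Finset.erase_subset _ _)) hne fun i hi a ha hia => ?_).symm ▸ hk)
    refine closed i hi a (Finset.mem_erase.2 ⟨?_, ha⟩) hia
    rintro rfl
    exact hpT (leaf i (Finset.mem_of_mem_erase (hT hi)) hia.symm ▸ hi)

end Connected

/-- The elements `x` and `y` realize an isomorphism between the idempotents `e` and `f`. -/
structure IsTransport {M : Type*} [Mul M] (e f x y : M) : Prop where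
  mul_left : y * x = e
  mul_right : x * y = f
  target_mul : f * x = x
  mul_target : y * f = y

namespace IsTransport

variable {M : Type*} [Semigroup M] {e f x y : M}

lemma mul_source (h : IsTransport e f x y) : x * e = x := by
  rw [← h.mul_left, ← mul_assoc, h.mul_right, h.target_mul]

lemma source_mul (h : IsTransport e f x y) : e * y = y := by
  rw [← h.mul_left, mul_assoc, h.mul_right, h.mul_target]

lemma op (h : IsTransport e f x y) :
    IsTransport (MulOpposite.op e) (MulOpposite.op f) (MulOpposite.op y) (MulOpposite.op x) where
  mul_left := congrArg MulOpposite.op h.mul_left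
  mul_right := congrArg MulOpposite.op h.mul_right
  target_mul := congrArg MulOpposite.op h.mul_target
  mul_target := congrArg MulOpposite.op h.target_mul

end IsTransport

section Frame

variable {K : Type*} [Field K] {A : Type*} [Ring A] [Algebra K A] {P : Params K}
  {ι : Type*} {Q : SimpleGraph ι} {S : Finset ι} {o : A} {g : ι → A}

lemma IsBMWSystem.transport_of_adj (h : IsBMWSystem P Q S o g) {k p : ι} (hk : k ∈ S) (hp : p ∈ S)
    (hkp : Q.Adj k p) {e x y : A} (t : IsTransport e (P.idem o (g p)) x y) :
    IsTransport e (P.idem o (g k)) (g p * (g k * x)) (y * (g k * g p)) where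
  mul_left := by
    calc y * (g k * g p) * (g p * (g k * x))
        = y * (g k * (g p * (g p * (g k * P.idem o (g p)))) * x) := by
          conv_lhs => rw [← t.target_mul]
          simp only [mul_assoc]
      _ = e := by rw [h.mul_sq_mul_idem hp hk hkp.symm, t.target_mul, t.mul_left]
  mul_right := by
    calc g p * (g k * x) * (y * (g k * g p))
        = g p * (g k * P.idem o (g p)) * (g k * g p) := by
          rw [← t.mul_right]; simp only [mul_assoc]
      _ = P.idem o (g k) * (g p * (g k * (g k * g p))) := by
          rw [h.mul_mul_idem hk hp hkp]; simp only [mul_assoc]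
      _ = P.idem o (g k) := h.idem_mul_sq_mul hk hp hkp
  target_mul := by
    calc P.idem o (g k) * (g p * (g k * x)) = P.idem o (g k) * (g p * g k) * x := by
          simp only [mul_assoc]
      _ = g p * (g k * (P.idem o (g p) * x)) := by
          rw [← h.mul_mul_idem hk hp hkp]; simp only [mul_assoc]
      _ = g p * (g k * x) := by rw [t.target_mul]
  mul_target := by
    rw [mul_assoc, mul_assoc, h.mul_mul_idem hp hk hkp.symm, ← mul_assoc, t.mul_target]

lemma IsBMWSystem.mul_sq_mul_transport (h : IsBMWSystem P Q S o g) {k p : ι} (hk : k ∈ S)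
    (hp : p ∈ S) (hkp : Q.Adj k p) {e x y : A} (t : IsTransport e (P.idem o (g k)) x y) :
    g p * (g k * (g k * (g p * x))) = x := by
  calc g p * (g k * (g k * (g p * x)))
      = g p * (g k * (g k * (g p * P.idem o (g k)))) * x := by
        conv_lhs => rw [← t.target_mul]
        simp only [mul_assoc]
    _ = x := by rw [h.mul_sq_mul_idem hk hp hkp, t.target_mul]

lemma IsBMWSystem.transport_mul_sq_mul (h : IsBMWSystem P Q S o g) {k p : ι} (hk : k ∈ S)
    (hp : p ∈ S) (hkp : Q.Adj k p) {e x y : A} (t : IsTransport e (P.idem o (g k)) x y) :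
    y * (g p * g k) * (g k * g p) = y := by
  calc y * (g p * g k) * (g k * g p)
      = y * (P.idem o (g k) * (g p * (g k * (g k * g p)))) := by
        rw [← mul_assoc y (P.idem o (g k)), t.mul_target]; simp only [mul_assoc]
    _ = y := by rw [h.idem_mul_sq_mul hk hp hkp, t.mul_target]

variable (P Q S) in
/-- A frame of a system: elements `v k` and `vs k` identifying the idempotent of a base node `j`
with those of all nodes `k ∈ S`, compatibly along the edges of `Q`. -/
structure IsFrame (o : A) (g : ι → A) (j : ι) (v vs : ι → A) : Prop
    extends IsBMWSystem P Q S o g where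
  base_mem : j ∈ S
  v_eq {k p : ι} (hk : k ∈ S) (hp : p ∈ S) (hkp : Q.Adj k p) : v k = g p * (g k * v p)
  vs_eq {k p : ι} (hk : k ∈ S) (hp : p ∈ S) (hkp : Q.Adj k p) : vs k = vs p * (g k * g p)
  transport {k : ι} (hk : k ∈ S) :
    IsTransport (P.idem o (g j)) (P.idem o (g k)) (v k) (vs k)
  v_base : v j = P.idem o (g j)
  vs_base : vs j = P.idem o (g j)

lemma IsBMWSystem.isFrame_singleton {j : ι} (h : IsBMWSystem P Q {j} o g) :
    IsFrame P Q {j} o g j (fun _ => P.idem o (g j)) fun _ => P.idem o (g j) where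
  toIsBMWSystem := h
  base_mem := Finset.mem_singleton_self j
  v_eq hk hp hkp :=
    absurd ((Finset.mem_singleton.1 hk).trans (Finset.mem_singleton.1 hp).symm) hkp.ne
  vs_eq hk hp hkp :=
    absurd ((Finset.mem_singleton.1 hk).trans (Finset.mem_singleton.1 hp).symm) hkp.ne
  transport hk := by
    rw [Finset.mem_singleton.1 hk]
    have := h.idem_mul_idem_self (Finset.mem_singleton_self j)
    exact ⟨this, this, this, this⟩
  v_base := rfl
  vs_base := rfl

section Extend

variable [DecidableEq ι] {j : ι} {v vs : ι → A}

lemma IsFrame.extend_leaf (h : IsBMWSystem P Q S o g) {k p : ι} (hk : k ∈ S) (hp : p ∈ S)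
    (hkp : Q.Adj k p) (leaf : ∀ i ∈ S, Q.Adj k i → i = p)
    (hF : IsFrame P Q (S.erase k) o g j v vs) :
    IsFrame P Q S o g j (Function.update v k (g p * (g k * v p)))
      (Function.update vs k (vs p * (g k * g p))) := by
  have mem_erase {i : ι} (hi : i ∈ S) (hik : i ≠ k) : i ∈ S.erase k :=
    Finset.mem_erase.2 ⟨hik, hi⟩
  have hpk := hkp.ne'
  have tp := hF.transport (mem_erase hp hpk)
  have hjk := (Finset.mem_erase.1 hF.base_mem).1
  refine ⟨h, Finset.mem_of_mem_erase hF.base_mem, fun {a b} ha hb hab => ?_,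
    fun {a b} ha hb hab => ?_, fun {a} ha => ?_, by simpa [hjk] using hF.v_base,
    by simpa [hjk] using hF.vs_base⟩
  · by_cases hak : a = k
    · subst hak
      obtain rfl := leaf b hb hab
      simp [hpk]
    by_cases hbk : b = k
    · subst hbk
      obtain rfl := leaf a ha hab.symm
      simp only [Function.update_self, Function.update_of_ne hpk]
      exact (h.mul_sq_mul_transport ha hb hab tp).symm
    · simpa [hak, hbk] using hF.v_eq (mem_erase ha hak) (mem_erase hb hbk) hab
  · by_cases hak : a = k
    · subst hak
      obtain rfl := leaf b hb hab
      simp [hpk]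
    by_cases hbk : b = k
    · subst hbk
      obtain rfl := leaf a ha hab.symm
      simp only [Function.update_self, Function.update_of_ne hpk]
      exact (h.transport_mul_sq_mul ha hb hab tp).symm
    · simpa [hak, hbk] using hF.vs_eq (mem_erase ha hak) (mem_erase hb hbk) hab
  · by_cases hak : a = k
    · subst hak
      simpa using h.transport_of_adj hk hp hkp tp
    · simpa [hak] using hF.transport (mem_erase ha hak)

end Extend

lemma IsPosDef.exists_isFrame [Fintype ι] [DecidableEq ι] (hQ : IsPosDef Q)
    (h : IsBMWSystem P Q S o g) (hne : S.Nonempty) (hS : IsConnectedOn Q S) :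
    ∃ j v vs, IsFrame P Q S o g j v vs := by
  induction S using Finset.strongInduction with
  | H S ih =>
    obtain ⟨k, hk, leaf⟩ := hQ.exists_leaf hne
    by_cases hSk : S = {k}
    · subst hSk
      exact ⟨k, _, _, h.isFrame_singleton⟩
    obtain ⟨p, hp, hkp⟩ := hS.exists_adj hk hSk
    have unique_neighbour (i : ι) (hi : i ∈ S) (hki : Q.Adj k i) : i = p :=
      leaf i hi p hp hki hkp
    obtain ⟨j, v, vs, hF⟩ := ih (S.erase k) (Finset.erase_ssubset hk)
      (h.mono (Finset.erase_subset _ _)) ⟨p, Finset.mem_erase.2 ⟨hkp.ne', hp⟩⟩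
      (hS.erase_leaf hk unique_neighbour)
    exact ⟨j, _, _, hF.extend_leaf h hk hp hkp unique_neighbour⟩

/-- The element of the base corner of a frame corresponding to `g i` in the corner of the
node `k`. -/
def cornerGen (g v vs : ι → A) (k i : ι) : A := vs k * (g i * v k)

namespace IsFrame

variable {j : ι} {v vs : ι → A} {i k p : ι}

lemma op (h : IsFrame P Q S o g j v vs) :
    IsFrame P Q S (MulOpposite.op o) (fun i => MulOpposite.op (g i)) j
      (fun i => MulOpposite.op (vs i)) fun i => MulOpposite.op (v i) where
  toIsBMWSystem := h.toIsBMWSystem.op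
  base_mem := h.base_mem
  v_eq hk hp hkp := by rw [h.vs_eq hk hp hkp, ← mul_assoc]; simp only [MulOpposite.op_mul]
  vs_eq hk hp hkp := by rw [h.v_eq hk hp hkp, ← mul_assoc]; simp only [MulOpposite.op_mul]
  transport hk := by simpa only [P.idem_op] using (h.transport hk).op
  v_base := by rw [P.idem_op, h.vs_base]
  vs_base := by rw [P.idem_op, h.v_base]

lemma mul_v_self (h : IsFrame P Q S o g j v vs) (hk : k ∈ S) : g k * v k = P.l⁻¹ • v k := by
  rw [← (h.transport hk).target_mul, ← mul_assoc, h.mul_idem hk, smul_mul_assoc]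

lemma unit_mul_v (h : IsFrame P Q S o g j v vs) (hk : k ∈ S) : o * v k = v k := by
  rw [← (h.transport hk).target_mul, ← mul_assoc, h.unit_mul_idem hk]

lemma idem_mul_v_of_adj (h : IsFrame P Q S o g j v vs) (hk : k ∈ S) (hp : p ∈ S)
    (hkp : Q.Adj k p) : P.idem o (g k) * v p = P.δ⁻¹ • v k := by
  rw [← (h.transport hp).target_mul, ← mul_assoc, h.idem_mul_idem_adj hk hp hkp, smul_mul_assoc,
    h.v_eq hk hp hkp, mul_assoc, mul_assoc, (h.transport hp).target_mul]

lemma mul_v_of_adj (h : IsFrame P Q S o g j v vs) (hi : i ∈ S) (hk : k ∈ S) (hik : Q.Adj i k) :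
    g k * v i = g i * v k + P.m • v k - P.m • v i := by
  have v_k := h.v_eq hk hi hik.symm
  have idem_mul : P.idem o (g i) * (g k * v i) = (P.l / P.δ) • v i := by
    rw [← (h.transport hi).target_mul, ← mul_assoc (g k), ← mul_assoc,
      h.idem_mul_mul_idem hi hk hik, smul_mul_assoc]
  have unit_mul : o * (g k * v i) = g k * v i := by rw [← mul_assoc, h.unit_mul hk]
  have expand : g i * v k = g k * v i - P.m • v k + (P.m * P.δ / P.l) • (P.l / P.δ) • v i := by
    conv_lhs => rw [v_k, ← mul_assoc, P.mul_self o (g i), add_mul, sub_mul, smul_mul_assoc,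
      smul_mul_assoc, ← v_k, unit_mul, idem_mul]
  have coeff : P.m * P.δ / P.l * (P.l / P.δ) = P.m := by
    have := P.l_ne_zero; have := P.δ_ne_zero; field_simp
  rw [expand, smul_smul, coeff]
  abel

lemma v_mul_cornerGen (h : IsFrame P Q S o g j v vs) (hk : k ∈ S) (hi : i ∈ S) (hne : i ≠ k)
    (hik : ¬ Q.Adj i k) : v k * cornerGen g v vs k i = g i * v k := by
  rw [cornerGen, ← mul_assoc, (h.transport hk).mul_right, ← mul_assoc,
    h.idem_mul_comm hk hi hne.symm (fun h' => hik h'.symm), mul_assoc, (h.transport hk).target_mul]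

lemma v_mul_idem_cornerGen (h : IsFrame P Q S o g j v vs) (hk : k ∈ S) (hi : i ∈ S) (hne : i ≠ k)
    (hik : ¬ Q.Adj i k) :
    v k * P.idem (P.idem o (g j)) (cornerGen g v vs k i) = P.idem o (g i) * v k :=
  P.mul_idem_of_mul_eq (h.v_mul_cornerGen hk hi hne hik)
    ((h.transport hk).mul_source.trans (h.unit_mul_v hk).symm)

lemma idem_mul_cornerGen (h : IsFrame P Q S o g j v vs) (hk : k ∈ S) (i : ι) :
    P.idem o (g j) * cornerGen g v vs k i = cornerGen g v vs k i := by
  rw [cornerGen, ← mul_assoc, (h.transport hk).source_mul]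

lemma cornerGen_mul_idem (h : IsFrame P Q S o g j v vs) (hk : k ∈ S) (i : ι) :
    cornerGen g v vs k i * P.idem o (g j) = cornerGen g v vs k i := by
  rw [cornerGen, mul_assoc, mul_assoc, (h.transport hk).mul_source]

lemma cornerGen_eq_of_adj (h : IsFrame P Q S o g j v vs) (hk : k ∈ S) (hp : p ∈ S) (hi : i ∈ S)
    (hkp : Q.Adj k p) (hne : i ≠ k) (hne' : i ≠ p) (hik : ¬ Q.Adj i k) (hip : ¬ Q.Adj i p) :
    cornerGen g v vs k i = cornerGen g v vs p i := by
  have intertwine : g i * v k = v k * cornerGen g v vs p i := by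
    rw [h.v_eq hk hp hkp, h.comm_assoc hi hp hne' hip, h.comm_assoc hi hk hne hik,
      ← h.v_mul_cornerGen hp hi hne' hip]
    simp only [mul_assoc]
  rw [cornerGen, intertwine, ← mul_assoc, (h.transport hk).mul_left, h.idem_mul_cornerGen hp]

lemma cornerGen_comm (h : IsFrame P Q S o g j v vs) {c : ι} (hk : k ∈ S) (hi : i ∈ S) (hc : c ∈ S)
    (hne : i ≠ k) (hik : ¬ Q.Adj i k) (hkc : Q.Adj k c) (hic : Q.Adj i c) :
    cornerGen g v vs k i = cornerGen g v vs i k := by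
  rw [cornerGen, cornerGen, h.v_eq hk hc hkc, h.vs_eq hk hc hkc, h.v_eq hi hc hic,
    h.vs_eq hi hc hic]
  calc vs c * (g k * g c) * (g i * (g c * (g k * v c)))
      = vs c * (g k * (g c * (g i * (g c * (g k * v c))))) := by simp only [mul_assoc]
    _ = vs c * (g k * (g i * (g c * (g i * (g k * v c))))) := by rw [h.braid_assoc hi hc hic]
    _ = vs c * (g i * (g k * (g c * (g k * (g i * v c))))) := by
      rw [h.comm_assoc hi hk hne hik, h.comm_assoc hk hi hne.symm fun h' => hik h'.symm]
    _ = vs c * (g i * g c) * (g k * (g c * (g i * v c))) := by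
      rw [h.braid_assoc hk hc hkc]; simp only [mul_assoc]

end IsFrame

end Frame

/-! ### The system in the corner of a frame -/

section Ortho

variable {ι : Type*} [Fintype ι] [DecidableEq ι] {Q : SimpleGraph ι} {S : Finset ι}

lemma IsPosRoot.height_induction {p : (ι → ℤ) → Prop}
    (step : ∀ b, IsPosRoot Q S b → (∀ b', IsPosRoot Q S b' → height b' < height b → p b') → p b)
    {b : ι → ℤ} (hb : IsPosRoot Q S b) : p b := by
  induction hd : (height b).toNat using Nat.strong_induction_on generalizing b with
  | _ d ih =>
    subst hd
    refine step b hb fun b' hb' hlt => ih _ ?_ hb' rfl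
    have := hb.height_pos
    omega

variable (Q S) in
/-- The node `i ∈ S` is orthogonal to the positive root `b` of `S`. -/
structure IsOrtho (b : ι → ℤ) (i : ι) : Prop extends IsPosRoot Q S b where
  mem : i ∈ S
  coroot_eq : coroot Q i b = 0

variable {b : ι → ℤ} {i k : ι}

lemma isOrtho_simpleRoot (hk : k ∈ S) (hi : i ∈ S) (hne : i ≠ k) (ha : ¬ Q.Adj i k) :
    IsOrtho Q S (simpleRoot k) i where
  toIsPosRoot := isPosRoot_simpleRoot hk
  mem := hi
  coroot_eq := coroot_simpleRoot_of_not_adj hne ha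

namespace IsOrtho

lemma ne_of_coroot (h : IsOrtho Q S b i) (hk : coroot Q k b = 1) : k ≠ i := by
  rintro rfl
  exact one_ne_zero (hk.symm.trans h.coroot_eq)

lemma ne_and_not_adj (h : IsOrtho Q S (simpleRoot k) i) : i ≠ k ∧ ¬ Q.Adj i k := by
  have orthogonal := h.coroot_eq
  constructor
  · rintro rfl
    simp [coroot_simpleRoot_self] at orthogonal
  · intro ha
    simp [coroot_simpleRoot_of_adj ha] at orthogonal

lemma coroot_sub (h : IsOrtho Q S b i) (ha : Q.Adj k i) :
    coroot Q i (b - simpleRoot k) = 1 := by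
  rw [map_sub, coroot_simpleRoot_of_adj ha.symm, h.coroot_eq]
  rfl

lemma coroot_add (h : IsOrtho Q S b i) (ha : Q.Adj k i) :
    coroot Q i (b + simpleRoot k) = -1 := by
  rw [map_add, coroot_simpleRoot_of_adj ha.symm, h.coroot_eq]
  rfl

lemma sub (h : IsOrtho Q S b i) (hk : coroot Q k b = 1) (ha : ¬ Q.Adj k i) :
    IsOrtho Q S (b - simpleRoot k) i where
  toIsPosRoot := h.sub_simpleRoot hk
  mem := h.mem
  coroot_eq := by
    rw [map_sub, coroot_simpleRoot_of_not_adj (h.ne_of_coroot hk).symm (fun h' => ha h'.symm),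
      h.coroot_eq, sub_zero]

lemma sub_sub (h : IsOrtho Q S b i) (hk : coroot Q k b = 1) (ha : Q.Adj k i) :
    IsOrtho Q S (b - simpleRoot k - simpleRoot i) k where
  toIsPosRoot := (h.sub_simpleRoot hk).sub_simpleRoot (h.coroot_sub ha)
  mem := h.mem_of_coroot_pos (hk ▸ one_pos)
  coroot_eq := by
    rw [map_sub, map_sub, coroot_simpleRoot_self, coroot_simpleRoot_of_adj ha, hk]
    rfl

lemma add (h : IsOrtho Q S b i) (hkS : k ∈ S) (hk : coroot Q k b = -1) (ha : ¬ Q.Adj k i) :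
    IsOrtho Q S (b + simpleRoot k) i where
  toIsPosRoot := h.add_simpleRoot hkS hk
  mem := h.mem
  coroot_eq := by
    have hne : i ≠ k := by
      rintro rfl
      exact absurd (hk.symm.trans h.coroot_eq) (by decide)
    rw [map_add, coroot_simpleRoot_of_not_adj hne (fun h' => ha h'.symm), h.coroot_eq, add_zero]

lemma add_add (h : IsOrtho Q S b i) (hkS : k ∈ S) (hk : coroot Q k b = -1) (ha : Q.Adj k i) :
    IsOrtho Q S (b + simpleRoot k + simpleRoot i) k where
  toIsPosRoot := (h.add_simpleRoot hkS hk).add_simpleRoot h.mem (h.coroot_add ha)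
  mem := hkS
  coroot_eq := by
    rw [map_add, map_add, coroot_simpleRoot_self, coroot_simpleRoot_of_adj ha, hk]
    rfl

end IsOrtho

lemma coroot_sub_of_not_adj {b : ι → ℤ} {i k : ι} (hne : i ≠ k) (ha : ¬ Q.Adj i k) :
    coroot Q i (b - simpleRoot k) = coroot Q i b := by
  rw [map_sub, coroot_simpleRoot_of_not_adj hne ha, sub_zero]

lemma height_sub_simpleRoot_lt (b : ι → ℤ) (k : ι) : height (b - simpleRoot k) < height b := by
  rw [map_sub, height_simpleRoot]
  exact sub_one_lt _

lemma height_sub_simpleRoot_sub_simpleRoot_lt (b : ι → ℤ) (i k : ι) :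
    height (b - simpleRoot i - simpleRoot k) < height b :=
  (height_sub_simpleRoot_lt _ _).trans (height_sub_simpleRoot_lt _ _)

end Ortho

section CornerGen

variable {ι : Type*} [Fintype ι] [DecidableEq ι] {A : Type*} [Ring A]

/-- `x` is an element of the base corner of a frame attached to the root `b` and the node `i`
orthogonal to it. For a simple root it is a `cornerGen`; other pairs are carried to pairs with a
lower root by the reflections which decrease `b`. -/
inductive IsCornerGen (Q : SimpleGraph ι) (S : Finset ι) (g v vs : ι → A) :
    (ι → ℤ) → ι → A → Prop
  | base {k i : ι} (h : IsOrtho Q S (simpleRoot k) i) :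
      IsCornerGen Q S g v vs (simpleRoot k) i (cornerGen g v vs k i)
  | of_sub {b : ι → ℤ} {i k : ι} {x : A} (h : IsOrtho Q S b i) (hk : coroot Q k b = 1)
      (ha : ¬ Q.Adj k i) (hx : IsCornerGen Q S g v vs (b - simpleRoot k) i x) :
      IsCornerGen Q S g v vs b i x
  | of_sub_sub {b : ι → ℤ} {i k : ι} {x : A} (h : IsOrtho Q S b i) (hk : coroot Q k b = 1)
      (ha : Q.Adj k i) (hx : IsCornerGen Q S g v vs (b - simpleRoot k - simpleRoot i) k x) :
      IsCornerGen Q S g v vs b i x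

namespace IsCornerGen

variable {Q : SimpleGraph ι} {S : Finset ι} {g v vs : ι → A} {b : ι → ℤ} {i k : ι} {x y : A}

lemma isOrtho (h : IsCornerGen Q S g v vs b i x) : IsOrtho Q S b i := by
  cases h <;> assumption

lemma simpleRoot_or_exists (h : IsCornerGen Q S g v vs b i x) :
    (∃ k, b = simpleRoot k ∧ x = cornerGen g v vs k i) ∨
    ∃ k, coroot Q k b = 1 ∧
      (¬ Q.Adj k i ∧ IsCornerGen Q S g v vs (b - simpleRoot k) i x ∨
        Q.Adj k i ∧ IsCornerGen Q S g v vs (b - simpleRoot k - simpleRoot i) k x) := by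
  cases h with
  | base h => exact .inl ⟨_, rfl, rfl⟩
  | of_sub h hk ha hx => exact .inr ⟨_, hk, .inl ⟨ha, hx⟩⟩
  | of_sub_sub h hk ha hx => exact .inr ⟨_, hk, .inr ⟨ha, hx⟩⟩

lemma eq_of_simpleRoot (h : IsCornerGen Q S g v vs (simpleRoot k) i x) :
    x = cornerGen g v vs k i := by
  rcases h.simpleRoot_or_exists with ⟨k', hk', hx⟩ | ⟨k', hk', _⟩
  · rwa [simpleRoot_injective hk']
  · exact absurd hk' (coroot_simpleRoot_ne_one _ _ _)

lemma exists_eq_cornerGen (h : IsCornerGen Q S g v vs b i x) :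
    ∃ k ∈ S, ∃ i' ∈ S, i' ≠ k ∧ ¬ Q.Adj i' k ∧ x = cornerGen g v vs k i' := by
  induction h with
  | base h =>
    exact ⟨_, h.mem_of_simpleRoot, _, h.mem, h.ne_and_not_adj.1, h.ne_and_not_adj.2, rfl⟩
  | of_sub _ _ _ _ ih => exact ih
  | of_sub_sub _ _ _ _ ih => exact ih

end IsCornerGen

variable {Q : SimpleGraph ι} {S : Finset ι} {b : ι → ℤ} {i k k₁ k₂ : ι} {g v vs : ι → A} {x y : A}

variable (g v vs) in
lemma IsOrtho.exists_isCornerGen (hQ : IsPosDef Q) (h : IsOrtho Q S b i) :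
    ∃ x, IsCornerGen Q S g v vs b i x := by
  refine IsPosRoot.height_induction (p := fun b => ∀ i, IsOrtho Q S b i →
    ∃ x, IsCornerGen Q S g v vs b i x) (fun b hb ih i h => ?_) h.toIsPosRoot i h
  rcases hb.simpleRoot_or_coroot_eq_one hQ with ⟨k, _, rfl⟩ | ⟨k, _, hk⟩
  · exact ⟨_, .base h⟩
  by_cases ha : Q.Adj k i
  · have lower := h.sub_sub hk ha
    obtain ⟨x, hx⟩ := ih _ lower.toIsPosRoot (height_sub_simpleRoot_sub_simpleRoot_lt _ _ _) _ lower
    exact ⟨x, .of_sub_sub h hk ha hx⟩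
  · have lower := h.sub hk ha
    obtain ⟨x, hx⟩ := ih _ lower.toIsPosRoot (height_sub_simpleRoot_lt _ _) _ lower
    exact ⟨x, .of_sub h hk ha hx⟩

lemma IsOrtho.not_adj_of_adj (hQ : IsPosDef Q) (h : IsOrtho Q S b i) (h₁ : coroot Q k₁ b = 1)
    (h₂ : coroot Q k₂ b = 1) (h₁₂ : Q.Adj k₁ k₂) : ¬ Q.Adj i k₁ := by
  intro ha
  have orthogonal := h.coroot_eq
  rw [h.eq_add_of_adj hQ h₁₂ h₁ h₂, map_add, coroot_simpleRoot_of_adj ha,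
    coroot_simpleRoot_of_not_adj (h.ne_of_coroot h₂).symm
      (fun h' => hQ.not_adj_of_adj_of_adj ha h' h₁₂)] at orthogonal
  exact absurd orthogonal (by decide)

namespace IsCornerGen

lemma eq_of_sub_of_sub (ih : ∀ b', height b' < height b → ∀ i x y,
      IsCornerGen Q S g v vs b' i x → IsCornerGen Q S g v vs b' i y → x = y)
    (hQ : IsPosDef Q) (h : IsOrtho Q S b i) (h₁ : coroot Q k₁ b = 1)
    (h₂ : coroot Q k₂ b = 1) (hne : k₁ ≠ k₂) (h₁₂ : ¬ Q.Adj k₁ k₂) (ha₁ : ¬ Q.Adj k₁ i)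
    (ha₂ : ¬ Q.Adj k₂ i) (hx : IsCornerGen Q S g v vs (b - simpleRoot k₁) i x)
    (hy : IsCornerGen Q S g v vs (b - simpleRoot k₂) i y) : x = y := by
  have c₂ := (coroot_sub_of_not_adj hne.symm (fun h' => h₁₂ h'.symm)).trans h₂
  have c₁ := (coroot_sub_of_not_adj hne h₁₂).trans h₁
  obtain ⟨z, hz⟩ := ((h.sub h₁ ha₁).sub c₂ ha₂).exists_isCornerGen g v vs hQ
  trans z
  · exact ih _ (height_sub_simpleRoot_lt _ _) _ _ _ hx (.of_sub (h.sub h₁ ha₁) c₂ ha₂ hz)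
  · rw [sub_right_comm] at hz
    exact (ih _ (height_sub_simpleRoot_lt _ _) _ _ _ hy (.of_sub (h.sub h₂ ha₂) c₁ ha₁ hz)).symm

lemma eq_of_sub_sub_of_sub (ih : ∀ b', height b' < height b → ∀ i x y,
      IsCornerGen Q S g v vs b' i x → IsCornerGen Q S g v vs b' i y → x = y)
    (hQ : IsPosDef Q) (h : IsOrtho Q S b i) (h₁ : coroot Q k₁ b = 1)
    (h₂ : coroot Q k₂ b = 1) (hne : k₁ ≠ k₂) (h₁₂ : ¬ Q.Adj k₁ k₂) (ha₁ : Q.Adj k₁ i)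
    (ha₂ : ¬ Q.Adj k₂ i)
    (hx : IsCornerGen Q S g v vs (b - simpleRoot k₁ - simpleRoot i) k₁ x)
    (hy : IsCornerGen Q S g v vs (b - simpleRoot k₂) i y) : x = y := by
  have h₂₁ : ¬ Q.Adj k₂ k₁ := fun h' => h₁₂ h'.symm
  have c₂ : coroot Q k₂ (b - simpleRoot k₁ - simpleRoot i) = 1 := by
    rw [coroot_sub_of_not_adj (h.ne_of_coroot h₂) ha₂, coroot_sub_of_not_adj hne.symm h₂₁, h₂]
  have c₁ := (coroot_sub_of_not_adj hne h₁₂).trans h₁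
  obtain ⟨z, hz⟩ := ((h.sub_sub h₁ ha₁).sub c₂ h₂₁).exists_isCornerGen g v vs hQ
  trans z
  · exact ih _ (height_sub_simpleRoot_sub_simpleRoot_lt _ _ _) _ _ _ hx
      (.of_sub (h.sub_sub h₁ ha₁) c₂ h₂₁ hz)
  · rw [sub_right_comm, sub_right_comm b] at hz
    exact (ih _ (height_sub_simpleRoot_lt _ _) _ _ _ hy
      (.of_sub_sub (h.sub h₂ ha₂) c₁ ha₁ hz)).symm

variable {K : Type*} [Field K] [Algebra K A] {P : Params K} {o : A} {j : ι}

lemma eq_of_adj (hQ : IsPosDef Q) (hF : IsFrame P Q S o g j v vs) (h : IsOrtho Q S b i)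
    (h₁ : coroot Q k₁ b = 1) (h₂ : coroot Q k₂ b = 1) (h₁₂ : Q.Adj k₁ k₂)
    (hx : IsCornerGen Q S g v vs (b - simpleRoot k₁) i x)
    (hy : IsCornerGen Q S g v vs (b - simpleRoot k₂) i y) : x = y := by
  have b_eq := h.eq_add_of_adj hQ h₁₂ h₁ h₂
  rw [b_eq, add_sub_cancel_left] at hx
  rw [b_eq, add_sub_cancel_right] at hy
  rw [hx.eq_of_simpleRoot, hy.eq_of_simpleRoot]
  exact hF.cornerGen_eq_of_adj hx.isOrtho.mem_of_simpleRoot hy.isOrtho.mem_of_simpleRoot h.mem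
    h₁₂.symm hx.isOrtho.ne_and_not_adj.1 hy.isOrtho.ne_and_not_adj.1 hx.isOrtho.ne_and_not_adj.2
    hy.isOrtho.ne_and_not_adj.2

lemma eq_of_sub_sub_of_sub_sub (hQ : IsPosDef Q) (hF : IsFrame P Q S o g j v vs)
    (h : IsOrtho Q S b i) (h₁ : coroot Q k₁ b = 1) (h₂ : coroot Q k₂ b = 1) (hne : k₁ ≠ k₂)
    (h₁₂ : ¬ Q.Adj k₁ k₂) (ha₁ : Q.Adj k₁ i) (ha₂ : Q.Adj k₂ i)
    (hx : IsCornerGen Q S g v vs (b - simpleRoot k₁ - simpleRoot i) k₁ x)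
    (hy : IsCornerGen Q S g v vs (b - simpleRoot k₂ - simpleRoot i) k₂ y) : x = y := by
  have c₂ := (coroot_sub_of_not_adj hne.symm (fun h' => h₁₂ h'.symm)).trans h₂
  have two_le : 2 ≤ coroot Q i (b - simpleRoot k₁ - simpleRoot k₂) := by
    rw [map_sub, h.coroot_sub ha₁, coroot_simpleRoot_of_adj ha₂.symm]
    decide
  have b_sub := ((h.sub_simpleRoot h₁).sub_simpleRoot c₂).eq_simpleRoot hQ two_le
  rw [show b - simpleRoot k₁ - simpleRoot i = simpleRoot k₂ by rw [← b_sub]; abel] at hx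
  rw [show b - simpleRoot k₂ - simpleRoot i = simpleRoot k₁ by rw [← b_sub]; abel] at hy
  rw [hx.eq_of_simpleRoot, hy.eq_of_simpleRoot]
  exact hF.cornerGen_comm hx.isOrtho.mem_of_simpleRoot hy.isOrtho.mem_of_simpleRoot h.mem hne
    h₁₂ ha₂ ha₁

lemma unique (hQ : IsPosDef Q) (hF : IsFrame P Q S o g j v vs)
    (hx : IsCornerGen Q S g v vs b i x) (hy : IsCornerGen Q S g v vs b i y) : x = y := by
  refine IsPosRoot.height_induction (p := fun b => ∀ i x y, IsCornerGen Q S g v vs b i x →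
    IsCornerGen Q S g v vs b i y → x = y) (fun b _ ih i x y hx hy => ?_)
    hx.isOrtho.toIsPosRoot i x y hx hy
  have ih' (b') (hlt : height b' < height b) (i x y) (hx : IsCornerGen Q S g v vs b' i x) :
      IsCornerGen Q S g v vs b' i y → x = y := ih b' hx.isOrtho.toIsPosRoot hlt i x y hx
  have h := hx.isOrtho
  rcases hx.simpleRoot_or_exists with ⟨k, rfl, rfl⟩ | ⟨k₁, h₁, hx'⟩
  · exact hy.eq_of_simpleRoot.symm
  rcases hy.simpleRoot_or_exists with ⟨k, rfl, rfl⟩ | ⟨k₂, h₂, hy'⟩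
  · exact hx.eq_of_simpleRoot
  by_cases hne : k₁ = k₂
  · subst hne
    rcases hx' with ⟨ha₁, hx'⟩ | ⟨ha₁, hx'⟩ <;> rcases hy' with ⟨ha₂, hy'⟩ | ⟨ha₂, hy'⟩
    · exact ih' _ (height_sub_simpleRoot_lt _ _) _ _ _ hx' hy'
    · exact absurd ha₂ ha₁
    · exact absurd ha₁ ha₂
    · exact ih' _ (height_sub_simpleRoot_sub_simpleRoot_lt _ _ _) _ _ _ hx' hy'
  by_cases h₁₂ : Q.Adj k₁ k₂
  · have hx' := (hx'.resolve_right fun h' => h.not_adj_of_adj hQ h₁ h₂ h₁₂ h'.1.symm).2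
    have hy' := (hy'.resolve_right fun h' => h.not_adj_of_adj hQ h₂ h₁ h₁₂.symm h'.1.symm).2
    exact eq_of_adj hQ hF h h₁ h₂ h₁₂ hx' hy'
  rcases hx' with ⟨ha₁, hx'⟩ | ⟨ha₁, hx'⟩ <;> rcases hy' with ⟨ha₂, hy'⟩ | ⟨ha₂, hy'⟩
  · exact eq_of_sub_of_sub ih' hQ h h₁ h₂ hne h₁₂ ha₁ ha₂ hx' hy'
  · exact (eq_of_sub_sub_of_sub ih' hQ h h₂ h₁ (Ne.symm hne) (fun h' => h₁₂ h'.symm) ha₂ ha₁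
      hy' hx').symm
  · exact eq_of_sub_sub_of_sub ih' hQ h h₁ h₂ hne h₁₂ ha₁ ha₂ hx' hy'
  · exact eq_of_sub_sub_of_sub_sub hQ hF h h₁ h₂ hne h₁₂ ha₁ ha₂ hx' hy'

lemma sub (hQ : IsPosDef Q) (hF : IsFrame P Q S o g j v vs) (hx : IsCornerGen Q S g v vs b i x)
    (hk : coroot Q k b = 1) (ha : ¬ Q.Adj k i) :
    IsCornerGen Q S g v vs (b - simpleRoot k) i x := by
  obtain ⟨z, hz⟩ := (hx.isOrtho.sub hk ha).exists_isCornerGen g v vs hQ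
  rwa [hx.unique hQ hF (.of_sub hx.isOrtho hk ha hz)]

lemma sub_sub (hQ : IsPosDef Q) (hF : IsFrame P Q S o g j v vs)
    (hx : IsCornerGen Q S g v vs b i x) (hk : coroot Q k b = 1) (ha : Q.Adj k i) :
    IsCornerGen Q S g v vs (b - simpleRoot k - simpleRoot i) k x := by
  obtain ⟨z, hz⟩ := (hx.isOrtho.sub_sub hk ha).exists_isCornerGen g v vs hQ
  rwa [hx.unique hQ hF (.of_sub_sub hx.isOrtho hk ha hz)]

lemma exists_of_isDominant (hQ : IsPosDef Q) (hS : IsConnectedOn Q S) {θ : ι → ℤ}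
    (hθ : IsPosRoot Q S θ) (hdom : IsDominant Q S θ) (hx : IsCornerGen Q S g v vs b i x) :
    ∃ i', IsCornerGen Q S g v vs θ i' x := by
  obtain ⟨N, hN⟩ := hQ.exists_height_le S
  induction hd : (N - height b).toNat using Nat.strong_induction_on generalizing b i with
  | _ d ih =>
    subst hd
    have h := hx.isOrtho
    by_cases hb : IsDominant Q S b
    · obtain rfl := hQ.eq_of_isDominant hS h.toIsPosRoot hb hθ hdom
      exact ⟨i, hx⟩
    simp only [IsDominant, not_forall, not_le] at hb
    obtain ⟨k, hkS, hneg⟩ := hb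
    have hk : coroot Q k b = -1 :=
      le_antisymm (Int.le_sub_one_of_lt hneg) (h.neg_one_le_coroot hQ k)
    by_cases ha : Q.Adj k i
    · have higher := h.add_add hkS hk ha
      have height_le := hN _ higher.toIsPosRoot
      refine ih _ ?_ (.of_sub_sub (k := i) higher ?_ ha.symm ?_) rfl
      · rw [map_add, map_add, height_simpleRoot, height_simpleRoot] at *
        omega
      · rw [map_add, h.coroot_add ha, coroot_simpleRoot_self]
        rfl
      · rwa [add_sub_cancel_right, add_sub_cancel_right]
    · have higher := h.add hkS hk ha
      have height_le := hN _ higher.toIsPosRoot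
      refine ih _ ?_ (.of_sub (k := k) higher ?_ ha ?_) rfl
      · rw [map_add, height_simpleRoot] at *
        omega
      · rw [map_add, hk, coroot_simpleRoot_self]
        rfl
      · rwa [add_sub_cancel_right]

end IsCornerGen

end CornerGen

section CornerSystem

variable {K : Type*} [Field K] {A : Type*} [Ring A] [Algebra K A] {P : Params K} {o o' : A}

lemma IsBMWSystem.of_intertwine {ι : Type*} {Q : SimpleGraph ι} {S T : Finset ι} {g g' : ι → A}
    (h : IsBMWSystem P Q S o g) (hTS : T ⊆ S) {v vs : A} (vs_mul_v : vs * v = o')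
    (unit_mul_v : o * v = v) (v_mul_unit : v * o' = v)
    (unit_mul : ∀ i ∈ T, o' * g' i = g' i) (mul_unit : ∀ i ∈ T, g' i * o' = g' i)
    (intertwine : ∀ i ∈ T, v * g' i = g i * v) : IsBMWSystem P Q T o' g' := by
  have unit_mul_unit : o' * o' = o' := by
    conv_lhs => rw [← vs_mul_v, mul_assoc, vs_mul_v, v_mul_unit, vs_mul_v]
  have cancel {x y : A} (hx : o' * x = x) (hy : o' * y = y) (hxy : v * x = v * y) : x = y := by
    rw [← hx, ← hy, ← vs_mul_v, mul_assoc, mul_assoc, hxy]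
  have unit_mul_assoc {x : A} (hx : o' * x = x) (y : A) : o' * (x * y) = x * y := by
    rw [← mul_assoc, hx]
  have mul_assoc_of {x x' : A} (hx : v * x = x' * v) (y : A) : v * (x * y) = x' * (v * y) := by
    rw [← mul_assoc, hx, mul_assoc]
  have intertwine_idem (i) (hi : i ∈ T) : v * P.idem o' (g' i) = P.idem o (g i) * v :=
    P.mul_idem_of_mul_eq (intertwine i hi) (v_mul_unit.trans unit_mul_v.symm)
  have unit_mul_idem (i) (hi : i ∈ T) : o' * P.idem o' (g' i) = P.idem o' (g' i) := by
    simp only [Params.idem, mul_smul_comm, mul_add, mul_sub, unit_mul_assoc (unit_mul i hi),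
      unit_mul i hi, unit_mul_unit]
  refine ⟨⟨fun {i k} hi hk hne ha => cancel (unit_mul_assoc (unit_mul i hi) _)
    (unit_mul_assoc (unit_mul k hk) _) ?_, fun {i k} hi hk ha =>
      cancel (unit_mul_assoc (unit_mul i hi) _) (unit_mul_assoc (unit_mul k hk) _) ?_⟩,
    unit_mul_unit, unit_mul _, mul_unit _, fun {i} hi => cancel (unit_mul_assoc (unit_mul i hi) _)
      (by rw [mul_smul_comm, unit_mul_idem i hi]) ?_, fun {i k} hi hk ha =>
      cancel (unit_mul_assoc (unit_mul_idem i hi) _)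
        (by rw [mul_smul_comm, unit_mul_idem i hi]) ?_⟩
  · rw [mul_assoc_of (intertwine i hi), mul_assoc_of (intertwine k hk), intertwine i hi,
      intertwine k hk, ← mul_assoc, h.comm (hTS hi) (hTS hk) hne ha, mul_assoc]
  · simp only [mul_assoc_of (intertwine i hi), mul_assoc_of (intertwine k hk), intertwine i hi,
      intertwine k hk]
    exact h.braid_assoc (hTS hi) (hTS hk) ha v
  · rw [mul_assoc_of (intertwine i hi), mul_smul_comm, intertwine_idem i hi, ← mul_assoc,
      h.mul_idem (hTS hi), smul_mul_assoc]
  · rw [mul_assoc_of (intertwine_idem i hi), mul_assoc_of (intertwine k hk), mul_smul_comm,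
      intertwine_idem i hi, ← smul_mul_assoc, ← h.idem_mul_mul_idem (hTS hi) (hTS hk) ha]
    simp only [mul_assoc]

variable {ι : Type*} {Q : SimpleGraph ι} {S : Finset ι} {g v vs : ι → A} {i j k : ι}

lemma IsFrame.isBMWSystem_cornerGen (hF : IsFrame P Q S o g j v vs) {T : Finset ι} (hTS : T ⊆ S)
    (hk : k ∈ S) (hT : ∀ i ∈ T, i ≠ k ∧ ¬ Q.Adj i k) :
    IsBMWSystem P Q T (P.idem o (g j)) (cornerGen g v vs k) :=
  hF.toIsBMWSystem.of_intertwine hTS (hF.transport hk).mul_left (hF.unit_mul_v hk)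
    (hF.transport hk).mul_source
    (fun i _ => hF.idem_mul_cornerGen hk i) (fun i _ => hF.cornerGen_mul_idem hk i)
    fun i hi => hF.v_mul_cornerGen hk (hTS hi) (hT i hi).1 (hT i hi).2

variable (P) in
/-- The relations of a Birman–Murakami–Wenzl algebra satisfied by a pair of elements of the corner
with unit `o`, attached to two nodes which are adjacent or not according to `adj`. -/
structure IsBMWPair (o : A) (adj : Prop) (x y : A) : Prop where
  comm (h : ¬ adj) : x * y = y * x
  braid (h : adj) : x * (y * x) = y * (x * y)
  idem_left (h : adj) : P.idem o x * (y * P.idem o x) = (P.l / P.δ) • P.idem o x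
  idem_right (h : adj) : P.idem o y * (x * P.idem o y) = (P.l / P.δ) • P.idem o y

lemma IsBMWPair.symm {adj : Prop} {x y : A} (h : IsBMWPair P o adj x y) :
    IsBMWPair P o adj y x :=
  ⟨fun ha => (h.comm ha).symm, fun ha => (h.braid ha).symm, h.idem_right, h.idem_left⟩

lemma IsBMWSystem.isBMWPair (h : IsBMWSystem P Q S o g) (hi : i ∈ S) (hk : k ∈ S) (hne : i ≠ k) :
    IsBMWPair P o (Q.Adj i k) (g i) (g k) :=
  ⟨h.comm hi hk hne, h.braid hi hk, h.idem_mul_mul_idem hi hk, fun ha =>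
    h.idem_mul_mul_idem hk hi ha.symm⟩

variable [Fintype ι] [DecidableEq ι] {b : ι → ℤ} {i₁ i₂ : ι} {x y : A}

namespace IsCornerGen

lemma isBMWPair_of_adj_of_not_adj
    (ih : ∀ b', height b' < height b → ∀ i₁ i₂ x y, i₁ ≠ i₂ → IsCornerGen Q S g v vs b' i₁ x →
      IsCornerGen Q S g v vs b' i₂ y → IsBMWPair P (P.idem o (g j)) (Q.Adj i₁ i₂) x y)
    (hQ : IsPosDef Q) (hF : IsFrame P Q S o g j v vs) (hk : coroot Q k b = 1)
    (ha₁ : Q.Adj k i₁) (ha₂ : ¬ Q.Adj k i₂) (hx : IsCornerGen Q S g v vs b i₁ x)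
    (hy : IsCornerGen Q S g v vs b i₂ y) :
    IsBMWPair P (P.idem o (g j)) (Q.Adj i₁ i₂) x y := by
  have hne₂ := hy.isOrtho.ne_of_coroot hk
  have hx₁ := hx.sub_sub hQ hF hk ha₁
  have hy₁ := hy.sub hQ hF hk ha₂
  have c₁ := hx.isOrtho.coroot_sub ha₁
  by_cases h₁₂ : Q.Adj i₁ i₂
  · have c₂ := hy₁.isOrtho.coroot_sub h₁₂
    have hx₂ := hx₁.sub hQ hF c₂ fun h' => ha₂ h'.symm
    have hy₂ := hy₁.sub_sub hQ hF c₁ h₁₂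
    simpa only [h₁₂, ha₁] using ih _ ((height_sub_simpleRoot_lt _ _).trans
      (height_sub_simpleRoot_sub_simpleRoot_lt _ _ _)) _ _ x y ha₁.ne hx₂ hy₂
  · have hy₂ := hy₁.sub hQ hF c₁ h₁₂
    simpa only [h₁₂, ha₂] using
      ih _ (height_sub_simpleRoot_sub_simpleRoot_lt _ _ _) _ _ x y hne₂ hx₁ hy₂

lemma isBMWPair_of_adj_of_adj
    (ih : ∀ b', height b' < height b → ∀ i₁ i₂ x y, i₁ ≠ i₂ → IsCornerGen Q S g v vs b' i₁ x →
      IsCornerGen Q S g v vs b' i₂ y → IsBMWPair P (P.idem o (g j)) (Q.Adj i₁ i₂) x y)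
    (hQ : IsPosDef Q) (hF : IsFrame P Q S o g j v vs) (hne : i₁ ≠ i₂) (hk : coroot Q k b = 1)
    (ha₁ : Q.Adj k i₁) (ha₂ : Q.Adj k i₂) (hx : IsCornerGen Q S g v vs b i₁ x)
    (hy : IsCornerGen Q S g v vs b i₂ y) :
    IsBMWPair P (P.idem o (g j)) (Q.Adj i₁ i₂) x y := by
  have h₁₂ : ¬ Q.Adj i₁ i₂ := hQ.not_adj_of_adj_of_adj ha₁ ha₂
  have h₂₁ : ¬ Q.Adj i₂ i₁ := fun h' => h₁₂ h'.symm
  have c₂ := (coroot_sub_of_not_adj hne.symm h₂₁).trans (hy.isOrtho.coroot_sub ha₂)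
  have c₁ := (coroot_sub_of_not_adj hne h₁₂).trans (hx.isOrtho.coroot_sub ha₁)
  have hx₁ := (hx.sub_sub hQ hF hk ha₁).sub_sub hQ hF c₂ ha₂.symm
  have hy₁ := (hy.sub_sub hQ hF hk ha₂).sub_sub hQ hF c₁ ha₁.symm
  rw [sub_right_comm (b - simpleRoot k)] at hy₁
  simpa only [h₁₂, h₂₁] using ih _ ((height_sub_simpleRoot_sub_simpleRoot_lt _ _ _).trans
    (height_sub_simpleRoot_sub_simpleRoot_lt _ _ _)) _ _ x y hne.symm hx₁ hy₁

lemma isBMWPair (hQ : IsPosDef Q) (hF : IsFrame P Q S o g j v vs) (hne : i₁ ≠ i₂)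
    (hx : IsCornerGen Q S g v vs b i₁ x) (hy : IsCornerGen Q S g v vs b i₂ y) :
    IsBMWPair P (P.idem o (g j)) (Q.Adj i₁ i₂) x y := by
  refine IsPosRoot.height_induction (p := fun b => ∀ i₁ i₂ x y, i₁ ≠ i₂ →
    IsCornerGen Q S g v vs b i₁ x → IsCornerGen Q S g v vs b i₂ y →
      IsBMWPair P (P.idem o (g j)) (Q.Adj i₁ i₂) x y) (fun b hb ih i₁ i₂ x y hne hx hy => ?_)
    hx.isOrtho.toIsPosRoot i₁ i₂ x y hne hx hy
  have ih' (b') (hlt : height b' < height b) (i₁ i₂ x y) (hne : i₁ ≠ i₂)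
      (hx : IsCornerGen Q S g v vs b' i₁ x) : IsCornerGen Q S g v vs b' i₂ y →
        IsBMWPair P (P.idem o (g j)) (Q.Adj i₁ i₂) x y :=
    ih b' hx.isOrtho.toIsPosRoot hlt i₁ i₂ x y hne hx
  rcases hb.simpleRoot_or_coroot_eq_one hQ with ⟨k, hkS, rfl⟩ | ⟨k, _, hk⟩
  · rw [hx.eq_of_simpleRoot, hy.eq_of_simpleRoot]
    refine (hF.isBMWSystem_cornerGen (T := {i₁, i₂}) ?_ hkS ?_).isBMWPair (by simp) (by simp) hne
    · simp [Finset.insert_subset_iff, hx.isOrtho.mem, hy.isOrtho.mem]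
    · simp [hx.isOrtho.ne_and_not_adj, hy.isOrtho.ne_and_not_adj]
  by_cases ha₁ : Q.Adj k i₁ <;> by_cases ha₂ : Q.Adj k i₂
  · exact isBMWPair_of_adj_of_adj ih' hQ hF hne hk ha₁ ha₂ hx hy
  · exact isBMWPair_of_adj_of_not_adj ih' hQ hF hk ha₁ ha₂ hx hy
  · simpa only [Q.adj_comm] using
      (isBMWPair_of_adj_of_not_adj ih' hQ hF hk ha₂ ha₁ hy hx).symm
  · exact ih' _ (height_sub_simpleRoot_lt _ _) _ _ _ _ hne (hx.sub hQ hF hk ha₁)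
      (hy.sub hQ hF hk ha₂)

lemma isBMWSystem (hQ : IsPosDef Q) (hF : IsFrame P Q S o g j v vs) {T : Finset ι} {g' : ι → A}
    (hg' : ∀ i ∈ T, IsCornerGen Q S g v vs b i (g' i)) :
    IsBMWSystem P Q T (P.idem o (g j)) g' := by
  have unit_mul (i) (hi : i ∈ T) : P.idem o (g j) * g' i = g' i := by
    obtain ⟨k, hk, i', -, -, -, hx⟩ := (hg' i hi).exists_eq_cornerGen
    rw [hx, hF.idem_mul_cornerGen hk]
  have mul_unit (i) (hi : i ∈ T) : g' i * P.idem o (g j) = g' i := by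
    obtain ⟨k, hk, i', -, -, -, hx⟩ := (hg' i hi).exists_eq_cornerGen
    rw [hx, hF.cornerGen_mul_idem hk]
  have mul_idem (i) (hi : i ∈ T) : g' i * P.idem (P.idem o (g j)) (g' i) =
      P.l⁻¹ • P.idem (P.idem o (g j)) (g' i) := by
    obtain ⟨k, hk, i', hi', hne, ha, hx⟩ := (hg' i hi).exists_eq_cornerGen
    rw [hx]
    exact (hF.isBMWSystem_cornerGen (Finset.singleton_subset_iff.2 hi') hk
      (by simpa using ⟨hne, ha⟩)).mul_idem (Finset.mem_singleton_self i')
  have pair {i k} (hi : i ∈ T) (hk : k ∈ T) (hne : i ≠ k) :=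
    (hg' i hi).isBMWPair hQ hF hne (hg' k hk)
  exact
    { comm := fun hi hk hne ha => (pair hi hk hne).comm ha
      braid := fun hi hk ha => (pair hi hk ha.ne).braid ha
      unit_mul_unit := hF.idem_mul_idem_self hF.base_mem
      unit_mul := unit_mul _
      mul_unit := mul_unit _
      mul_idem := mul_idem _
      idem_mul_mul_idem := fun hi hk ha => (pair hi hk ha.ne).idem_left ha }

end IsCornerGen

lemma IsFrame.exists_isBMWSystem_corner (hQ : IsPosDef Q) (hS : IsConnectedOn Q S)
    (hF : IsFrame P Q S o g j v vs) :
    ∃ S' ⊂ S, ∃ g' : ι → A, IsBMWSystem P Q S' (P.idem o (g j)) g' ∧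
      (∀ i ∈ S', ∃ k ∈ S, ∃ i' ∈ S, i' ≠ k ∧ ¬ Q.Adj i' k ∧ g' i = cornerGen g v vs k i') ∧
      ∀ k ∈ S, ∀ i ∈ S, i ≠ k → ¬ Q.Adj i k → ∃ i' ∈ S', cornerGen g v vs k i = g' i' := by
  obtain ⟨θ, hθ, hdom⟩ := hQ.exists_isDominant ⟨j, hF.base_mem⟩
  set S' := {i ∈ S | coroot Q i θ = 0}
  have isOrtho (i) (hi : i ∈ S') : IsOrtho Q S θ i :=
    ⟨hθ, (Finset.mem_filter.1 hi).1, (Finset.mem_filter.1 hi).2⟩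
  have ssubset : S' ⊂ S := by
    obtain ⟨k, hk, hpos⟩ := hθ.exists_coroot_pos
    exact Finset.filter_ssubset.2 ⟨k, hk, hpos.ne'⟩
  have exists_gen (i) : ∃ x, i ∈ S' → IsCornerGen Q S g v vs θ i x := by
    by_cases hi : i ∈ S'
    · obtain ⟨x, hx⟩ := (isOrtho i hi).exists_isCornerGen g v vs hQ
      exact ⟨x, fun _ => hx⟩
    · exact ⟨0, fun h => absurd h hi⟩
  choose g' hg' using exists_gen
  refine ⟨S', ssubset, g', IsCornerGen.isBMWSystem hQ hF hg',
    fun i hi => (hg' i hi).exists_eq_cornerGen, fun k hk i hi hne ha => ?_⟩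
  obtain ⟨i', hx⟩ := (IsCornerGen.base (g := g) (v := v) (vs := vs)
    (isOrtho_simpleRoot hk hi hne ha)).exists_of_isDominant hQ hS hθ hdom
  have hi' : i' ∈ S' := Finset.mem_filter.2 ⟨hx.isOrtho.mem, hx.isOrtho.coroot_eq⟩
  exact ⟨i', hi', hx.unique hQ hF (hg' i' hi')⟩

end CornerSystem

/-! ### The left module generated by the base idempotent of a frame -/

section RootVector

variable {ι : Type*} [Fintype ι] [DecidableEq ι] {Q : SimpleGraph ι} {S : Finset ι} {b : ι → ℤ}

lemma height_sub_simpleRoot (b : ι → ℤ) (k : ι) : height (b - simpleRoot k) = height b - 1 := by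
  rw [map_sub, height_simpleRoot]

lemma coroot_sub_of_adj {i k : ι} (ha : Q.Adj i k) (b : ι → ℤ) :
    coroot Q i (b - simpleRoot k) = coroot Q i b + 1 := by
  rw [map_sub, coroot_simpleRoot_of_adj ha, sub_neg_eq_add]

section SMul

variable {G A : Type*} [SMul G A] [Zero A]

open Classical in
/-- An element of `A` attached to each positive root: `v k` for a simple root `α_k`, and
`g k • rootVector (b - α_k)` for a root `b` that is not simple, with a chosen `k` such that
`b - α_k` is a root. The condition on the height ensures termination; the value is `0` on other
vectors. -/
noncomputable def rootVector (Q : SimpleGraph ι) (g : ι → G) (v : ι → A) (b : ι → ℤ) : A :=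
  if h : ∃ k, b = simpleRoot k then v h.choose
  else if h : 0 < height b ∧ ∃ k, coroot Q k b = 1 then
    g h.2.choose • rootVector Q g v (b - simpleRoot h.2.choose)
  else 0
termination_by (height b).toNat
decreasing_by
  rw [height_sub_simpleRoot]
  omega

lemma rootVector_simpleRoot (Q : SimpleGraph ι) (g : ι → G) (v : ι → A) (k : ι) :
    rootVector Q g v (simpleRoot k) = v k := by
  have h : ∃ k', (simpleRoot k : ι → ℤ) = simpleRoot k' := ⟨k, rfl⟩
  rw [rootVector, dif_pos h, ← simpleRoot_injective h.choose_spec]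

lemma IsPosRoot.exists_rootVector_eq (hQ : IsPosDef Q) (hb : IsPosRoot Q S b)
    (hne : ∀ k, b ≠ simpleRoot k) (g : ι → G) (v : ι → A) :
    ∃ k ∈ S, coroot Q k b = 1 ∧
      rootVector Q g v b = g k • rootVector Q g v (b - simpleRoot k) := by
  have h : 0 < height b ∧ ∃ k, coroot Q k b = 1 := by
    rcases hb.simpleRoot_or_coroot_eq_one hQ with ⟨k, -, hk⟩ | ⟨k, -, hk⟩
    · exact absurd hk (hne k)
    · exact ⟨hb.height_pos, k, hk⟩
  have hc := h.2.choose_spec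
  refine ⟨h.2.choose, hb.mem_of_coroot_pos (hc.symm ▸ one_pos), hc, ?_⟩
  rw [rootVector, dif_neg (not_exists.2 hne), dif_pos h]

lemma IsPosRoot.rootVector_induction (hQ : IsPosDef Q) {g : ι → G} {v : ι → A}
    {p : A → Prop} (base : ∀ k ∈ S, p (v k)) (step : ∀ k ∈ S, ∀ x, p x → p (g k • x))
    (hb : IsPosRoot Q S b) : p (rootVector Q g v b) := by
  refine IsPosRoot.height_induction (p := fun b => p (rootVector Q g v b))
    (fun b hb ih => ?_) hb
  by_cases hs : ∃ k, b = simpleRoot k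
  · obtain ⟨k, rfl⟩ := hs
    rw [rootVector_simpleRoot]
    exact base k hb.mem_of_simpleRoot
  · obtain ⟨k, hk, hc, hw⟩ := hb.exists_rootVector_eq hQ (not_exists.1 hs) g v
    rw [hw]
    exact step k hk _ (ih _ (hb.sub_simpleRoot hc) (height_sub_simpleRoot_lt b k))

end SMul

variable {V : Type*} [CommRing V] {A : Type*} [Ring A] [Algebra V A]

/-- The right `B`-submodule spanned by the root vectors of height at most `d`. -/
noncomputable def rootFiltration (Q : SimpleGraph ι) (S : Finset ι) (g v : ι → A)
    (B : NonUnitalSubalgebra V A) (d : ℤ) : Submodule V A :=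
  Submodule.span V {x | ∃ b, IsPosRoot Q S b ∧ height b ≤ d ∧ rootVector Q g v b = x} *
    B.toSubmodule

variable {g v : ι → A} {B : NonUnitalSubalgebra V A} {d : ℤ}

lemma rootVector_mul_mem (hb : IsPosRoot Q S b) (hd : height b ≤ d) {a : A} (ha : a ∈ B) :
    rootVector Q g v b * a ∈ rootFiltration Q S g v B d :=
  Submodule.mul_mem_mul (Submodule.subset_span ⟨b, hb, hd, rfl⟩) ha

lemma rootFiltration_mono : Monotone (rootFiltration Q S g v B) := by
  refine fun d d' hdd' => span_mul_le ?_
  rintro _ ⟨b, hb, hd, rfl⟩ a ha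
  exact rootVector_mul_mem hb (hd.trans hdd') ha

lemma rootFiltration_le (hd : ∀ b, IsPosRoot Q S b → height b ≤ d) (d' : ℤ) :
    rootFiltration Q S g v B d' ≤ rootFiltration Q S g v B d := by
  refine span_mul_le ?_
  rintro _ ⟨b, hb, -, rfl⟩ a ha
  exact rootVector_mul_mem hb (hd b hb) ha

lemma mul_mem_of_mem_rootFiltration {c : A} {N : Submodule V A}
    (mul_right : ∀ x ∈ N, ∀ a ∈ B, x * a ∈ N)
    (h : ∀ b, IsPosRoot Q S b → height b ≤ d → c * rootVector Q g v b ∈ N) {x : A}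
    (hx : x ∈ rootFiltration Q S g v B d) : c * x ∈ N := by
  suffices rootFiltration Q S g v B d ≤ N.comap (LinearMap.mulLeft V c) from this hx
  refine span_mul_le ?_
  rintro _ ⟨b, hb, hd, rfl⟩ a ha
  rw [Submodule.mem_comap, LinearMap.mulLeft_apply, ← mul_assoc]
  exact mul_right _ (h b hb hd) a ha

lemma rootFiltration_mul_right {x a : A} (hx : x ∈ rootFiltration Q S g v B d) (ha : a ∈ B) :
    x * a ∈ rootFiltration Q S g v B d := by
  suffices rootFiltration Q S g v B d ≤
      (rootFiltration Q S g v B d).comap (LinearMap.mulRight V a) from this hx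
  refine span_mul_le ?_
  rintro _ ⟨b, hb, hd, rfl⟩ c hc
  rw [Submodule.mem_comap, LinearMap.mulRight_apply, mul_assoc]
  exact rootVector_mul_mem hb hd (B.mul_mem hc ha)

lemma fg_rootFiltration (hQ : IsPosDef Q) (hB : B.toSubmodule.FG) (d : ℤ) :
    (rootFiltration Q S g v B d).FG := by
  refine (Submodule.fg_span ?_).mul hB
  refine ((hQ.finite_titsForm_eq 2).image (rootVector Q g v)).subset ?_
  rintro _ ⟨b, hb, -, rfl⟩
  exact ⟨b, hb.norm, rfl⟩

end RootVector

section NodeSubmodule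

variable {V : Type*} [CommRing V] {A : Type*} [Ring A] [Algebra V A]

/-- The right `B`-submodule `v i * B`. -/
def nodeSubmodule {ι : Type*} (v : ι → A) (B : NonUnitalSubalgebra V A) (i : ι) :
    Submodule V A :=
  B.toSubmodule.map (LinearMap.mulLeft V (v i))

variable {ι : Type*} {v : ι → A} {B : NonUnitalSubalgebra V A} {i : ι}

lemma mem_nodeSubmodule {x : A} : x ∈ nodeSubmodule v B i ↔ ∃ a ∈ B, v i * a = x := Iff.rfl

lemma mul_mem_nodeSubmodule {a : A} (ha : a ∈ B) : v i * a ∈ nodeSubmodule v B i := ⟨a, ha, rfl⟩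

lemma nodeSubmodule_mul_right {x a : A} (hx : x ∈ nodeSubmodule v B i) (ha : a ∈ B) :
    x * a ∈ nodeSubmodule v B i := by
  obtain ⟨t, ht, rfl⟩ := hx
  exact ⟨t * a, B.mul_mem ht ha, (mul_assoc _ _ _).symm⟩

end NodeSubmodule

section LeftModule

variable {V : Type*} [CommRing V] {K : Type*} [Field K] {A : Type*} [Ring A] [Algebra K A]
  [Algebra V A]
  {ι : Type*} {Q : SimpleGraph ι} {S : Finset ι} {g v vs : ι → A} {P : Params K} {o : A} {j : ι}

/-- `B` is a subalgebra of the base corner of a frame containing the unit of this corner, all the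
elements `cornerGen g v vs k i`, and their idempotents. -/
structure IsCornerSubalgebra (P : Params K) (Q : SimpleGraph ι) (S : Finset ι) (o : A) (g : ι → A)
    (j : ι) (v vs : ι → A) (B : NonUnitalSubalgebra V A) : Prop
    extends IsFrame P Q S o g j v vs where
  idem_mem : P.idem o (g j) ∈ B
  cornerGen_mem {k i : ι} (hk : k ∈ S) (hi : i ∈ S) (hne : i ≠ k) (ha : ¬ Q.Adj i k) :
    cornerGen g v vs k i ∈ B
  idem_cornerGen_mem {k i : ι} (hk : k ∈ S) (hi : i ∈ S) (hne : i ≠ k) (ha : ¬ Q.Adj i k) :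
    P.idem (P.idem o (g j)) (cornerGen g v vs k i) ∈ B

variable {B : NonUnitalSubalgebra V A} {b : ι → ℤ} {d : ℤ} {i k : ι}

namespace IsCornerSubalgebra

lemma v_mem_nodeSubmodule (hB : IsCornerSubalgebra P Q S o g j v vs B) (hi : i ∈ S) :
    v i ∈ nodeSubmodule v B i := by
  rw [← (hB.transport hi).mul_source]; exact mul_mem_nodeSubmodule hB.idem_mem

lemma mul_mem_nodeSubmodule (hB : IsCornerSubalgebra P Q S o g j v vs B) (hi : i ∈ S)
    (hk : k ∈ S) (hik : i ≠ k) (ha : ¬ Q.Adj i k) {x : A} (hx : x ∈ nodeSubmodule v B i) :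
    g k * x ∈ nodeSubmodule v B i := by
  obtain ⟨t, ht, rfl⟩ := mem_nodeSubmodule.1 hx
  have ha' : ¬ Q.Adj k i := fun h => ha h.symm
  rw [← mul_assoc, ← hB.v_mul_cornerGen hi hk hik.symm ha', mul_assoc]
  exact BMW.mul_mem_nodeSubmodule (B.mul_mem (hB.cornerGen_mem hi hk hik.symm ha') ht)

lemma idem_mul_v_mem [Algebra V K] [IsScalarTower V K A]
    (hB : IsCornerSubalgebra P Q S o g j v vs B) (hV : P.IsIntegral V) (hS : IsConnectedOn Q S)
    (hi : i ∈ S) (hk : k ∈ S) : P.idem o (g i) * v k ∈ nodeSubmodule v B i := by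
  classical
  have idem_mul_v_self : P.idem o (g i) * v i ∈ nodeSubmodule v B i := by
    rw [(hB.transport hi).target_mul]; exact hB.v_mem_nodeSubmodule hi
  suffices all : S.filter (fun k => P.idem o (g i) * v k ∈ nodeSubmodule v B i) = S from
    (Finset.mem_filter.1 (all.symm ▸ hk : k ∈ S.filter _)).2
  refine hS _ (Finset.filter_subset _ _) ⟨i, Finset.mem_filter.2 ⟨hi, idem_mul_v_self⟩⟩
    fun p hp k hk hpk => Finset.mem_filter.2 ⟨hk, ?_⟩
  obtain ⟨hp, mem_p⟩ := Finset.mem_filter.1 hp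
  by_cases hik : i = k
  · exact hik ▸ idem_mul_v_self
  by_cases aik : Q.Adj i k
  · rw [hB.idem_mul_v_of_adj hi hk aik]
    exact smul_mem_of_mem_range hV.inv_δ_mem _ (hB.v_mem_nodeSubmodule hi)
  have aki : ¬ Q.Adj k i := fun h => aik h.symm
  have hip : i ≠ p := by rintro rfl; exact aik hpk
  by_cases aip : Q.Adj i p
  · have v_k : v k = P.δ • (P.idem o (g k) * v p) := by
      rw [hB.idem_mul_v_of_adj hk hp hpk.symm, smul_inv_smul₀ P.δ_ne_zero]
    have symmetric : P.idem o (g i) * v k = P.idem o (g k) * v i := by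
      rw [v_k, mul_smul_comm, ← mul_assoc, hB.idem_mul_idem_comm hi hk hik aik, mul_assoc,
        hB.idem_mul_v_of_adj hi hp aip, mul_smul_comm, smul_inv_smul₀ P.δ_ne_zero]
    rw [symmetric, ← hB.v_mul_idem_cornerGen hi hk (Ne.symm hik) aki]
    exact BMW.mul_mem_nodeSubmodule (hB.idem_cornerGen_mem hi hk (Ne.symm hik) aki)
  · have commute : P.idem o (g i) * v k = g p * (g k * (P.idem o (g i) * v p)) := by
      rw [hB.v_eq hk hp hpk.symm, ← mul_assoc, hB.idem_mul_comm hi hp hip aip, mul_assoc,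
        ← mul_assoc (P.idem o (g i)), hB.idem_mul_comm hi hk hik aik, mul_assoc]
    rw [commute]
    exact hB.mul_mem_nodeSubmodule hi hp hip aip (hB.mul_mem_nodeSubmodule hi hk hik aik mem_p)

lemma idem_mul_mul_mul_mem (hB : IsCornerSubalgebra P Q S o g j v vs B) (hi : i ∈ S) (hk : k ∈ S)
    (ha : Q.Adj i k) {y : A} (hy : P.idem o (g k) * y ∈ nodeSubmodule v B k) :
    P.idem o (g i) * (g k * (g i * y)) ∈ nodeSubmodule v B i := by
  obtain ⟨t, ht, he⟩ := mem_nodeSubmodule.1 hy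
  have swap : P.idem o (g i) * (g k * (g i * y)) = v i * t := by
    calc P.idem o (g i) * (g k * (g i * y)) = P.idem o (g i) * (g k * g i) * y := by
          simp only [mul_assoc]
      _ = g k * (g i * (P.idem o (g k) * y)) := by
          rw [← hB.mul_mul_idem hi hk ha]; simp only [mul_assoc]
      _ = v i * t := by rw [← he, hB.v_eq hi hk ha]; simp only [mul_assoc]
  rw [swap]
  exact BMW.mul_mem_nodeSubmodule ht

variable [Fintype ι] [DecidableEq ι]

lemma rootVector_mul_idem (hB : IsCornerSubalgebra P Q S o g j v vs B) (hQ : IsPosDef Q)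
    (hb : IsPosRoot Q S b) : rootVector Q g v b * P.idem o (g j) = rootVector Q g v b :=
  hb.rootVector_induction (p := fun x => x * P.idem o (g j) = x) hQ
    (fun _ hk => (hB.transport hk).mul_source) fun k _ x hx => by rw [smul_eq_mul, mul_assoc, hx]

lemma unit_mul_rootVector (hB : IsCornerSubalgebra P Q S o g j v vs B) (hQ : IsPosDef Q)
    (hb : IsPosRoot Q S b) : o * rootVector Q g v b = rootVector Q g v b :=
  hb.rootVector_induction (p := fun x => o * x = x) hQ (fun _ hk => hB.unit_mul_v hk)
    fun k hk x _ => by rw [smul_eq_mul, ← mul_assoc, hB.unit_mul hk]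

lemma rootVector_mem (hB : IsCornerSubalgebra P Q S o g j v vs B) (hQ : IsPosDef Q)
    (hb : IsPosRoot Q S b) (hd : height b ≤ d) :
    rootVector Q g v b ∈ rootFiltration Q S g v B d := by
  rw [← hB.rootVector_mul_idem hQ hb]; exact rootVector_mul_mem hb hd hB.idem_mem

end IsCornerSubalgebra

lemma nodeSubmodule_le_rootFiltration [Fintype ι] [DecidableEq ι] (hi : i ∈ S) (hd : 1 ≤ d) :
    nodeSubmodule v B i ≤ rootFiltration Q S g v B d := by
  intro x hx
  obtain ⟨t, ht, rfl⟩ := mem_nodeSubmodule.1 hx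
  rw [← rootVector_simpleRoot Q g v]
  exact rootVector_mul_mem (isPosRoot_simpleRoot hi) (by rwa [height_simpleRoot]) ht

end LeftModule

section RootBounds

variable {V : Type*} [CommRing V] {K : Type*} [Field K] {A : Type*} [Ring A] [Algebra K A]
  [Algebra V A] {ι : Type*} [Fintype ι] [DecidableEq ι] {Q : SimpleGraph ι} {S : Finset ι}
  {g v vs : ι → A} {P : Params K} {o : A} {j : ι}

/-- The action of the generators on the root vectors of height at most `d` is triangular with
respect to `rootFiltration`, and their idempotents map these root vectors to `nodeSubmodule`. -/
structure RootBounds (P : Params K) (Q : SimpleGraph ι) (S : Finset ι) (o : A) (g v : ι → A)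
    (B : NonUnitalSubalgebra V A) (d : ℤ) : Prop where
  idem_mul_mem {b : ι → ℤ} (hb : IsPosRoot Q S b) (hd : height b ≤ d) {i : ι} (hi : i ∈ S) :
    P.idem o (g i) * rootVector Q g v b ∈ nodeSubmodule v B i
  mul_sub_mem {b : ι → ℤ} (hb : IsPosRoot Q S b) (hd : height b ≤ d) {i : ι}
    (hc : coroot Q i b = 1) :
    g i * rootVector Q g v (b - simpleRoot i) - rootVector Q g v b ∈
      rootFiltration Q S g v B (height b - 1)
  mul_mem {b : ι → ℤ} (hb : IsPosRoot Q S b) (hd : height b ≤ d) {i : ι} (hi : i ∈ S)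
    (hc : 0 ≤ coroot Q i b) : g i * rootVector Q g v b ∈ rootFiltration Q S g v B (height b)

variable {B : NonUnitalSubalgebra V A} {b : ι → ℤ} {d e : ℤ} {i k : ι}

namespace IsCornerSubalgebra

lemma mul_mem_rootFiltration_succ (hB : IsCornerSubalgebra P Q S o g j v vs B) (hQ : IsPosDef Q)
    (hd : RootBounds P Q S o g v B d)
    (mul_sub_mem : ∀ b, IsPosRoot Q S b → height b ≤ d + 1 → coroot Q i b = 1 →
      g i * rootVector Q g v (b - simpleRoot i) - rootVector Q g v b ∈
        rootFiltration Q S g v B (height b - 1))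
    (hi : i ∈ S) {x : A} (hx : x ∈ rootFiltration Q S g v B d) :
    g i * x ∈ rootFiltration Q S g v B (d + 1) := by
  refine mul_mem_of_mem_rootFiltration (fun _ hx _ ha => rootFiltration_mul_right hx ha)
    (fun b hb hbd => ?_) hx
  rcases le_or_gt 0 (coroot Q i b) with hc | hc
  · exact rootFiltration_mono (by omega) (hd.mul_mem hb hbd hi hc)
  have hc : coroot Q i b = -1 := le_antisymm (Int.le_sub_one_of_lt hc) (hb.neg_one_le_coroot hQ i)
  have hb' := hb.add_simpleRoot hi hc
  have height_add : height (b + simpleRoot i) = height b + 1 := by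
    rw [map_add, height_simpleRoot]
  have lower := mul_sub_mem _ hb' (by omega) (by rw [map_add, hc, coroot_simpleRoot_self]; rfl)
  rw [add_sub_cancel_right, height_add, add_sub_cancel_right] at lower
  have := add_mem (rootFiltration_mono (by omega) lower)
    (hB.rootVector_mem hQ (d := d + 1) hb' (by omega))
  rwa [sub_add_cancel] at this

lemma mul_mem_rootFiltration_of_lt (hB : IsCornerSubalgebra P Q S o g j v vs B) (hQ : IsPosDef Q)
    (hd : RootBounds P Q S o g v B d) (hed : e < d) (hi : i ∈ S) {x : A}
    (hx : x ∈ rootFiltration Q S g v B e) : g i * x ∈ rootFiltration Q S g v B (e + 1) := by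
  refine hB.mul_mem_rootFiltration_succ hQ
    ⟨fun hb hbe => hd.idem_mul_mem hb (by omega), fun hb hbe => hd.mul_sub_mem hb (by omega),
      fun hb hbe => hd.mul_mem hb (by omega)⟩
    (fun b hb hbe hc => hd.mul_sub_mem hb (by omega) hc) hi hx

lemma idem_mul_mem_nodeSubmodule (hd : RootBounds P Q S o g v B d) (hi : i ∈ S) {x : A}
    (hx : x ∈ rootFiltration Q S g v B d) : P.idem o (g i) * x ∈ nodeSubmodule v B i :=
  mul_mem_of_mem_rootFiltration (fun _ hx _ ha => nodeSubmodule_mul_right hx ha)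
    (fun _ hb hbd => hd.idem_mul_mem hb hbd hi) hx

variable [Algebra V K] [IsScalarTower V K A]

lemma mul_sub_mem_rootFiltration (hB : IsCornerSubalgebra P Q S o g j v vs B) (hQ : IsPosDef Q)
    (hV : P.IsIntegral V) (hd : RootBounds P Q S o g v B d) (hb : IsPosRoot Q S b)
    (hbd : height b ≤ d + 1) (hc : coroot Q i b = 1) :
    g i * rootVector Q g v (b - simpleRoot i) - rootVector Q g v b ∈
      rootFiltration Q S g v B (height b - 1) := by
  have hi : i ∈ S := hb.mem_of_coroot_pos (hc.symm ▸ one_pos)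
  have not_simple (k : ι) : b ≠ simpleRoot k := by
    rintro rfl; exact coroot_simpleRoot_ne_one Q i k hc
  obtain ⟨k, hk, hck, hw⟩ := hb.exists_rootVector_eq hQ not_simple g v
  rw [smul_eq_mul] at hw
  have hbi := hb.sub_simpleRoot hc
  have hbk := hb.sub_simpleRoot hck
  have hti := height_sub_simpleRoot b i
  have htk := height_sub_simpleRoot b k
  have hpos := hbi.height_pos
  by_cases hik : i = k
  · rw [hik, hw, sub_self]; exact zero_mem _
  by_cases ha : Q.Adj i k
  · have b_eq := hb.eq_add_of_adj hQ ha hc hck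
    have v_mem {k} (hk : k ∈ S) : v k ∈ rootFiltration Q S g v B (height b - 1) :=
      nodeSubmodule_le_rootFiltration hk (by omega) (hB.v_mem_nodeSubmodule hk)
    have difference : g i * v k - g k * v i = P.m • v i - P.m • v k := by
      rw [hB.mul_v_of_adj hi hk ha]; abel
    rw [hw, sub_eq_of_eq_add' b_eq, sub_eq_of_eq_add b_eq, rootVector_simpleRoot,
      rootVector_simpleRoot, difference]
    exact sub_mem (smul_mem_of_mem_range hV.m_mem _ (v_mem hi))
      (smul_mem_of_mem_range hV.m_mem _ (v_mem hk))
  · have ha' : ¬ Q.Adj k i := fun h => ha h.symm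
    have lower_i := hd.mul_sub_mem hbk (by omega) ((coroot_sub_of_not_adj hik ha).trans hc)
    have lower_k :=
      hd.mul_sub_mem hbi (by omega) ((coroot_sub_of_not_adj (Ne.symm hik) ha').trans hck)
    rw [htk] at lower_i
    rw [hti, sub_right_comm b] at lower_k
    have := sub_mem (hB.mul_mem_rootFiltration_of_lt hQ hd (by omega) hk lower_i)
      (hB.mul_mem_rootFiltration_of_lt hQ hd (by omega) hi lower_k)
    rwa [mul_sub, mul_sub, hB.comm_assoc hi hk hik ha, ← hw, sub_add_cancel,
      sub_sub_sub_cancel_left] at this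

lemma mul_mem_rootFiltration (hB : IsCornerSubalgebra P Q S o g j v vs B) (hQ : IsPosDef Q)
    (hV : P.IsIntegral V) (hd : RootBounds P Q S o g v B d) (hi : i ∈ S) {x : A}
    (hx : x ∈ rootFiltration Q S g v B d) : g i * x ∈ rootFiltration Q S g v B (d + 1) :=
  hB.mul_mem_rootFiltration_succ hQ hd
    (fun _ hb hbd hc => hB.mul_sub_mem_rootFiltration hQ hV hd hb hbd hc) hi hx

lemma idem_mul_rootVector_mem_of_adj (hB : IsCornerSubalgebra P Q S o g j v vs B)
    (hQ : IsPosDef Q) (hV : P.IsIntegral V) (hd : RootBounds P Q S o g v B d)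
    (hb : IsPosRoot Q S b) (hbd : height b = d + 1) (hi : i ∈ S) (hne : b ≠ simpleRoot i)
    (hk : k ∈ S) (hck : coroot Q k b = 1) (ha : Q.Adj i k) :
    P.idem o (g i) * (g k * rootVector Q g v (b - simpleRoot k)) ∈ nodeSubmodule v B i := by
  have hbk := hb.sub_simpleRoot hck
  have htk := height_sub_simpleRoot b k
  have hpos := hbk.height_pos
  have sandwich {y} (hy : y ∈ rootFiltration Q S g v B d) :
      P.idem o (g i) * (g k * (g i * y)) ∈ nodeSubmodule v B i :=
    hB.idem_mul_mul_mul_mem hi hk ha (idem_mul_mem_nodeSubmodule hd hk hy)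
  have coroot_sub := coroot_sub_of_adj ha b
  have hle := hb.coroot_le_one hQ hne
  have hge := hb.neg_one_le_coroot hQ i
  obtain hc | hc | hc : coroot Q i b = 1 ∨ coroot Q i b = 0 ∨ coroot Q i b = -1 := by omega
  · have idem_mul : P.idem o (g i) * (g k * v i) = (P.l / P.δ) • v i := by
      rw [← (hB.transport hi).target_mul, ← mul_assoc (g k), ← mul_assoc,
        hB.idem_mul_mul_idem hi hk ha, smul_mul_assoc]
    rw [sub_eq_of_eq_add (hb.eq_add_of_adj hQ ha hc hck), rootVector_simpleRoot, idem_mul]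
    exact smul_mem_of_mem_range hV.l_div_δ_mem _ (hB.v_mem_nodeSubmodule hi)
  · have hci : coroot Q i (b - simpleRoot k) = 1 := by omega
    have hti := height_sub_simpleRoot (b - simpleRoot k) i
    have lower := idem_mul_mem_nodeSubmodule hd hi <| rootFiltration_mono (by omega) <|
      hB.mul_mem_rootFiltration_of_lt hQ hd (by omega) hk (hd.mul_sub_mem hbk (by omega) hci)
    have := sub_mem (sandwich (hB.rootVector_mem hQ (hbk.sub_simpleRoot hci) (by omega))) lower
    rwa [mul_sub, mul_sub, sub_sub_cancel] at this
  · have inv_mem : P.inv o (g i) * rootVector Q g v (b - simpleRoot k) ∈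
        rootFiltration Q S g v B d := by
      rw [Params.inv, sub_mul, add_mul, smul_mul_assoc, smul_mul_assoc,
        hB.unit_mul_rootVector hQ hbk]
      exact sub_mem (add_mem (rootFiltration_mono (by omega)
          (hd.mul_mem hbk (by omega) hi (by omega)))
          (smul_mem_of_mem_range hV.m_mem _ (hB.rootVector_mem hQ hbk (by omega))))
        (smul_mem_of_mem_range hV.m_mul_δ_mem _ (nodeSubmodule_le_rootFiltration hi (by omega)
          (hd.idem_mul_mem hbk (by omega) hi)))
    have := sandwich inv_mem
    rwa [← mul_assoc (g i), hB.mul_inv hi, hB.unit_mul_rootVector hQ hbk] at this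

lemma idem_mul_rootVector_mem (hB : IsCornerSubalgebra P Q S o g j v vs B) (hQ : IsPosDef Q)
    (hV : P.IsIntegral V) (hd : RootBounds P Q S o g v B d) (hb : IsPosRoot Q S b)
    (hbd : height b = d + 1) (not_simple : ∀ k, b ≠ simpleRoot k) (hi : i ∈ S) :
    P.idem o (g i) * rootVector Q g v b ∈ nodeSubmodule v B i := by
  obtain ⟨k, hk, hck, hw⟩ := hb.exists_rootVector_eq hQ not_simple g v
  rw [smul_eq_mul] at hw
  have lower := hd.idem_mul_mem (hb.sub_simpleRoot hck)
    (by rw [height_sub_simpleRoot, hbd, add_sub_cancel_right]) hi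
  rw [hw]
  by_cases hik : i = k
  · subst hik
    rw [← mul_assoc, hB.idem_mul hi, smul_mul_assoc]
    exact smul_mem_of_mem_range hV.inv_l_mem _ lower
  by_cases ha : Q.Adj i k
  · exact hB.idem_mul_rootVector_mem_of_adj hQ hV hd hb hbd hi (not_simple i) hk hck ha
  · rw [← mul_assoc, hB.idem_mul_comm hi hk hik ha, mul_assoc]
    exact hB.mul_mem_nodeSubmodule hi hk hik ha lower

lemma mul_rootVector_mem_of_coroot_eq_zero (hB : IsCornerSubalgebra P Q S o g j v vs B)
    (hQ : IsPosDef Q) (hV : P.IsIntegral V) (hd : RootBounds P Q S o g v B d)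
    (hb : IsPosRoot Q S b) (hbd : height b = d + 1) (not_simple : ∀ k, b ≠ simpleRoot k)
    (hi : i ∈ S) (hc : coroot Q i b = 0) :
    g i * rootVector Q g v b ∈ rootFiltration Q S g v B (d + 1) := by
  obtain ⟨k, hk, hck, hw⟩ := hb.exists_rootVector_eq hQ not_simple g v
  rw [smul_eq_mul] at hw
  have hbk := hb.sub_simpleRoot hck
  have htk := height_sub_simpleRoot b k
  have hik : i ≠ k := by rintro rfl; omega
  rw [hw]
  by_cases ha : Q.Adj i k
  · have hci : coroot Q i (b - simpleRoot k) = 1 := by rw [coroot_sub_of_adj ha, hc, zero_add]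
    have hti := height_sub_simpleRoot (b - simpleRoot k) i
    have hck' : coroot Q k (b - simpleRoot k - simpleRoot i) = 0 := by
      rw [coroot_sub_of_adj ha.symm, map_sub, coroot_simpleRoot_self, hck]; rfl
    have lower := hd.mul_sub_mem hbk (by omega) hci
    have orthogonal := hd.mul_mem (hbk.sub_simpleRoot hci) (by omega) hk hck'.ge
    have raise {e x} (he : e < d) {i k} (hi : i ∈ S) (hk : k ∈ S)
        (hx : x ∈ rootFiltration Q S g v B e) :
        g k * (g i * x) ∈ rootFiltration Q S g v B (d + 1) :=
      hB.mul_mem_rootFiltration hQ hV hd hk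
        (rootFiltration_mono (by omega) (hB.mul_mem_rootFiltration_of_lt hQ hd he hi hx))
    have := sub_mem (raise (by omega) hi hk orthogonal) (raise (by omega) hk hi lower)
    rwa [hB.braid_assoc hk hi ha.symm, mul_sub, mul_sub, sub_sub_cancel] at this
  · rw [hB.comm_assoc hi hk hik ha]
    refine hB.mul_mem_rootFiltration hQ hV hd hk
      (rootFiltration_mono (show height (b - simpleRoot k) ≤ d by omega) ?_)
    exact hd.mul_mem hbk (by omega) hi ((coroot_sub_of_not_adj hik ha).trans hc).ge

lemma mul_rootVector_mem_of_coroot_eq_one (hB : IsCornerSubalgebra P Q S o g j v vs B)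
    (hQ : IsPosDef Q) (hV : P.IsIntegral V) (hd : RootBounds P Q S o g v B d)
    (hb : IsPosRoot Q S b) (hbd : height b = d + 1) (hi : i ∈ S) (hc : coroot Q i b = 1) :
    g i * rootVector Q g v b ∈ rootFiltration Q S g v B (d + 1) := by
  have hbi := hb.sub_simpleRoot hc
  have hti := height_sub_simpleRoot b i
  have hpos := hbi.height_pos
  have hw := hB.rootVector_mem (d := d) hQ hbi (by omega)
  have lower := hB.mul_sub_mem_rootFiltration hQ hV hd hb hbd.le hc
  rw [hbd, add_sub_cancel_right] at lower
  have square : g i * (g i * rootVector Q g v (b - simpleRoot i)) ∈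
      rootFiltration Q S g v B (d + 1) := by
    rw [← mul_assoc, P.mul_self o (g i), add_mul, sub_mul, smul_mul_assoc, smul_mul_assoc,
      hB.unit_mul_rootVector hQ hbi]
    exact add_mem (sub_mem (rootFiltration_mono (by omega) hw)
        (smul_mem_of_mem_range hV.m_mem _ (hB.mul_mem_rootFiltration hQ hV hd hi hw)))
      (smul_mem_of_mem_range hV.m_mul_δ_div_l_mem _ (nodeSubmodule_le_rootFiltration hi (by omega)
        (hd.idem_mul_mem hbi (by omega) hi)))
  have := sub_mem square (hB.mul_mem_rootFiltration hQ hV hd hi lower)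
  rwa [mul_sub, sub_sub_cancel] at this

lemma mul_v_mem (hB : IsCornerSubalgebra P Q S o g j v vs B) (hV : P.IsIntegral V) (hi : i ∈ S)
    (hk : k ∈ S) (hc : 0 ≤ coroot Q i (simpleRoot k)) : g i * v k ∈ nodeSubmodule v B k := by
  by_cases hik : i = k
  · subst hik
    rw [hB.mul_v_self hi]
    exact smul_mem_of_mem_range hV.inv_l_mem _ (hB.v_mem_nodeSubmodule hi)
  have ha : ¬ Q.Adj i k := fun ha => absurd (coroot_simpleRoot_of_adj ha ▸ hc) (by decide)
  exact hB.mul_mem_nodeSubmodule hk hi (Ne.symm hik) (fun h => ha h.symm)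
    (hB.v_mem_nodeSubmodule hk)

lemma rootBounds_succ (hB : IsCornerSubalgebra P Q S o g j v vs B) (hQ : IsPosDef Q)
    (hV : P.IsIntegral V) (hS : IsConnectedOn Q S) (hd : RootBounds P Q S o g v B d) :
    RootBounds P Q S o g v B (d + 1) where
  mul_sub_mem hb hbd _ hc := hB.mul_sub_mem_rootFiltration hQ hV hd hb hbd hc
  idem_mul_mem {b} hb hbd i hi := by
    rcases hbd.lt_or_eq with hlt | hbd
    · exact hd.idem_mul_mem hb (Int.lt_add_one_iff.1 hlt) hi
    by_cases hs : ∃ k, b = simpleRoot k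
    · obtain ⟨k, rfl⟩ := hs
      rw [rootVector_simpleRoot]
      exact hB.idem_mul_v_mem hV hS hi hb.mem_of_simpleRoot
    · exact hB.idem_mul_rootVector_mem hQ hV hd hb hbd (not_exists.1 hs) hi
  mul_mem {b} hb hbd i hi hc := by
    rcases hbd.lt_or_eq with hlt | hbd
    · exact hd.mul_mem hb (Int.lt_add_one_iff.1 hlt) hi hc
    by_cases hs : ∃ k, b = simpleRoot k
    · obtain ⟨k, rfl⟩ := hs
      rw [rootVector_simpleRoot, height_simpleRoot]
      exact nodeSubmodule_le_rootFiltration hb.mem_of_simpleRoot le_rfl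
        (hB.mul_v_mem hV hi hb.mem_of_simpleRoot hc)
    rcases hc.eq_or_lt with hc | hc
    · rw [hbd]
      exact hB.mul_rootVector_mem_of_coroot_eq_zero hQ hV hd hb hbd (not_exists.1 hs) hi hc.symm
    · have hc : coroot Q i b = 1 := le_antisymm (hb.coroot_le_one hQ fun h => hs ⟨i, h⟩) hc
      rw [hbd]
      exact hB.mul_rootVector_mem_of_coroot_eq_one hQ hV hd hb hbd hi hc

lemma rootBounds (hB : IsCornerSubalgebra P Q S o g j v vs B) (hQ : IsPosDef Q)
    (hV : P.IsIntegral V) (hS : IsConnectedOn Q S) (d : ℕ) : RootBounds P Q S o g v B d := by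
  induction d with
  | zero =>
    have not_le {b} (hb : IsPosRoot Q S b) : ¬ height b ≤ ((0 : ℕ) : ℤ) := hb.height_pos.not_ge
    exact ⟨fun hb h0 => absurd h0 (not_le hb), fun hb h0 => absurd h0 (not_le hb),
      fun hb h0 => absurd h0 (not_le hb)⟩
  | succ d ih => exact_mod_cast hB.rootBounds_succ hQ hV hS ih

lemma exists_fg_leftModule (hB : IsCornerSubalgebra P Q S o g j v vs B) (hQ : IsPosDef Q)
    (hV : P.IsIntegral V) (hS : IsConnectedOn Q S) (hfg : B.toSubmodule.FG) :
    ∃ M : Submodule V A, M.FG ∧ (∀ i ∈ S, ∀ x ∈ M, g i * x ∈ M) ∧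
      (∀ i ∈ S, ∀ x ∈ M, P.idem o (g i) * x ∈ M) ∧ (∀ k ∈ S, v k ∈ M) ∧
      ∀ C : NonUnitalSubalgebra V A, B ≤ C → (∀ i ∈ S, g i ∈ C) → (∀ k ∈ S, v k ∈ C) →
        M ≤ C.toSubmodule := by
  obtain ⟨N, hN⟩ := hQ.exists_height_le S
  have hpos : (1 : ℤ) ≤ N := height_simpleRoot j ▸ hN _ (isPosRoot_simpleRoot hB.base_mem)
  have bounds := hB.rootBounds hQ hV hS N
  refine ⟨rootFiltration Q S g v B N, fg_rootFiltration hQ hfg _, fun i hi x hx => ?_,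
    fun i hi x hx => ?_, fun k hk => ?_, fun C hBC hg hv => ?_⟩
  · exact rootFiltration_le hN _ (hB.mul_mem_rootFiltration hQ hV bounds hi hx)
  · exact nodeSubmodule_le_rootFiltration hi hpos (idem_mul_mem_nodeSubmodule bounds hi hx)
  · exact nodeSubmodule_le_rootFiltration hk hpos (hB.v_mem_nodeSubmodule hk)
  · refine span_mul_le ?_
    rintro _ ⟨b, hb, -, rfl⟩ a ha
    exact C.mul_mem (hb.rootVector_induction (p := (· ∈ C)) hQ hv fun k hk _ hx =>
      C.mul_mem (hg k hk) hx) (hBC ha)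

end IsCornerSubalgebra

end RootBounds

/-! ### Finite generation of the integral form -/

section IntegralForm

universe u

variable (V : Type*) [CommRing V] {K : Type*} [Field K] {A : Type u} [Ring A] [Algebra K A]
  [Algebra V A] {ι : Type*} {Q : SimpleGraph ι} {S T : Finset ι} {P : Params K} {o : A} {g : ι → A}

/-- The `V`-form of a Birman–Murakami–Wenzl algebra with unit `o`, generated by the elements `g i`
and their idempotents. -/
def integralForm (P : Params K) (S : Finset ι) (o : A) (g : ι → A) : NonUnitalSubalgebra V A :=
  NonUnitalAlgebra.adjoin V {x | x = o ∨ ∃ i ∈ S, x = g i ∨ x = P.idem o (g i)}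

variable {V} {i : ι}

lemma unit_mem_integralForm : o ∈ integralForm V P S o g :=
  NonUnitalAlgebra.subset_adjoin V (Or.inl rfl)

lemma mem_integralForm (hi : i ∈ S) : g i ∈ integralForm V P S o g :=
  NonUnitalAlgebra.subset_adjoin V (Or.inr ⟨i, hi, Or.inl rfl⟩)

lemma idem_mem_integralForm (hi : i ∈ S) : P.idem o (g i) ∈ integralForm V P S o g :=
  NonUnitalAlgebra.subset_adjoin V (Or.inr ⟨i, hi, Or.inr rfl⟩)

lemma integralForm_le {C : NonUnitalSubalgebra V A} (unit_mem : o ∈ C) (mem : ∀ i ∈ S, g i ∈ C)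
    (idem_mem : ∀ i ∈ S, P.idem o (g i) ∈ C) : integralForm V P S o g ≤ C := by
  refine NonUnitalAlgebra.adjoin_le ?_
  rintro x (rfl | ⟨i, hi, rfl | rfl⟩)
  exacts [unit_mem, mem i hi, idem_mem i hi]

lemma integralForm_mono (hTS : T ⊆ S) : integralForm V P T o g ≤ integralForm V P S o g :=
  integralForm_le unit_mem_integralForm (fun _ hi => mem_integralForm (hTS hi))
    fun _ hi => idem_mem_integralForm (hTS hi)

lemma mul_mem_of_mem_integralForm {N : Submodule V A} (unit_mul : ∀ y ∈ N, o * y ∈ N)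
    (mul : ∀ i ∈ S, ∀ y ∈ N, g i * y ∈ N) (idem_mul : ∀ i ∈ S, ∀ y ∈ N, P.idem o (g i) * y ∈ N)
    {x y : A} (hx : x ∈ integralForm V P S o g) (hy : y ∈ N) : x * y ∈ N := by
  induction hx using NonUnitalAlgebra.adjoin_induction generalizing y with
  | mem x hx =>
    obtain rfl | ⟨i, hi, rfl | rfl⟩ := hx
    exacts [unit_mul y hy, mul i hi y hy, idem_mul i hi y hy]
  | add x x' _ _ ih ih' => rw [add_mul]; exact add_mem (ih hy) (ih' hy)
  | zero => rw [zero_mul]; exact zero_mem _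
  | mul x x' _ _ ih ih' => rw [mul_assoc]; exact ih (ih' hy)
  | smul r x _ ih => rw [smul_mul_assoc]; exact N.smul_mem r (ih hy)

lemma IsBMWSystem.unit_mul_of_mem (h : IsBMWSystem P Q S o g) {x : A}
    (hx : x ∈ integralForm V P S o g) : o * x = x := by
  induction hx using NonUnitalAlgebra.adjoin_induction with
  | mem x hx =>
    obtain rfl | ⟨i, hi, rfl | rfl⟩ := hx
    exacts [h.unit_mul_unit, h.unit_mul hi, h.unit_mul_idem hi]
  | add x y _ _ ih ih' => rw [mul_add, ih, ih']
  | zero => exact mul_zero o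
  | mul x y _ _ ih _ => rw [← mul_assoc, ih]
  | smul r x _ ih => rw [mul_smul_comm, ih]

section Opposite

lemma map_mem_of_mem_integralForm {A' : Type*} [Ring A'] [Algebra V A']
    {C : NonUnitalSubalgebra V A'} (φ : A →ₗ[V] A') (map_mul : ∀ x y, φ (x * y) = φ y * φ x)
    (map_unit : φ o ∈ C) (map : ∀ i ∈ S, φ (g i) ∈ C) (map_idem : ∀ i ∈ S, φ (P.idem o (g i)) ∈ C)
    {x : A} (hx : x ∈ integralForm V P S o g) : φ x ∈ C := by
  induction hx using NonUnitalAlgebra.adjoin_induction with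
  | mem x hx =>
    obtain rfl | ⟨i, hi, rfl | rfl⟩ := hx
    exacts [map_unit, map i hi, map_idem i hi]
  | add x y _ _ ih ih' => rw [map_add]; exact add_mem ih ih'
  | zero => rw [map_zero]; exact zero_mem _
  | mul x y _ _ ih ih' => rw [map_mul]; exact mul_mem ih' ih
  | smul r x _ ih => rw [map_smul]; exact C.toSubmodule.smul_mem r ih

lemma op_mem_integralForm {x : A} :
    MulOpposite.op x ∈ integralForm V P S (MulOpposite.op o) (fun i => MulOpposite.op (g i)) ↔
      x ∈ integralForm V P S o g := by
  refine ⟨fun hx => ?_, fun hx => ?_⟩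
  · have idem_mem (i : ι) (hi : i ∈ S) : (MulOpposite.opLinearEquiv V).symm.toLinearMap
        (P.idem (MulOpposite.op o) (MulOpposite.op (g i))) ∈ integralForm V P S o g := by
      rw [P.idem_op]; exact idem_mem_integralForm hi
    exact map_mem_of_mem_integralForm (A := Aᵐᵒᵖ) (P := P) (o := MulOpposite.op o)
      (g := fun i => MulOpposite.op (g i)) (C := integralForm V P S o g)
      (MulOpposite.opLinearEquiv V).symm.toLinearMap (fun _ _ => rfl)
      (unit_mem_integralForm (o := o)) (fun i hi => (mem_integralForm hi : g i ∈ _)) idem_mem hx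
  · have idem_mem (i : ι) (hi : i ∈ S) : MulOpposite.op (P.idem o (g i)) ∈
        integralForm V P S (MulOpposite.op o) (fun i => MulOpposite.op (g i)) := by
      rw [← P.idem_op]; exact idem_mem_integralForm hi
    have mem (i : ι) (hi : i ∈ S) : MulOpposite.op (g i) ∈
        integralForm V P S (MulOpposite.op o) (fun i => MulOpposite.op (g i)) :=
      mem_integralForm (g := fun i => MulOpposite.op (g i)) hi
    exact map_mem_of_mem_integralForm (P := P) (o := o) (g := g)
      (MulOpposite.opLinearEquiv V).toLinearMap (fun _ _ => rfl) unit_mem_integralForm mem idem_mem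
      hx

lemma IsBMWSystem.mul_unit_of_mem (h : IsBMWSystem P Q S o g) {x : A}
    (hx : x ∈ integralForm V P S o g) : x * o = x :=
  MulOpposite.op_injective (h.op.unit_mul_of_mem (op_mem_integralForm.2 hx))

end Opposite

lemma IsBMWSystem.toSubmodule_integralForm_eq (h : IsBMWSystem P Q S o g) {N : Submodule V A}
    (hN : N ≤ (integralForm V P S o g).toSubmodule) (unit_mem : o ∈ N)
    (mul : ∀ i ∈ S, ∀ y ∈ N, g i * y ∈ N) (idem_mul : ∀ i ∈ S, ∀ y ∈ N, P.idem o (g i) * y ∈ N) :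
    (integralForm V P S o g).toSubmodule = N := by
  refine le_antisymm (fun x hx => ?_) hN
  rw [← h.mul_unit_of_mem hx]
  exact mul_mem_of_mem_integralForm (fun y hy => by rwa [h.unit_mul_of_mem (hN hy)]) mul idem_mul
    hx unit_mem

lemma mul_mem_mul_of_forall {M N : Submodule V A} {c : A} (hc : ∀ x ∈ M, c * x ∈ M) {x : A}
    (hx : x ∈ M * N) : c * x ∈ M * N := by
  induction hx using Submodule.mul_induction_on' with
  | mem_mul_mem x hx y hy => rw [← mul_assoc]; exact Submodule.mul_mem_mul (hc x hx) hy
  | add x _ y _ ih ih' => rw [mul_add]; exact add_mem ih ih'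

section Connected

variable {j : ι} {v vs : ι → A}

namespace IsFrame

lemma v_mem_integralForm (h : IsFrame P Q S o g j v vs) (hS : IsConnectedOn Q S) (hi : i ∈ S) :
    v i ∈ integralForm V P S o g := by
  classical
  suffices all : S.filter (fun k => v k ∈ integralForm V P S o g) = S from
    (Finset.mem_filter.1 (all.symm ▸ hi : i ∈ S.filter _)).2
  refine hS _ (Finset.filter_subset _ _)
    ⟨j, Finset.mem_filter.2 ⟨h.base_mem, h.v_base ▸ idem_mem_integralForm h.base_mem⟩⟩
    fun p hp k hk hpk => Finset.mem_filter.2 ⟨hk, ?_⟩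
  obtain ⟨hp, v_mem⟩ := Finset.mem_filter.1 hp
  rw [h.v_eq hk hp hpk.symm]
  exact mul_mem (mem_integralForm hp) (mul_mem (mem_integralForm hk) v_mem)

lemma vs_mem_integralForm (h : IsFrame P Q S o g j v vs) (hS : IsConnectedOn Q S) (hi : i ∈ S) :
    vs i ∈ integralForm V P S o g :=
  op_mem_integralForm.1 (h.op.v_mem_integralForm hS hi)

variable [Algebra V K] [IsScalarTower V K A] [Fintype ι] [DecidableEq ι]

lemma exists_fg_left_ideal (h : IsFrame P Q S o g j v vs) (hQ : IsPosDef Q) (hV : P.IsIntegral V)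
    (hS : IsConnectedOn Q S)
    (ih : ∀ S' ⊂ S, ∀ (o' : A) (g' : ι → A), IsBMWSystem P Q S' o' g' →
      (integralForm V P S' o' g').toSubmodule.FG) :
    ∃ M : Submodule V A, M.FG ∧ M ≤ (integralForm V P S o g).toSubmodule ∧ (∀ k ∈ S, v k ∈ M) ∧
      ∀ x ∈ integralForm V P S o g, ∀ y ∈ M, x * y ∈ M := by
  obtain ⟨S', hlt, g', h', of_mem, exists_eq⟩ := h.exists_isBMWSystem_corner hQ hS
  have v_mem {k} (hk : k ∈ S) := h.v_mem_integralForm (V := V) hS hk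
  have vs_mem {k} (hk : k ∈ S) := h.vs_mem_integralForm (V := V) hS hk
  have isCorner : IsCornerSubalgebra P Q S o g j v vs (integralForm V P S' (P.idem o (g j)) g') :=
    { toIsFrame := h
      idem_mem := unit_mem_integralForm
      cornerGen_mem := fun hk hi hne ha => by
        obtain ⟨i', hi', he⟩ := exists_eq _ hk _ hi hne ha
        exact he ▸ mem_integralForm hi'
      idem_cornerGen_mem := fun hk hi hne ha => by
        obtain ⟨i', hi', he⟩ := exists_eq _ hk _ hi hne ha
        exact he ▸ idem_mem_integralForm hi' }
  have corner_le : integralForm V P S' (P.idem o (g j)) g' ≤ integralForm V P S o g := by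
    refine integralForm_le (idem_mem_integralForm h.base_mem) (fun i hi => ?_) fun i hi => ?_ <;>
      obtain ⟨k, hk, i', hi', hne, ha, he⟩ := of_mem i hi
    · rw [he, cornerGen]
      exact mul_mem (vs_mem hk) (mul_mem (mem_integralForm hi') (v_mem hk))
    · have idem_eq : P.idem (P.idem o (g j)) (g' i) = vs k * (P.idem o (g i') * v k) := by
        rw [← h.v_mul_idem_cornerGen hk hi' hne ha, ← he, ← mul_assoc, (h.transport hk).mul_left,
          h'.unit_mul_idem hi]
      rw [idem_eq]
      exact mul_mem (vs_mem hk) (mul_mem (idem_mem_integralForm hi') (v_mem hk))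
  obtain ⟨M, hM, mul, idem_mul, hv, le_of_le⟩ :=
    isCorner.exists_fg_leftModule hQ hV hS (ih S' hlt _ _ h')
  have hle := le_of_le _ corner_le (fun _ hi => mem_integralForm hi) fun _ hk => v_mem hk
  exact ⟨M, hM, hle, hv, fun x hx y hy => mul_mem_of_mem_integralForm
    (fun y hy => by rwa [h.unit_mul_of_mem (hle hy)]) mul idem_mul hx hy⟩

/- The left ideal generated by the `v k` and the right ideal generated by the `vs k` have the
two-sided ideal generated by the idempotents as their product. -/
lemma exists_fg_ideal (h : IsFrame P Q S o g j v vs) (hQ : IsPosDef Q) (hV : P.IsIntegral V)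
    (hS : IsConnectedOn Q S)
    (ih : ∀ S' ⊂ S, ∀ (o' : A) (g' : ι → A), IsBMWSystem P Q S' o' g' →
      (integralForm V P S' o' g').toSubmodule.FG)
    (ih_op : ∀ S' ⊂ S, ∀ (o' : Aᵐᵒᵖ) (g' : ι → Aᵐᵒᵖ), IsBMWSystem P Q S' o' g' →
      (integralForm V P S' o' g').toSubmodule.FG) :
    ∃ J : Submodule V A, J.FG ∧ J ≤ (integralForm V P S o g).toSubmodule ∧
      (∀ i ∈ S, ∀ x ∈ J, g i * x ∈ J) ∧
      ∀ i ∈ S, ∀ x ∈ integralForm V P S o g, P.idem o (g i) * x ∈ J := by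
  obtain ⟨M, hM, hM_le, v_mem, mul_mem_M⟩ := h.exists_fg_left_ideal hQ hV hS ih
  obtain ⟨M', hM', hM'_le, vs_mem, mul_mem_M'⟩ := h.op.exists_fg_left_ideal hQ hV hS ih_op
  set R : Submodule V A := M'.map (MulOpposite.opLinearEquiv V (M := A)).symm.toLinearMap
  refine ⟨M * R, hM.mul (hM'.map _), Submodule.mul_le.2 ?_,
    fun i hi x hx => mul_mem_mul_of_forall (mul_mem_M _ (mem_integralForm hi)) hx,
    fun i hi x hx => ?_⟩
  · rintro x hx _ ⟨y, hy, rfl⟩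
    exact (integralForm V P S o g).mul_mem (hM_le hx) (op_mem_integralForm.1 (hM'_le hy))
  · rw [← (h.transport hi).mul_right, mul_assoc]
    exact Submodule.mul_mem_mul (v_mem i hi)
      ⟨_, mul_mem_M' _ (op_mem_integralForm.2 hx) _ (vs_mem i hi), rfl⟩

lemma fg_integralForm (h : IsFrame P Q S o g j v vs) (hQ : IsPosDef Q) (hV : P.IsIntegral V)
    (hS : IsConnectedOn Q S)
    (ih : ∀ S' ⊂ S, ∀ (o' : A) (g' : ι → A), IsBMWSystem P Q S' o' g' →
      (integralForm V P S' o' g').toSubmodule.FG)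
    (ih_op : ∀ S' ⊂ S, ∀ (o' : Aᵐᵒᵖ) (g' : ι → Aᵐᵒᵖ), IsBMWSystem P Q S' o' g' →
      (integralForm V P S' o' g').toSubmodule.FG) :
    (integralForm V P S o g).toSubmodule.FG := by
  obtain ⟨J, hJ, hJ_le, mul_mem_J, idem_mul_mem⟩ := h.exists_fg_ideal hQ hV hS ih ih_op
  have quadratic (i : ι) (hi : i ∈ S) (x : A) (hx : x ∈ integralForm V P S o g) :
      g i * (g i * x) - (x - P.m • (g i * x)) ∈ J := by
    have expand : g i * (g i * x) - (x - P.m • (g i * x)) =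
        (P.m * P.δ / P.l) • (P.idem o (g i) * x) := by
      rw [← mul_assoc, P.mul_self o (g i), add_mul, sub_mul, smul_mul_assoc, smul_mul_assoc,
        h.unit_mul_of_mem hx, add_sub_cancel_left]
    rw [expand]
    exact smul_mem_of_mem_range hV.m_mul_δ_div_l_mem _ (idem_mul_mem i hi x hx)
  have mul_mem_form (i : ι) (hi : i ∈ S) (x : A) (hx : x ∈ integralForm V P S o g) :
      g i * x ∈ integralForm V P S o g := mul_mem (mem_integralForm hi) hx
  obtain ⟨W, hW, hW_le, unit_mem, mul_mem_sup⟩ :=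
    hQ.exists_fg_mul_mem_sup hV.m_mem (R := (integralForm V P S o g).toSubmodule)
      unit_mem_integralForm h.toIsBraidFamily mul_mem_form mul_mem_J quadratic
  have hle := sup_le hW_le hJ_le
  rw [h.toSubmodule_integralForm_eq hle (Submodule.mem_sup_left unit_mem) (fun i hi y hy => ?_)
    fun i hi y hy => Submodule.mem_sup_right (idem_mul_mem i hi y (hle hy))]
  · exact hW.sup hJ
  · obtain ⟨a, ha, b, hb, rfl⟩ := Submodule.mem_sup.1 hy
    rw [mul_add]
    exact add_mem (mul_mem_sup i hi a ha) (Submodule.mem_sup_right (mul_mem_J i hi b hb))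

end IsFrame

end Connected

lemma IsBMWSystem.mul_comm_of_mem {U : Finset ι} (h : IsBMWSystem P Q S o g) (hTS : T ⊆ S)
    (hUS : U ⊆ S) (comm : ∀ i ∈ T, ∀ k ∈ U, g i * g k = g k * g i) {x y : A}
    (hx : x ∈ integralForm V P T o g) (hy : y ∈ integralForm V P U o g) : x * y = y * x := by
  have le_centralizer {U : Finset ι} {c : A} (unit : c * o = o * c)
      (mul : ∀ k ∈ U, c * g k = g k * c) :
      integralForm V P U o g ≤ NonUnitalSubalgebra.centralizer V {c} := by
    refine integralForm_le ?_ (fun k hk => ?_) fun k hk => ?_ <;> rintro _ rfl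
    exacts [unit, mul k hk, P.mul_idem_of_mul_eq (mul k hk) unit]
  refine le_centralizer ?_ (fun k hk => ?_) hy x rfl
  · rw [h.mul_unit_of_mem (integralForm_mono hTS hx), h.unit_mul_of_mem (integralForm_mono hTS hx)]
  · refine (le_centralizer ?_ (fun i hi => (comm i hi k hk).symm) hx _ rfl).symm
    rw [h.mul_unit (hUS hk), h.unit_mul (hUS hk)]

lemma IsBMWSystem.fg_integralForm_of_disconnected [DecidableEq ι] (h : IsBMWSystem P Q S o g)
    (hTS : T ⊆ S) (closed : ∀ i ∈ T, ∀ k ∈ S, Q.Adj i k → k ∈ T)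
    (hT : (integralForm V P T o g).toSubmodule.FG)
    (hT' : (integralForm V P (S \ T) o g).toSubmodule.FG) :
    (integralForm V P S o g).toSubmodule.FG := by
  set B := integralForm V P T o g
  set C := integralForm V P (S \ T) o g
  have commute {x y} (hx : x ∈ C) (hy : y ∈ B) : x * y = y * x := by
    refine h.mul_comm_of_mem Finset.sdiff_subset hTS (fun i hi k hk => ?_) hx hy
    obtain ⟨hi, hiT⟩ := Finset.mem_sdiff.1 hi
    exact h.comm hi (hTS hk) (by rintro rfl; exact hiT hk) fun ha => hiT (closed k hk i hi ha.symm)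
  have mul_mem_mul {c} (hc : c ∈ B ∨ c ∈ C) (y) (hy : y ∈ B.toSubmodule * C.toSubmodule) :
      c * y ∈ B.toSubmodule * C.toSubmodule := by
    rcases hc with hc | hc
    · exact mul_mem_mul_of_forall (fun x hx => B.mul_mem hc hx) hy
    induction hy using Submodule.mul_induction_on' with
    | mem_mul_mem x hx y hy =>
      rw [← mul_assoc, commute hc hx, mul_assoc]
      exact Submodule.mul_mem_mul hx (C.mul_mem hc hy)
    | add x _ y _ ih ih' => rw [mul_add]; exact add_mem ih ih'
  have mem_or (i : ι) (hi : i ∈ S) : i ∈ T ∨ i ∈ S \ T :=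
    (em (i ∈ T)).imp_right fun hiT => Finset.mem_sdiff.2 ⟨hi, hiT⟩
  rw [h.toSubmodule_integralForm_eq (N := B.toSubmodule * C.toSubmodule) ?_ ?_
    (fun i hi => mul_mem_mul ((mem_or i hi).imp mem_integralForm mem_integralForm))
    fun i hi => mul_mem_mul ((mem_or i hi).imp idem_mem_integralForm idem_mem_integralForm)]
  · exact hT.mul hT'
  · exact Submodule.mul_le.2 fun x hx y hy => (integralForm V P S o g).mul_mem
      (integralForm_mono hTS hx) (integralForm_mono Finset.sdiff_subset hy)
  · rw [← h.unit_mul_unit]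
    exact Submodule.mul_mem_mul unit_mem_integralForm unit_mem_integralForm

lemma IsBMWSystem.fg_integralForm_empty (h : IsBMWSystem P Q ∅ o g) :
    (integralForm V P ∅ o g).toSubmodule.FG := by
  rw [h.toSubmodule_integralForm_eq (N := Submodule.span V {o})
    ((Submodule.span_singleton_le_iff_mem _ _).2 unit_mem_integralForm)
    (Submodule.mem_span_singleton_self o) (by simp) (by simp)]
  exact Submodule.fg_span_singleton _

theorem IsBMWSystem.fg_integralForm [Algebra V K] [IsScalarTower V K A] [Fintype ι]
    [DecidableEq ι] (h : IsBMWSystem P Q S o g) (hQ : IsPosDef Q) (hV : P.IsIntegral V) :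
    (integralForm V P S o g).toSubmodule.FG := by
  induction S using Finset.strongInduction generalizing A with
  | H S ih =>
    rcases S.eq_empty_or_nonempty with rfl | hne
    · exact h.fg_integralForm_empty
    by_cases hS : IsConnectedOn Q S
    · obtain ⟨j, v, vs, hF⟩ := hQ.exists_isFrame h hne hS
      exact hF.fg_integralForm hQ hV hS (fun S' hlt _ _ => ih S' hlt) fun S' hlt _ _ => ih S' hlt
    · simp only [IsConnectedOn, not_forall] at hS
      obtain ⟨T, hTS, hTne, closed, hne⟩ := hS
      exact h.fg_integralForm_of_disconnected hTS closed
        (ih T (hTS.ssubset_of_ne hne) (h.mono hTS))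
        (ih _ (Finset.sdiff_ssubset hTS hTne) (h.mono Finset.sdiff_subset))

end IntegralForm

/-! ### Positivity of the Dynkin graphs -/

section Dynkin

lemma mul_sq_add_sum_nonneg {ι : Type*} {s : Finset ι} (hs : (s : Set ι).Subsingleton) {c : ℚ}
    (hc : 0 < c) (x : ℚ) (y : ι → ℚ) :
    0 ≤ c * x ^ 2 + ∑ k ∈ s, (c⁻¹ * y k ^ 2 - 2 * (x * y k)) := by
  obtain s_empty | ⟨k, s_eq⟩ := hs.eq_empty_or_singleton
  · rw [Finset.coe_eq_empty.1 s_empty, Finset.sum_empty]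
    positivity
  · have complete : c * x ^ 2 + (c⁻¹ * y k ^ 2 - 2 * (x * y k)) = c * (x - y k / c) ^ 2 := by
      field
    rw [Finset.coe_eq_singleton.1 s_eq, Finset.sum_singleton, complete]
    positivity

section LinearOrder

variable {ι : Type*} [Fintype ι] [LinearOrder ι] {Q : SimpleGraph ι}

open scoped Classical in
lemma titsForm_self_eq_sum_lt (b : ι → ℤ) :
    titsForm Q b b = ∑ i, (2 * b i ^ 2 - 2 * ∑ k with i < k ∧ Q.Adj i k, b i * b k) := by
  have split (i : ι) : ∑ k with Q.Adj i k, b i * b k =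
      ∑ k with i < k ∧ Q.Adj i k, b i * b k + ∑ k with k < i ∧ Q.Adj k i, b k * b i := by
    simp only [Finset.sum_filter, ← Finset.sum_add_distrib]
    refine Finset.sum_congr rfl fun k _ => ?_
    obtain h | rfl | h := lt_trichotomy i k
    · simp [h, h.not_gt]
    · simp
    · simp [h, h.not_gt, Q.adj_comm, mul_comm]
  have swap : ∑ i, ∑ k with k < i ∧ Q.Adj k i, b k * b i =
      ∑ i, ∑ k with i < k ∧ Q.Adj i k, b i * b k := by
    simp only [Finset.sum_filter]
    exact Finset.sum_comm
  have term (i : ι) : b i * coroot Q i b = 2 * b i ^ 2 - ∑ k with Q.Adj i k, b i * b k := by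
    rw [coroot_apply, mul_sub, Finset.mul_sum]
    ring
  simp only [titsForm_apply, term, split, Finset.sum_sub_distrib, Finset.sum_add_distrib, swap,
    ← Finset.mul_sum]
  ring

open scoped Classical in
/- Completing the square along the edge from `i` to its unique upper neighbour `k` leaves
`c i * (b i - b k / c i) ^ 2` and costs `b k ^ 2 / c i`. -/
lemma isPosDef_of_weight (c : ι → ℚ) (c_pos : ∀ i, 0 < c i)
    (upper_unique : ∀ i j k, i < j → i < k → Q.Adj i j → Q.Adj i k → j = k)
    (weight : ∀ k, c k + ∑ i with i < k ∧ Q.Adj i k, (c i)⁻¹ ≤ 2) : IsPosDef Q := by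
  intro b hb
  let square (i : ι) : ℚ :=
    c i * b i ^ 2 + ∑ k with i < k ∧ Q.Adj i k, ((c i)⁻¹ * b k ^ 2 - 2 * (b i * b k))
  have square_nonneg (i : ι) : 0 ≤ square i := by
    refine mul_sq_add_sum_nonneg (fun j hj k hk => ?_) (c_pos i) _ (fun k => (b k : ℚ))
    simp only [Finset.coe_filter_univ, Set.mem_ofPred_eq] at hj hk
    exact upper_unique i j k hj.1 hk.1 hj.2 hk.2
  have square_pos : ∃ i, 0 < square i := by
    obtain ⟨i, hi, max⟩ := ({i | b i ≠ 0} : Finset ι).exists_max_image id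
      (by simpa [Finset.filter_nonempty_iff] using Function.ne_iff.1 hb)
    simp only [Finset.mem_filter_univ, id] at hi max
    have above (k : ι) (hk : i < k) : b k = 0 := by_contra fun h => hk.not_ge (max k h)
    refine ⟨i, ?_⟩
    simp only [square]
    rw [Finset.sum_eq_zero fun k hk => by simp [above k (Finset.mem_filter_univ k |>.1 hk).1],
      add_zero]
    have := c_pos i
    positivity
  have swap : ∑ i, ∑ k with i < k ∧ Q.Adj i k, (c i)⁻¹ * (b k : ℚ) ^ 2 =
      ∑ k, (∑ i with i < k ∧ Q.Adj i k, (c i)⁻¹) * (b k : ℚ) ^ 2 := by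
    simp only [Finset.sum_filter, Finset.sum_mul, ite_mul, zero_mul]
    exact Finset.sum_comm
  have sum_le : ∑ i, square i ≤ (titsForm Q b b : ℚ) := by
    simp only [square, titsForm_self_eq_sum_lt, Int.cast_sum, Int.cast_sub, Int.cast_mul,
      Int.cast_pow, Int.cast_ofNat, Finset.sum_add_distrib, Finset.sum_sub_distrib]
    rw [swap, ← add_sub_assoc, ← Finset.sum_add_distrib]
    simp only [← Finset.mul_sum, ← add_mul]
    refine sub_le_sub_right ?_ _
    rw [Finset.mul_sum]
    gcongr with k
    exact weight k
  obtain ⟨i, hi⟩ := square_pos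
  exact_mod_cast (Finset.sum_pos' (fun i _ => square_nonneg i) ⟨i, Finset.mem_univ i, hi⟩).trans_le
    sum_le

end LinearOrder

lemma isPosDef_of_fin_weight {n : ℕ} {Q : SimpleGraph (Fin n)} (c : ℕ → ℚ) (parent : ℕ → ℕ)
    (children : ℕ → Finset ℕ) (c_pos : ∀ i < n, 0 < c i)
    (adj : ∀ i k : Fin n, i < k → Q.Adj i k → (k : ℕ) = parent i ∧ (i : ℕ) ∈ children k)
    (children_lt : ∀ k, ∀ i ∈ children k, i < k)
    (weight : ∀ k < n, c k + ∑ i ∈ children k, (c i)⁻¹ ≤ 2) : IsPosDef Q := by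
  classical
  refine isPosDef_of_weight (fun i => c i) (fun i => c_pos i i.isLt)
    (fun i j k hij hik adj_ij adj_ik =>
      Fin.ext ((adj i j hij adj_ij).1.trans (adj i k hik adj_ik).1.symm)) fun k => ?_
  refine le_trans (add_le_add_right ?_ _) (weight k k.isLt)
  refine (Finset.sum_map _ Fin.valEmbedding fun i => (c i)⁻¹).symm.trans_le ?_
  refine Finset.sum_le_sum_of_subset_of_nonneg (fun i hi => ?_) fun i hi _ =>
    (inv_pos.2 (c_pos i ((children_lt k i hi).trans k.isLt))).le
  obtain ⟨i, -, rfl⟩ := Finset.mem_map.1 hi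
  obtain ⟨hik, adj_ik⟩ := (Finset.mem_filter_univ i).1 ((Finset.mem_map' _).1 hi)
  exact (adj i k hik adj_ik).2

theorem isPosDef_typeA (n : ℕ) : IsPosDef (typeA n) := by
  refine isPosDef_of_fin_weight (fun _ => 1) (· + 1) (fun k => Finset.Ico (k - 1) k)
    (fun _ _ => one_pos) (fun i k hik adj_ik => ?_) (fun k i hi => (Finset.mem_Ico.1 hi).2)
    fun k _ => ?_
  · simp only [typeA, SimpleGraph.fromRel_adj, Finset.mem_Ico] at adj_ik ⊢
    omega
  · rcases k <;> norm_num

theorem isPosDef_typeD (n : ℕ) : IsPosDef (typeD n) := by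
  refine isPosDef_of_fin_weight (fun i => if i < 2 then 2 else 1)
    (fun i => if i = 0 then 2 else i + 1)
    (fun k => if k < 2 then ∅ else Finset.Ico (if k = 2 then 0 else k - 1) k)
    (fun i _ => by split_ifs <;> norm_num) (fun i k hik adj_ik => ?_)
    (fun k i hi => ?_) fun k _ => ?_
  · simp only [typeD, SimpleGraph.fromRel_adj] at adj_ik
    grind
  · grind
  · match k with
    | 0 | 1 | 2 => norm_num [Finset.sum_range_succ]
    | k + 3 =>
      norm_num [show ¬ k + 3 ≤ 1 by omega, show k + 3 ≠ 2 by omega, show ¬ k + 2 ≤ 1 by omega]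

theorem isPosDef_typeE {n : ℕ} (hn : n ≤ 8) : IsPosDef (typeE n) := by
  refine isPosDef_of_fin_weight
    (fun i => if i < 2 then 2 else if i = 2 then 3 / 2 else (8 - i) / (9 - i))
    (fun i => if i = 0 then 2 else if i = 1 then 3 else i + 1)
    (fun k => if k < 2 then ∅ else if k = 2 then {0} else Finset.Ico (if k = 3 then 1 else k - 1) k)
    (fun i hi => ?_) (fun i k hik adj_ik => ?_) (fun k i hi => ?_) fun k hk => ?_
  · have : i < 8 := by omega
    interval_cases i <;> norm_num
  · simp only [typeE, SimpleGraph.fromRel_adj] at adj_ik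
    grind
  · grind
  · have : k < 8 := by omega
    interval_cases k <;> norm_num [Finset.sum_Ico_succ_top]

end Dynkin

/-! ### Idempotents permuted by a Coxeter group -/

section IdempotentAction

variable {ι : Type*} {Q : SimpleGraph ι} {G C : Type*} [Group G]
  [MonoidWithZero C] [MulDistribMulAction G C]

/-- Involutions `c i` satisfying the braid relations of `Q` act on `C`, and permute commuting
idempotents as the simple reflections permute the roots up to sign, of which the `f i` are those
attached to the simple roots. -/
structure IsIdempotentAction [Fintype ι] (Q : SimpleGraph ι) (c : ι → G) (f : ι → C) : Prop
    extends IsBraidFamily Q Finset.univ c where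
  mul_self (i : ι) : c i * c i = 1
  idem (i : ι) : IsIdempotentElem (f i)
  commute (i k : ι) : Commute (f i) (f k)
  smul_self (i : ι) : c i • f i = f i
  smul_of_not_adj {i k : ι} (hik : i ≠ k) (ha : ¬ Q.Adj i k) : c i • f k = f k
  smul_of_adj {i k : ι} (ha : Q.Adj i k) : c i • f k = c k • f i

/-- On the root vectors of `b` and `b - α_i`, the involution `c i` acts as the simple reflection
`s_i` acts on the roots: `s_i (b - α_i) = b` if the coroot `i` takes the value `1` on `b`, and
`s_i b = b` if it takes the value `0`. -/
structure IsReflectedAt [Fintype ι] [DecidableEq ι] (Q : SimpleGraph ι) (c : ι → G) (f : ι → C)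
    (b : ι → ℤ) : Prop where
  smul_sub {i : ι} (hc : coroot Q i b = 1) :
    c i • rootVector Q c f (b - simpleRoot i) = rootVector Q c f b
  smul_eq {i : ι} (hc : coroot Q i b = 0) : c i • rootVector Q c f b = rootVector Q c f b

variable [Fintype ι] {c : ι → G} {f : ι → C} {i k : ι} {b : ι → ℤ}

namespace IsIdempotentAction

lemma smul_smul_self (h : IsIdempotentAction Q c f) (i : ι) (x : C) : c i • c i • x = x := by
  rw [smul_smul, h.mul_self, one_smul]

lemma smul_smul_comm (h : IsIdempotentAction Q c f) (hik : i ≠ k) (ha : ¬ Q.Adj i k) (x : C) :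
    c i • c k • x = c k • c i • x := by
  rw [smul_smul, h.comm (Finset.mem_univ i) (Finset.mem_univ k) hik ha, mul_smul]

lemma smul_smul_smul (h : IsIdempotentAction Q c f) (ha : Q.Adj i k) (x : C) :
    c i • c k • c i • x = c k • c i • c k • x := by
  simp only [smul_smul, h.braid (Finset.mem_univ i) (Finset.mem_univ k) ha]

lemma commute_smul_iff (h : IsIdempotentAction Q c f) {x y : C} :
    Commute (c i • x) y ↔ Commute x (c i • y) := by
  have smul {x y : C} (hxy : Commute x y) : Commute (c i • x) (c i • y) :=
    hxy.map (MulDistribMulAction.toMonoidHom C (c i))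
  exact ⟨fun hxy => by simpa only [h.smul_smul_self] using smul hxy,
    fun hxy => by simpa only [h.smul_smul_self] using smul hxy⟩

variable [DecidableEq ι]

lemma isReflectedAt_simpleRoot (h : IsIdempotentAction Q c f) (k : ι) :
    IsReflectedAt Q c f (simpleRoot k) where
  smul_sub hc := absurd hc (coroot_simpleRoot_ne_one Q _ k)
  smul_eq {i} hc := by
    have hik : i ≠ k := by rintro rfl; rw [coroot_simpleRoot_self] at hc; omega
    have ha : ¬ Q.Adj i k := fun ha => by rw [coroot_simpleRoot_of_adj ha] at hc; omega
    rw [rootVector_simpleRoot, h.smul_of_not_adj hik ha]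

lemma smul_rootVector_of_coroot_eq_zero (h : IsIdempotentAction Q c f)
    (ih : ∀ b', IsPosRoot Q Finset.univ b' → height b' < height b → IsReflectedAt Q c f b')
    (hb : IsPosRoot Q Finset.univ b) (hck : coroot Q k b = 1)
    (hw : rootVector Q c f b = c k • rootVector Q c f (b - simpleRoot k))
    (hci : coroot Q i b = 0) : c i • rootVector Q c f b = rootVector Q c f b := by
  have hik : i ≠ k := by rintro rfl; omega
  have hbk := hb.sub_simpleRoot hck
  have lt := height_sub_simpleRoot_lt b k
  rw [hw]
  by_cases ha : Q.Adj i k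
  · have hci' : coroot Q i (b - simpleRoot k) = 1 := by rw [coroot_sub_of_adj ha, hci, zero_add]
    have hck' : coroot Q k (b - simpleRoot k - simpleRoot i) = 0 := by
      rw [coroot_sub_of_adj ha.symm, map_sub, coroot_simpleRoot_self, hck]; rfl
    have fixed := (ih _ (hbk.sub_simpleRoot hci')
      ((height_sub_simpleRoot_lt _ i).trans lt)).smul_eq hck'
    rw [← (ih _ hbk lt).smul_sub hci', h.smul_smul_smul ha, fixed]
  · have hci' : coroot Q i (b - simpleRoot k) = 0 := (coroot_sub_of_not_adj hik ha).trans hci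
    rw [h.smul_smul_comm hik ha, (ih _ hbk lt).smul_eq hci']

lemma smul_rootVector_sub_of_coroot_eq_one (h : IsIdempotentAction Q c f) (hQ : IsPosDef Q)
    (ih : ∀ b', IsPosRoot Q Finset.univ b' → height b' < height b → IsReflectedAt Q c f b')
    (hb : IsPosRoot Q Finset.univ b) (hck : coroot Q k b = 1)
    (hw : rootVector Q c f b = c k • rootVector Q c f (b - simpleRoot k))
    (hci : coroot Q i b = 1) :
    c i • rootVector Q c f (b - simpleRoot i) = rootVector Q c f b := by
  by_cases hik : i = k
  · rw [hik, hw]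
  by_cases ha : Q.Adj i k
  · have b_eq := hb.eq_add_of_adj hQ ha hci hck
    rw [hw, sub_eq_of_eq_add' b_eq, sub_eq_of_eq_add b_eq, rootVector_simpleRoot,
      rootVector_simpleRoot, h.smul_of_adj ha]
  · have ha' : ¬ Q.Adj k i := fun h => ha h.symm
    have hci' := (coroot_sub_of_not_adj hik ha).trans hci
    have hck' := (coroot_sub_of_not_adj (Ne.symm hik) ha').trans hck
    rw [hw, ← (ih _ (hb.sub_simpleRoot hck) (height_sub_simpleRoot_lt b k)).smul_sub hci',
      ← (ih _ (hb.sub_simpleRoot hci) (height_sub_simpleRoot_lt b i)).smul_sub hck',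
      h.smul_smul_comm hik ha, sub_right_comm]

lemma isReflectedAt (h : IsIdempotentAction Q c f) (hQ : IsPosDef Q)
    (hb : IsPosRoot Q Finset.univ b) : IsReflectedAt Q c f b := by
  refine IsPosRoot.height_induction (p := IsReflectedAt Q c f) (fun b hb ih => ?_) hb
  by_cases hs : ∃ k, b = simpleRoot k
  · obtain ⟨k, rfl⟩ := hs
    exact h.isReflectedAt_simpleRoot k
  · obtain ⟨k, -, hck, hw⟩ := hb.exists_rootVector_eq hQ (not_exists.1 hs) c f
    exact ⟨h.smul_rootVector_sub_of_coroot_eq_one hQ ih hb hck hw,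
      h.smul_rootVector_of_coroot_eq_zero ih hb hck hw⟩

lemma exists_smul_rootVector_eq_of_coroot_nonneg (h : IsIdempotentAction Q c f) (hQ : IsPosDef Q)
    (hb : IsPosRoot Q Finset.univ b) (hc : 0 ≤ coroot Q i b) :
    ∃ b', IsPosRoot Q Finset.univ b' ∧ height b' ≤ height b ∧
      c i • rootVector Q c f b = rootVector Q c f b' := by
  by_cases hs : b = simpleRoot i
  · exact ⟨b, hb, le_rfl, by rw [hs, rootVector_simpleRoot, h.smul_self]⟩
  have hle := hb.coroot_le_one hQ hs
  obtain hc | hc : coroot Q i b = 0 ∨ coroot Q i b = 1 := by omega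
  · exact ⟨b, hb, le_rfl, (h.isReflectedAt hQ hb).smul_eq hc⟩
  · exact ⟨_, hb.sub_simpleRoot hc, (height_sub_simpleRoot_lt b i).le,
      by rw [← (h.isReflectedAt hQ hb).smul_sub hc, h.smul_smul_self]⟩

lemma exists_smul_rootVector_eq (h : IsIdempotentAction Q c f) (hQ : IsPosDef Q)
    (hb : IsPosRoot Q Finset.univ b) (i : ι) :
    ∃ b', IsPosRoot Q Finset.univ b' ∧ c i • rootVector Q c f b = rootVector Q c f b' := by
  obtain hc | hc := le_or_gt 0 (coroot Q i b)
  · obtain ⟨b', hb', -, he⟩ := h.exists_smul_rootVector_eq_of_coroot_nonneg hQ hb hc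
    exact ⟨b', hb', he⟩
  have hc : coroot Q i b = -1 := by have := hb.neg_one_le_coroot hQ i; omega
  have hbi := hb.add_simpleRoot (Finset.mem_univ i) hc
  have hci : coroot Q i (b + simpleRoot i) = 1 := by
    rw [map_add, coroot_simpleRoot_self, hc]; rfl
  refine ⟨_, hbi, ?_⟩
  rw [← (h.isReflectedAt hQ hbi).smul_sub hci, add_sub_cancel_right]

lemma isIdempotentElem_rootVector (h : IsIdempotentAction Q c f) (hQ : IsPosDef Q)
    (hb : IsPosRoot Q Finset.univ b) : IsIdempotentElem (rootVector Q c f b) :=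
  hb.rootVector_induction hQ (fun k _ => h.idem k)
    fun k _ _ hx => hx.map (MulDistribMulAction.toMonoidHom C (c k))

lemma commute_rootVector_right (h : IsIdempotentAction Q c f) (hQ : IsPosDef Q)
    (hb : IsPosRoot Q Finset.univ b) (i : ι) : Commute (f i) (rootVector Q c f b) := by
  refine IsPosRoot.height_induction (p := fun b => ∀ i, Commute (f i) (rootVector Q c f b))
    (fun b hb ih i => ?_) hb i
  by_cases hs : ∃ k, b = simpleRoot k
  · obtain ⟨k, rfl⟩ := hs
    rw [rootVector_simpleRoot]
    exact h.commute i k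
  obtain ⟨k, -, hck, hw⟩ := hb.exists_rootVector_eq hQ (not_exists.1 hs) c f
  have hbk := hb.sub_simpleRoot hck
  have lt := height_sub_simpleRoot_lt b k
  rw [hw, ← h.commute_smul_iff]
  by_cases ha : Q.Adj k i
  · have hc : 0 ≤ coroot Q i (b - simpleRoot k) := by
      have := hb.neg_one_le_coroot hQ i
      rw [coroot_sub_of_adj ha.symm]; omega
    obtain ⟨b', hb', le, he⟩ := h.exists_smul_rootVector_eq_of_coroot_nonneg hQ hbk hc
    rw [h.smul_of_adj ha, h.commute_smul_iff, he]
    exact ih b' hb' (le.trans_lt lt) k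
  · have fixed : c k • f i = f i := by
      by_cases hki : k = i
      · rw [hki, h.smul_self]
      · exact h.smul_of_not_adj hki ha
    rw [fixed]
    exact ih _ hbk lt i

lemma commute_rootVector (h : IsIdempotentAction Q c f) (hQ : IsPosDef Q) {a : ι → ℤ}
    (ha : IsPosRoot Q Finset.univ a) (hb : IsPosRoot Q Finset.univ b) :
    Commute (rootVector Q c f a) (rootVector Q c f b) := by
  refine ha.rootVector_induction hQ
    (p := fun x => ∀ b, IsPosRoot Q Finset.univ b → Commute x (rootVector Q c f b))
    (fun k _ b hb => h.commute_rootVector_right hQ hb k) (fun k _ x hx b hb => ?_) b hb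
  obtain ⟨b', hb', he⟩ := h.exists_smul_rootVector_eq hQ hb k
  rw [h.commute_smul_iff, he]
  exact hx b' hb'

end IsIdempotentAction

end IdempotentAction

/-! ### Algebras generated by finite groups of units -/

section FiniteGroup

variable {G : Type*} [Group G]

lemma finite_closure_of_commute {s : Set G} (hs : s.Finite)
    (comm : ∀ x ∈ s, ∀ y ∈ s, x * y = y * x) (tors : ∀ x ∈ s, IsOfFinOrder x) :
    Finite (Subgroup.closure s) := by
  let : CommGroup (Subgroup.closure s) :=
    { mul_comm := (Subgroup.isMulCommutative_closure comm).is_comm.comm }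
  have : Finite s := hs
  have : Group.FG (Subgroup.closure s) := Group.closure_finite_fg s
  have torsion_eq_top : CommGroup.torsion (Subgroup.closure s) = ⊤ := by
    rw [eq_top_iff, ← Subgroup.closure_closure_coe_preimage, Subgroup.closure_le]
    exact fun x hx => Submonoid.isOfFinOrder_coe.1 (tors x hx)
  exact CommGroup.finite_of_fg_isMulTorsion _ fun x =>
    (CommGroup.mem_torsion x).1 (torsion_eq_top ▸ Subgroup.mem_top x)

open scoped Pointwise in
lemma finite_closure_of_mul_mem {s W : Set G} (hW : W.Finite) (one_mem : 1 ∈ W)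
    (mul_mem : ∀ x ∈ s, ∀ w ∈ W, x * w ∈ W) : Finite (Subgroup.closure s) := by
  have le_stabilizer : Subgroup.closure s ≤ MulAction.stabilizer G W := by
    refine (Subgroup.closure_le _).2 fun x hx => ?_
    rw [SetLike.mem_coe, MulAction.mem_stabilizer_set_iff_smul_set_subset hW]
    rintro _ ⟨w, hw, rfl⟩
    exact mul_mem x hx w hw
  refine hW.subset fun x hx => ?_
  have : x • (1 : G) ∈ x • W := Set.smul_mem_smul_set one_mem
  rwa [MulAction.mem_stabilizer_iff.1 (le_stabilizer hx), smul_eq_mul, mul_one] at this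

open scoped Pointwise in
lemma finite_closure_union {s T W : Set G} (hT : Finite (Subgroup.closure T))
    (conj_mem : ∀ x ∈ s, ∀ t ∈ T, x * t * x⁻¹ ∈ T) (hW : W.Finite) (one_mem : 1 ∈ W)
    (mul_mem : ∀ x ∈ s, ∀ w ∈ W, x * w ∈ W) : Finite (Subgroup.closure (s ∪ T)) := by
  have conj_mem_closure (x : G) (hx : x ∈ s) (t : G) (ht : t ∈ Subgroup.closure T) :
      x * t * x⁻¹ ∈ Subgroup.closure T := by
    have : Subgroup.closure T ≤ (Subgroup.closure T).comap (MulAut.conj x).toMonoidHom :=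
      (Subgroup.closure_le _).2 fun t ht => Subgroup.subset_closure (conj_mem x hx t ht)
    exact this ht
  refine finite_closure_of_mul_mem (W := (Subgroup.closure T : Set G) * W)
    (Set.Finite.mul hT hW) ⟨1, Subgroup.one_mem _, 1, one_mem, one_mul 1⟩ ?_
  rintro x (hx | hx) _ ⟨t, ht, w, hw, rfl⟩
  · exact ⟨_, conj_mem_closure x hx t ht, _, mul_mem x hx w hw, by group⟩
  · exact ⟨_, Subgroup.mul_mem _ (Subgroup.subset_closure hx) ht, w, hw, mul_assoc _ _ _⟩

lemma isSemisimpleRing_of_adjoin_units_eq_top {k C : Type*} [Field k] [CharZero k] [Ring C]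
    [Algebra k C] (Γ : Subgroup Cˣ) [Finite Γ]
    (htop : Algebra.adjoin k (Units.val '' (Γ : Set Cˣ)) = ⊤) : IsSemisimpleRing C := by
  let ψ : MonoidAlgebra k Γ →ₐ[k] C := MonoidAlgebra.lift k C Γ ((Units.coeHom C).comp Γ.subtype)
  have surjective : Function.Surjective ψ := by
    rw [← AlgHom.range_eq_top, eq_top_iff, ← htop, Algebra.adjoin_le_iff]
    rintro _ ⟨x, hx, rfl⟩
    exact ⟨MonoidAlgebra.of k Γ ⟨x, hx⟩, by simp [ψ]⟩
  have : NeZero (Nat.card Γ : k) := ⟨Nat.cast_ne_zero.2 Nat.card_pos.ne'⟩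
  exact RingHom.isSemisimpleRing_of_surjective ψ.toRingHom surjective

end FiniteGroup

/-! ### Semisimplicity of the special fibre -/

section SpecialFibre

variable {ι : Type*} [Fintype ι] {Q : SimpleGraph ι} {C : Type*} [Ring C] {g f : ι → C}

/-- The relations of the images `g i` and `f i` of the generators of the integral form and of their
idempotents in the special fibre. -/
structure IsSpecialFibre (Q : SimpleGraph ι) (g f : ι → C) : Prop
    extends IsBraidFamily Q Finset.univ g where
  mul_self (i : ι) : g i * g i = 1
  idem (i : ι) : IsIdempotentElem (f i)
  commute (i k : ι) : Commute (f i) (f k)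
  mul_idem (i : ι) : g i * f i = f i
  idem_mul (i : ι) : f i * g i = f i
  mul_idem_comm {i k : ι} (hik : i ≠ k) (ha : ¬ Q.Adj i k) : g i * f k = f k * g i
  mul_mul_idem {i k : ι} (ha : Q.Adj i k) : g i * (g k * f i) = f k * (g i * g k)

lemma one_sub_two_mul_mul_self {φ : C} (hφ : IsIdempotentElem φ) :
    (1 - 2 * φ) * (1 - 2 * φ) = 1 := by
  rw [show (1 - 2 * φ) * (1 - 2 * φ) = 1 - 4 * φ + 4 * (φ * φ) by noncomm_ring, hφ.eq,
    sub_add_cancel]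

namespace IsSpecialFibre

/-- The generator `g i` of the special fibre as a unit. -/
def unit (h : IsSpecialFibre Q g f) (i : ι) : Cˣ := ⟨g i, g i, h.mul_self i, h.mul_self i⟩

lemma unit_mul_self (h : IsSpecialFibre Q g f) (i : ι) : h.unit i * h.unit i = 1 :=
  Units.ext (h.mul_self i)

lemma isBraidFamily_unit (h : IsSpecialFibre Q g f) : IsBraidFamily Q Finset.univ h.unit where
  comm hi hk hik ha := Units.ext (h.comm hi hk hik ha)
  braid hi hk ha := Units.ext (h.braid hi hk ha)

lemma toConjAct_unit_smul (h : IsSpecialFibre Q g f) (i : ι) (x : C) :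
    ConjAct.toConjAct (h.unit i) • x = g i * x * g i := rfl

lemma isIdempotentAction (h : IsSpecialFibre Q g f) :
    IsIdempotentAction Q (fun i => ConjAct.toConjAct (h.unit i)) f where
  comm hi hk hik ha := congrArg ConjAct.toConjAct (h.isBraidFamily_unit.comm hi hk hik ha)
  braid hi hk ha := congrArg ConjAct.toConjAct (h.isBraidFamily_unit.braid hi hk ha)
  mul_self i := congrArg ConjAct.toConjAct (h.unit_mul_self i)
  idem := h.idem
  commute := h.commute
  smul_self i := by rw [toConjAct_unit_smul, h.mul_idem, h.idem_mul]
  smul_of_not_adj hik ha := by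
    rw [toConjAct_unit_smul, h.mul_idem_comm hik ha, mul_assoc, h.mul_self, mul_one]
  smul_of_adj {i k} ha := by
    have conj : g k * g i * f k = f i * g k * g i := by
      rw [mul_assoc, h.mul_mul_idem ha.symm, mul_assoc]
    calc g i * f k * g i = g k * g k * (g i * f k * g i) := by rw [h.mul_self, one_mul]
      _ = g k * (g k * g i * f k) * g i := by simp only [mul_assoc]
      _ = g k * f i * g k * (g i * g i) := by rw [conj]; simp only [mul_assoc]
      _ = g k * f i * g k := by rw [h.mul_self, mul_one]

variable [DecidableEq ι]

/-- The idempotent of the special fibre attached to the positive root `b`. -/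
noncomputable def rootIdem (h : IsSpecialFibre Q g f) (b : ι → ℤ) : C :=
  rootVector Q (fun i => ConjAct.toConjAct (h.unit i)) f b

/-- The involutive units `1 - 2 φ`, for the idempotents `φ` attached to the positive roots. -/
def rootInvolutions (h : IsSpecialFibre Q g f) : Set Cˣ :=
  {t | ∃ b, IsPosRoot Q Finset.univ b ∧ (t : C) = 1 - 2 * h.rootIdem b}

lemma finite_rootInvolutions (h : IsSpecialFibre Q g f) (hQ : IsPosDef Q) :
    h.rootInvolutions.Finite := by
  refine Set.Finite.of_finite_image (f := Units.val) ?_ Units.val_injective.injOn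
  refine ((hQ.finite_titsForm_eq 2).image fun b => 1 - 2 * h.rootIdem b).subset ?_
  rintro _ ⟨t, ⟨b, hb, he⟩, rfl⟩
  exact ⟨b, hb.norm, he.symm⟩

lemma exists_mem_rootInvolutions (h : IsSpecialFibre Q g f) (i : ι) :
    ∃ t ∈ h.rootInvolutions, (t : C) = 1 - 2 * f i :=
  have sq := one_sub_two_mul_mul_self (h.idem i)
  ⟨⟨1 - 2 * f i, 1 - 2 * f i, sq, sq⟩,
    ⟨simpleRoot i, isPosRoot_simpleRoot (Finset.mem_univ i), by
      rw [rootIdem, rootVector_simpleRoot]⟩, rfl⟩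

lemma isOfFinOrder_of_mem_rootInvolutions (h : IsSpecialFibre Q g f) (hQ : IsPosDef Q) {t : Cˣ}
    (ht : t ∈ h.rootInvolutions) : IsOfFinOrder t := by
  obtain ⟨b, hb, hb'⟩ := ht
  refine isOfFinOrder_iff_pow_eq_one.2 ⟨2, two_pos, Units.ext ?_⟩
  rw [pow_two, Units.val_mul, hb']
  exact one_sub_two_mul_mul_self (h.isIdempotentAction.isIdempotentElem_rootVector hQ hb)

lemma mul_comm_of_mem_rootInvolutions (h : IsSpecialFibre Q g f) (hQ : IsPosDef Q) {t u : Cˣ}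
    (ht : t ∈ h.rootInvolutions) (hu : u ∈ h.rootInvolutions) : t * u = u * t := by
  obtain ⟨a, ha, ha'⟩ := ht
  obtain ⟨b, hb, hb'⟩ := hu
  have comm : Commute (h.rootIdem a) (h.rootIdem b) :=
    h.isIdempotentAction.commute_rootVector hQ ha hb
  have comm' : Commute (1 - 2 * h.rootIdem a) (1 - 2 * h.rootIdem b) :=
    ((Commute.one_left _).sub_left (((Commute.ofNat_left 2 _)).mul_left
      ((Commute.one_right _).sub_right ((Commute.ofNat_right _ 2).mul_right comm))))
  exact Units.ext (by rw [Units.val_mul, Units.val_mul, ha', hb', comm'.eq])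

lemma conj_mem_rootInvolutions (h : IsSpecialFibre Q g f) (hQ : IsPosDef Q) (i : ι) {t : Cˣ}
    (ht : t ∈ h.rootInvolutions) : h.unit i * t * (h.unit i)⁻¹ ∈ h.rootInvolutions := by
  obtain ⟨b, hb, hb'⟩ := ht
  obtain ⟨b', hpos, he⟩ := h.isIdempotentAction.exists_smul_rootVector_eq hQ hb i
  rw [toConjAct_unit_smul] at he
  refine ⟨b', hpos, ?_⟩
  calc g i * t * g i = g i * g i - 2 * (g i * h.rootIdem b * g i) := by rw [hb']; noncomm_ring
    _ = 1 - 2 * h.rootIdem b' := by rw [h.mul_self, rootIdem, rootIdem, he]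

lemma finite_closure (h : IsSpecialFibre Q g f) (hQ : IsPosDef Q) :
    Finite (Subgroup.closure (Set.range h.unit ∪ h.rootInvolutions)) := by
  obtain ⟨W, hW, one_mem, mul_mem⟩ :=
    hQ.exists_finite_closed h.isBraidFamily_unit fun i _ => h.unit_mul_self i
  refine finite_closure_union (finite_closure_of_commute (h.finite_rootInvolutions hQ)
    (fun t ht u hu => h.mul_comm_of_mem_rootInvolutions hQ ht hu)
    fun t ht => h.isOfFinOrder_of_mem_rootInvolutions hQ ht) ?_ hW one_mem ?_
  · rintro _ ⟨i, rfl⟩ t ht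
    exact h.conj_mem_rootInvolutions hQ i ht
  · rintro _ ⟨i, rfl⟩ w hw
    exact mul_mem i (Finset.mem_univ i) w hw

theorem isSemisimpleRing (h : IsSpecialFibre Q g f) (hQ : IsPosDef Q) {k : Type*} [Field k]
    [CharZero k] [Algebra k C] (htop : Algebra.adjoin k (Set.range g ∪ Set.range f) = ⊤) :
    IsSemisimpleRing C := by
  have := h.finite_closure hQ
  let Γ := Subgroup.closure (Set.range h.unit ∪ h.rootInvolutions)
  let T := Algebra.adjoin k (Units.val '' (Γ : Set Cˣ))
  suffices Set.range g ∪ Set.range f ⊆ T from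
    isSemisimpleRing_of_adjoin_units_eq_top (k := k) Γ
      (top_unique (htop.symm.trans_le (Algebra.adjoin_le this)))
  have val_mem {x : Cˣ} (hx : x ∈ Set.range h.unit ∪ h.rootInvolutions) : (x : C) ∈ T :=
    Algebra.subset_adjoin ⟨x, Subgroup.subset_closure hx, rfl⟩
  rintro _ (⟨i, rfl⟩ | ⟨i, rfl⟩)
  · exact val_mem (Or.inl ⟨i, rfl⟩)
  · obtain ⟨t, ht, he⟩ := h.exists_mem_rootInvolutions i
    have f_eq : f i = (2⁻¹ : k) • (1 - (t : C)) := by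
      rw [he, sub_sub_cancel, two_mul, ← two_smul k, inv_smul_smul₀ two_ne_zero]
    rw [f_eq]
    exact T.smul_mem (T.sub_mem T.one_mem (val_mem (Or.inr ht))) _

end IsSpecialFibre

end SpecialFibre

/-! ### Lifting semisimplicity from the special fibre -/

section Lift

open TensorProduct

lemma map_eq_zero_of_isNilpotent_mul {R C : Type*} [Ring R] [Ring C] [IsSemisimpleRing C]
    {φ : R →+* C} (hφ : Function.Surjective φ) {x : R} (hx : ∀ y, IsNilpotent (y * x)) :
    φ x = 0 := by
  have mem_jacobson : x ∈ Ring.jacobson R := by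
    rw [← Ideal.jacobson_bot, Ideal.mem_jacobson_iff]
    intro y
    obtain ⟨u, hu⟩ := (hx y).isUnit_one_add
    refine ⟨↑u⁻¹, Ideal.mem_bot.2 ?_⟩
    rw [mul_assoc, ← mul_add_one, add_comm, ← hu, Units.inv_mul, sub_self]
  have : RingHomSurjective φ := ⟨hφ⟩
  have map_mem : φ x ∈ Ring.jacobson C := Ring.le_comap_jacobson φ mem_jacobson
  rwa [IsSemisimpleRing.jacobson_eq_bot] at map_mem

lemma isNilpotent_of_mem_jacobson {R : Type*} [Ring R] [IsArtinianRing R] {x : R}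
    (hx : x ∈ Ring.jacobson R) : IsNilpotent x := by
  obtain ⟨N, hN⟩ := IsSemiprimaryRing.isNilpotent (R := R)
  have mem := Ideal.pow_mem_pow hx N
  rw [hN] at mem
  exact ⟨N, mem⟩

variable {V : Type*} [CommRing V] [IsDomain V] [ValuationRing V]

lemma exists_eq_smul_repr_eq_one {ι M : Type*} [Finite ι] [AddCommGroup M] [Module V M]
    (b : Module.Basis ι V M) {x : M} (hx : x ≠ 0) :
    ∃ (a : V) (y : M) (i : ι), a ≠ 0 ∧ x = a • y ∧ b.repr y i = 1 := by
  cases nonempty_fintype ι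
  have directed : Directed (fun a c : V => c ∣ a) (b.repr x) := fun i j =>
    (ValuationRing.dvd_total (b.repr x i) (b.repr x j)).elim
      (fun h => ⟨i, dvd_rfl, h⟩) fun h => ⟨j, h, dvd_rfl⟩
  have : IsTrans V fun a c => c ∣ a := ⟨fun _ _ _ h h' => h'.trans h⟩
  obtain ⟨j, hj⟩ : ∃ j, b.repr x j ≠ 0 := by
    by_contra! h
    exact hx (b.repr.map_eq_zero_iff.1 (Finsupp.ext h))
  have : Nonempty ι := ⟨j⟩
  obtain ⟨i, hi⟩ := directed.finset_le Finset.univ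
  choose q hq using fun j => hi j (Finset.mem_univ j)
  have ha : b.repr x i ≠ 0 := fun h => hj (zero_dvd_iff.1 (h ▸ hi j (Finset.mem_univ j)))
  refine ⟨b.repr x i, ∑ j, q j • b j, i, ha, ?_, ?_⟩
  · rw [Finset.smul_sum]
    conv_lhs => rw [← b.sum_repr x]
    exact Finset.sum_congr rfl fun j _ => by rw [smul_smul, ← hq]
  · rw [b.repr_sum_self]
    exact mul_left_cancel₀ ha (by rw [mul_one, ← hq])

lemma free_of_finite_of_isTorsionFree (M : Type*) [AddCommGroup M] [Module V M]
    [Module.Finite V M] [Module.IsTorsionFree V M] : Module.Free V M := by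
  have : Module.Flat V M := by
    rwa [Module.Flat.flat_iff_torsion_eq_bot_of_isBezout,
      ← Submodule.isTorsionFree_iff_torsion_eq_bot]
  exact Module.free_of_flat_of_isLocalRing

/-- The reduction of a `V`-algebra `R` to its special fibre. -/
noncomputable abbrev reduction (V R : Type*) [CommRing V] [IsLocalRing V] [Ring R] [Algebra V R] :
    R →ₐ[V] IsLocalRing.ResidueField V ⊗[V] R :=
  Algebra.TensorProduct.includeRight

lemma reduction_surjective (V R : Type*) [CommRing V] [IsLocalRing V] [Ring R] [Algebra V R] :
    Function.Surjective (reduction V R) :=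
  Algebra.TensorProduct.includeRight_surjective _ IsLocalRing.residue_surjective

lemma reduction_ne_zero_of_repr_eq_one {ι R : Type*} [Ring R] [Algebra V R]
    (b : Module.Basis ι V R) {y : R} {i : ι} (hy : b.repr y i = 1) : reduction V R y ≠ 0 := by
  intro h
  have repr_eq := Algebra.TensorProduct.basis_repr_tmul (A := IsLocalRing.ResidueField V) b 1 y
  rw [← Algebra.TensorProduct.includeRight_apply, h, map_zero] at repr_eq
  simpa [hy] using DFunLike.congr_fun repr_eq i

variable {K : Type*} [Field K] [Algebra V K] [IsFractionRing V K]
variable {B : Type*} [Ring B] [Algebra K B] [Algebra V B] [IsScalarTower V K B]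
  {R : Subalgebra V B}

lemma reduction_eq_zero_of_mem_jacobson [IsArtinianRing B]
    [IsSemisimpleRing (IsLocalRing.ResidueField V ⊗[V] R)] {x : R}
    (hx : (x : B) ∈ Ring.jacobson B) : reduction V R x = 0 := by
  refine map_eq_zero_of_isNilpotent_mul (φ := (reduction V R).toRingHom)
    (reduction_surjective V R) fun y => ?_
  rw [← IsNilpotent.map_iff (f := R.val) Subtype.val_injective, map_mul]
  exact isNilpotent_of_mem_jacobson (Ideal.mul_mem_left _ _ hx)

/- A nonzero element of the radical of `B` has a `K`-multiple in `R` with a coordinate `1` in a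
`V`-basis of `R`. It would be nonzero in the special fibre, and in its radical. -/
theorem isSemisimpleRing_of_residueField_tensorProduct (hfg : (Subalgebra.toSubmodule R).FG)
    (hspan : Submodule.span K (R : Set B) = ⊤)
    [IsSemisimpleRing (IsLocalRing.ResidueField V ⊗[V] R)] : IsSemisimpleRing B := by
  have : Module.IsTorsionFree V B := Module.IsTorsionFree.trans_faithfulSMul V K B
  have : Module.Finite V R := Module.Finite.iff_fg.2 hfg
  have := free_of_finite_of_isTorsionFree (V := V) R
  have : Module.Finite K B := by
    obtain ⟨s, hs⟩ := hfg
    refine ⟨s, top_unique (hspan.symm.trans_le (Submodule.span_le.2 fun x hx => ?_))⟩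
    exact Submodule.span_le_restrictScalars V K _ (hs.symm.le hx)
  have : IsArtinianRing B := IsArtinianRing.of_finite K B
  rw [IsArtinianRing.isSemisimpleRing_iff_jacobson, Submodule.eq_bot_iff]
  intro x hx
  by_contra hne
  obtain ⟨v, hv⟩ := multiple_mem_span_of_mem_localization_span (nonZeroDivisors V) K (R : Set B) x
    (hspan ▸ Submodule.mem_top)
  rw [← Subalgebra.coe_toSubmodule, Submodule.span_eq] at hv
  have ne_zero : (⟨v • x, hv⟩ : R) ≠ 0 := fun h =>
    smul_ne_zero (nonZeroDivisors.ne_zero v.2) hne (congrArg Subtype.val h)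
  obtain ⟨a, y, i, ha, hy, hi⟩ :=
    exists_eq_smul_repr_eq_one (Module.Free.chooseBasis V R) ne_zero
  have hy : v • x = algebraMap V K a • (y : B) := by
    rw [algebraMap_smul]; exact congrArg Subtype.val hy
  have ha : algebraMap V K a ≠ 0 := by simpa using ha
  refine reduction_ne_zero_of_repr_eq_one _ hi (reduction_eq_zero_of_mem_jacobson ?_)
  rw [← inv_smul_smul₀ ha (y : B), ← hy, Submonoid.smul_def, ← algebraMap_smul K]
  exact Submodule.smul_of_tower_mem _ _ (Submodule.smul_of_tower_mem _ _ hx)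

end Lift

/-! ### The special fibre of the integral form -/

section Fibre

open TensorProduct

variable (V : Type*) [CommRing V] [IsLocalRing V] {K : Type*} [Field K] [Algebra V K]

/-- At the closed point of `V`, the parameters `P` degenerate to `l = 1`, `m = 0`, `m δ = 0` and
`δ = ∞`. -/
structure Params.IsDegenerate (P : Params K) : Prop where
  l_mem : P.l ∈ (algebraMap V K).range
  inv_l_sub_one_mem : P.l⁻¹ - 1 ∈ algebraMap V K '' IsLocalRing.maximalIdeal V
  m_mul_δ_mem : P.m * P.δ ∈ algebraMap V K '' IsLocalRing.maximalIdeal V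
  inv_δ_mem : P.δ⁻¹ ∈ algebraMap V K '' IsLocalRing.maximalIdeal V

variable {V} {P : Params K}

namespace Params.IsDegenerate

lemma mul_mem_image_maximalIdeal {a b : K} (ha : a ∈ algebraMap V K '' IsLocalRing.maximalIdeal V)
    (hb : b ∈ (algebraMap V K).range) : a * b ∈ algebraMap V K '' IsLocalRing.maximalIdeal V := by
  obtain ⟨v, hv, rfl⟩ := ha
  obtain ⟨w, rfl⟩ := hb
  exact ⟨v * w, Ideal.mul_mem_right _ _ hv, map_mul _ _ _⟩

lemma inv_l_mem (h : P.IsDegenerate V) : P.l⁻¹ ∈ (algebraMap V K).range := by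
  simpa using add_mem (Set.image_subset_range _ _ h.inv_l_sub_one_mem)
    (one_mem (algebraMap V K).range)

lemma m_mem (h : P.IsDegenerate V) : P.m ∈ algebraMap V K '' IsLocalRing.maximalIdeal V := by
  rw [← mul_inv_cancel_right₀ P.δ_ne_zero P.m]
  exact mul_mem_image_maximalIdeal h.m_mul_δ_mem (Set.image_subset_range _ _ h.inv_δ_mem)

lemma m_mul_δ_div_l_mem (h : P.IsDegenerate V) :
    P.m * P.δ / P.l ∈ algebraMap V K '' IsLocalRing.maximalIdeal V := by
  rw [div_eq_mul_inv]
  exact mul_mem_image_maximalIdeal h.m_mul_δ_mem h.inv_l_mem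

lemma isIntegral (h : P.IsDegenerate V) : P.IsIntegral V where
  l_mem := h.l_mem
  inv_l_mem := h.inv_l_mem
  m_mem := Set.image_subset_range _ _ h.m_mem
  m_mul_δ_mem := Set.image_subset_range _ _ h.m_mul_δ_mem
  inv_δ_mem := Set.image_subset_range _ _ h.inv_δ_mem

end Params.IsDegenerate

variable {B : Type*} [Ring B] [Algebra K B] [Algebra V B] [IsScalarTower V K B]

lemma reduction_eq_zero {R : Subalgebra V B} {c : K}
    (hc : c ∈ algebraMap V K '' IsLocalRing.maximalIdeal V) {x y : R} (h : (x : B) = c • (y : B)) :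
    reduction V R x = 0 := by
  obtain ⟨v, hv, rfl⟩ := hc
  obtain rfl : x = v • y := Subtype.ext (by rw [h, algebraMap_smul]; rfl)
  have residue_eq_zero : v • (1 : IsLocalRing.ResidueField V) = 0 := by
    rw [Algebra.smul_def, mul_one]
    exact (IsLocalRing.residue_eq_zero_iff v).2 hv
  rw [Algebra.TensorProduct.includeRight_apply, ← TensorProduct.smul_tmul, residue_eq_zero,
    TensorProduct.zero_tmul]

lemma reduction_eq {R : Subalgebra V B} {c : K}
    (hc : c - 1 ∈ algebraMap V K '' IsLocalRing.maximalIdeal V) {x y : R}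
    (h : (x : B) = c • (y : B)) : reduction V R x = reduction V R y := by
  rw [← sub_eq_zero, ← map_sub]
  refine reduction_eq_zero hc (y := y) ?_
  rw [sub_smul, one_smul, ← h]
  rfl

variable {ι : Type*} [Fintype ι]

/-- The integral form of a Birman–Murakami–Wenzl algebra with unit `1`, as a unital subalgebra. -/
def unitalIntegralForm (V : Type*) [CommRing V] [Algebra V B] (P : Params K) (g : ι → B) :
    Subalgebra V B :=
  (integralForm V P Finset.univ 1 g).toSubalgebra unit_mem_integralForm

variable {g : ι → B}

/-- The generator `g i` of the unital integral form. -/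
def integralGen (V : Type*) [CommRing V] [Algebra V B] (P : Params K) (g : ι → B) (i : ι) :
    unitalIntegralForm V P g :=
  ⟨g i, mem_integralForm (Finset.mem_univ i)⟩

/-- The idempotent of the unital integral form attached to `g i`. -/
def integralIdem (V : Type*) [CommRing V] [Algebra V B] (P : Params K) (g : ι → B) (i : ι) :
    unitalIntegralForm V P g :=
  ⟨P.idem 1 (g i), idem_mem_integralForm (Finset.mem_univ i)⟩

variable {Q : SimpleGraph ι} {i k : ι}

lemma reduction_integralGen_mul_self (hP : P.IsDegenerate V) (i : ι) :
    reduction V _ (integralGen V P g i) * reduction V _ (integralGen V P g i) = 1 := by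
  rw [← sub_eq_zero, ← map_mul, ← map_one (reduction V _), ← map_sub]
  obtain ⟨a, ha, ha'⟩ := hP.m_mem
  obtain ⟨b, hb, hb'⟩ := hP.m_mul_δ_div_l_mem
  have expand : integralGen V P g i * integralGen V P g i - 1 =
      b • integralIdem V P g i - a • integralGen V P g i := by
    refine Subtype.ext ?_
    change g i * g i - 1 = b • P.idem 1 (g i) - a • g i
    rw [P.mul_self 1 (g i), ← hb', ← ha', algebraMap_smul, algebraMap_smul]
    abel
  have reduction_smul {v : V} (hv : v ∈ IsLocalRing.maximalIdeal V) (x : unitalIntegralForm V P g) :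
      reduction V _ (v • x) = 0 :=
    reduction_eq_zero ⟨v, hv, rfl⟩ (y := x) (algebraMap_smul K v (x : B)).symm
  rw [expand, map_sub, reduction_smul hb, reduction_smul ha, sub_zero]

/- For adjacent nodes both products of the idempotents lie in `δ⁻¹` times the integral form, so they
vanish in the special fibre. -/
lemma IsBMWSystem.commute_reduction_integralIdem (h : IsBMWSystem P Q Finset.univ 1 g)
    (hP : P.IsDegenerate V) (i k : ι) :
    Commute (reduction V _ (integralIdem V P g i)) (reduction V _ (integralIdem V P g k)) := by
  have mul_eq_zero {i k : ι} (ha : Q.Adj i k) :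
      reduction V _ (integralIdem V P g i * integralIdem V P g k) = 0 :=
    reduction_eq_zero hP.inv_δ_mem
      (y := integralGen V P g k * (integralGen V P g i * integralIdem V P g k))
      (h.idem_mul_idem_adj (Finset.mem_univ i) (Finset.mem_univ k) ha)
  rw [Commute, SemiconjBy, ← map_mul, ← map_mul]
  by_cases hik : i = k
  · rw [hik]
  by_cases ha : Q.Adj i k
  · rw [mul_eq_zero ha, mul_eq_zero ha.symm]
  · exact congrArg _ (Subtype.ext
      (h.idem_mul_idem_comm (Finset.mem_univ i) (Finset.mem_univ k) hik ha))

lemma IsBMWSystem.isSpecialFibre (h : IsBMWSystem P Q Finset.univ 1 g) (hP : P.IsDegenerate V) :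
    IsSpecialFibre Q (fun i => reduction V _ (integralGen V P g i))
      fun i => reduction V _ (integralIdem V P g i) where
  comm hi hk hik ha := by
    rw [← map_mul, ← map_mul]
    exact congrArg _ (Subtype.ext (h.comm hi hk hik ha))
  braid hi hk ha := by
    simp only [← map_mul]
    exact congrArg _ (Subtype.ext (h.braid hi hk ha))
  mul_self := reduction_integralGen_mul_self hP
  idem i := by
    rw [IsIdempotentElem, ← map_mul]
    exact congrArg _ (Subtype.ext (h.idem_mul_idem_self (Finset.mem_univ i)))
  commute := h.commute_reduction_integralIdem hP
  mul_idem i := by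
    rw [← map_mul]
    exact reduction_eq hP.inv_l_sub_one_mem (h.mul_idem (Finset.mem_univ i))
  idem_mul i := by
    rw [← map_mul]
    exact reduction_eq hP.inv_l_sub_one_mem (h.idem_mul (Finset.mem_univ i))
  mul_idem_comm {i k} hik ha := by
    rw [← map_mul, ← map_mul]
    exact congrArg _ (Subtype.ext (h.idem_mul_comm (Finset.mem_univ k) (Finset.mem_univ i) hik.symm
      fun h => ha h.symm).symm)
  mul_mul_idem {i k} ha := by
    simp only [← map_mul]
    exact congrArg _ (Subtype.ext
      (h.mul_mul_idem (Finset.mem_univ k) (Finset.mem_univ i) ha.symm))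

lemma adjoin_reduction_eq_top (V : Type*) [CommRing V] [IsLocalRing V] [Algebra V B] (P : Params K)
    (g : ι → B) :
    Algebra.adjoin (IsLocalRing.ResidueField V)
      ((Set.range fun i => reduction V _ (integralGen V P g i)) ∪
        Set.range fun i => reduction V _ (integralIdem V P g i)) = ⊤ := by
  set T := Algebra.adjoin (IsLocalRing.ResidueField V)
    ((Set.range fun i => reduction V _ (integralGen V P g i)) ∪
      Set.range fun i => reduction V _ (integralIdem V P g i))
  have reduction_mem (x : unitalIntegralForm V P g) : reduction V _ x ∈ T := by
    let C := ((T.restrictScalars V).comap (reduction V _)).map (unitalIntegralForm V P g).val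
    have le : integralForm V P Finset.univ 1 g ≤ C.toNonUnitalSubalgebra :=
      integralForm_le (one_mem C)
        (fun i _ => ⟨integralGen V P g i, Algebra.subset_adjoin (Or.inl ⟨i, rfl⟩), rfl⟩)
        fun i _ => ⟨integralIdem V P g i, Algebra.subset_adjoin (Or.inr ⟨i, rfl⟩), rfl⟩
    obtain ⟨y, hy, hyx⟩ := le x.2
    rwa [← Subtype.ext hyx]
  refine Algebra.eq_top_iff.2 fun c => ?_
  induction c using TensorProduct.induction_on with
  | zero => exact T.zero_mem
  | tmul a y =>
    rw [← mul_one a, ← smul_eq_mul, ← TensorProduct.smul_tmul']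
    exact T.smul_mem (reduction_mem y) a
  | add x y hx hy => exact T.add_mem hx hy

lemma span_unitalIntegralForm_eq_top (V : Type*) [CommRing V] [Algebra V B]
    (htop : Algebra.adjoin K (Set.range g ∪ Set.range fun i => P.idem 1 (g i)) = ⊤) :
    Submodule.span K (unitalIntegralForm V P g : Set B) = ⊤ := by
  rw [eq_top_iff, ← Algebra.top_toSubmodule, ← htop, Algebra.adjoin_eq_span]
  refine Submodule.span_mono (?_ : Submonoid.closure _ ≤ (unitalIntegralForm V P g).toSubmonoid)
  rw [Submonoid.closure_le]
  rintro _ (⟨i, rfl⟩ | ⟨i, rfl⟩)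
  exacts [(integralGen V P g i).2, (integralIdem V P g i).2]

end Fibre

theorem IsBMWSystem.isSemisimpleRing {V K B ι : Type*} [CommRing V] [IsDomain V] [ValuationRing V]
    [CharZero (IsLocalRing.ResidueField V)] [Field K] [Algebra V K] [IsFractionRing V K] [Ring B]
    [Algebra K B] [Algebra V B] [IsScalarTower V K B] [Fintype ι] [DecidableEq ι]
    {Q : SimpleGraph ι} {P : Params K} {g : ι → B} (h : IsBMWSystem P Q Finset.univ 1 g)
    (hQ : IsPosDef Q) (hP : P.IsDegenerate V)
    (htop : Algebra.adjoin K (Set.range g ∪ Set.range fun i => P.idem 1 (g i)) = ⊤) :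
    IsSemisimpleRing B := by
  have := (h.isSpecialFibre hP).isSemisimpleRing hQ (adjoin_reduction_eq_top V P g)
  exact isSemisimpleRing_of_residueField_tensorProduct (K := K) (h.fg_integralForm hQ hP.isIntegral)
    (span_unitalIntegralForm_eq_top V htop)

/-! ### Valuations at the degenerate point -/

section Valuation

lemma exists_valuationSubring_of_ker_le {R K : Type*} [CommRing R] [Field K] (φ : R →+* K)
    {I : Ideal R} (hI : I ≠ ⊤) (hφ : RingHom.ker φ ≤ I) :
    ∃ W : ValuationSubring K, (∀ x, φ x ∈ W) ∧ ∀ x ∈ I, W.valuation (φ x) < 1 := by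
  have map_ne_top : I.map φ.rangeRestrict ≠ ⊤ := by
    rw [Ne, Ideal.eq_top_iff_one,
      Ideal.mem_map_iff_of_surjective _ φ.rangeRestrict_surjective]
    rintro ⟨x, hx, hx'⟩
    have sub_mem : x - 1 ∈ I := hφ <| by
      rw [RingHom.mem_ker, map_sub, map_one, sub_eq_zero]
      exact congrArg Subtype.val hx'
    exact hI ((Ideal.eq_top_iff_one I).2 (by simpa using I.sub_mem hx sub_mem))
  obtain ⟨W, hW, hW'⟩ := Ideal.image_subset_nonunits_valuationSubring _ map_ne_top
  exact ⟨W, fun x => hW ⟨x, rfl⟩, fun x hx => hW' ⟨_, Ideal.mem_map_of_mem _ hx, rfl⟩⟩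

variable {K : Type*} [Field K] {W : ValuationSubring K}

lemma mem_image_maximalIdeal_iff {c : K} :
    c ∈ algebraMap W K '' IsLocalRing.maximalIdeal W ↔ W.valuation c < 1 :=
  Set.ext_iff.1 W.image_maximalIdeal c

lemma Params.isDegenerate_of_valuation_lt_one {P : Params K} (hl : W.valuation (P.l - 1) < 1)
    (hδ : W.valuation P.δ⁻¹ < 1) : P.IsDegenerate W := by
  have l_ne_zero := P.l_ne_zero
  have δ_ne_zero := P.δ_ne_zero
  have val_l : W.valuation P.l = 1 := by simpa using W.valuation.map_one_add_of_lt hl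
  have val_inv_l_sub_one : W.valuation (P.l⁻¹ - 1) < 1 := by
    rw [show P.l⁻¹ - 1 = -((P.l - 1) * P.l⁻¹) by field_simp; ring, Valuation.map_neg, map_mul,
      map_inv₀, val_l, inv_one, mul_one]
    exact hl
  have val_m_mul_δ : W.valuation (P.m * P.δ) < 1 := by
    calc W.valuation (P.m * P.δ)
        = W.valuation (P.m * P.δ) * W.valuation (1 - P.δ⁻¹) := by
          rw [W.valuation.map_one_sub_of_lt hδ, mul_one]
      _ = W.valuation (-(P.m * (1 - P.δ))) := by rw [← map_mul]; congr 1; field_simp; ring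
      _ = W.valuation ((P.l - 1) - (P.l⁻¹ - 1)) := by
          rw [Valuation.map_neg, P.mul_one_sub, sub_sub_sub_cancel_right]
      _ < 1 := W.valuation.map_sub_lt hl val_inv_l_sub_one
  exact {
    l_mem := ⟨⟨P.l, (W.valuation_le_one_iff _).1 val_l.le⟩, rfl⟩
    inv_l_sub_one_mem := mem_image_maximalIdeal_iff.2 val_inv_l_sub_one
    m_mul_δ_mem := mem_image_maximalIdeal_iff.2 val_m_mul_δ
    inv_δ_mem := mem_image_maximalIdeal_iff.2 hδ }

end Valuation

/-! ### The parameters in `ℚ(l, δ)` -/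

section BMWField

open Polynomial

lemma lVar_sq_ne_C (c : RatFunc ℚ) : lVar ^ 2 ≠ RatFunc.C c := fun h =>
  (RatFunc.transcendental_X (K := RatFunc ℚ)).pow two_pos
    (h ▸ isAlgebraic_algebraMap (A := BMWField) c)

lemma lVar_ne_zero : lVar ≠ 0 := RatFunc.X_ne_zero

lemma deltaVar_ne_zero : deltaVar ≠ 0 := (_root_.map_ne_zero _).2 RatFunc.X_ne_zero

lemma one_sub_deltaVar_ne_zero : 1 - deltaVar ≠ 0 := fun h => by
  have one_eq_X : (1 : RatFunc ℚ) = RatFunc.X :=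
    RatFunc.C.injective ((map_one _).trans (sub_eq_zero.1 h))
  simpa using congrArg RatFunc.intDegree one_eq_X

/-- The parameters of the Birman–Murakami–Wenzl algebras over `ℚ(l, δ)`. -/
noncomputable def bmwParams : Params BMWField where
  l := lVar
  m := mVar
  δ := deltaVar
  l_ne_zero := lVar_ne_zero
  m_ne_zero := by
    refine div_ne_zero (fun h => lVar_sq_ne_C 1 ?_) one_sub_deltaVar_ne_zero
    have := lVar_ne_zero
    field_simp at h
    rw [map_one]
    linear_combination h
  δ_ne_zero := deltaVar_ne_zero
  inv_add_ne_zero h := by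
    have := lVar_ne_zero
    have := one_sub_deltaVar_ne_zero
    refine lVar_sq_ne_C RatFunc.X (?_ : _ = deltaVar)
    rw [mVar] at h
    field_simp at h
    linear_combination h
  mul_one_sub := div_mul_cancel₀ _ one_sub_deltaVar_ne_zero

/-- The embedding of `ℚ[δ⁻¹][l]` into `ℚ(l, δ)`; the outer variable is `l`. -/
noncomputable def polynomialHom : ℚ[X][X] →+* BMWField :=
  (algebraMap (RatFunc ℚ)[X] BMWField).comp
    (mapRingHom (aeval (RatFunc.X⁻¹ : RatFunc ℚ)).toRingHom)

lemma polynomialHom_injective : Function.Injective polynomialHom := by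
  have transcendental_inv : Transcendental ℚ (RatFunc.X⁻¹ : RatFunc ℚ) := fun h =>
    RatFunc.transcendental_X (K := ℚ) (by convert IsAlgebraic.inv_iff.1 h; subsingleton)
  exact (RatFunc.algebraMap_injective _).comp
    (map_injective _ (transcendental_iff_injective.1 transcendental_inv))

lemma polynomialHom_X : polynomialHom X = lVar := by simp [polynomialHom, lVar]

lemma polynomialHom_C_X : polynomialHom (C X) = deltaVar⁻¹ := by simp [polynomialHom, deltaVar]

/- `W` dominates the local ring of `ℚ[δ⁻¹][l]` at `l = 1`, `δ⁻¹ = 0`. -/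
theorem exists_isDegenerate_bmwParams : ∃ W : ValuationSubring BMWField,
    CharZero (IsLocalRing.ResidueField W) ∧ bmwParams.IsDegenerate W := by
  let ev : ℚ[X][X] →+* ℚ := (evalRingHom 0).comp (evalRingHom 1)
  obtain ⟨W, hW, val_lt_one⟩ := exists_valuationSubring_of_ker_le polynomialHom
    (RingHom.ker_ne_top ev)
    (((RingHom.injective_iff_ker_eq_bot _).1 polynomialHom_injective).trans_le bot_le)
  refine ⟨W, ?_, Params.isDegenerate_of_valuation_lt_one ?_ ?_⟩
  · exact charZero_of_injective_ringHom (((IsLocalRing.residue W).comp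
      (polynomialHom.codRestrict W.toSubring hW)).comp (C.comp C)).injective
  · have := val_lt_one (X - 1) (by simp [ev])
    rwa [map_sub, map_one, polynomialHom_X] at this
  · have := val_lt_one (C X) (by simp [ev])
    rwa [polynomialHom_C_X] at this

end BMWField

/-! ### The Birman–Murakami–Wenzl algebra -/

section BMWAlgebra

variable {n : ℕ} (Q : SimpleGraph (Fin n))

/-- The generator `g i` of the Birman–Murakami–Wenzl algebra. -/
noncomputable def bmwG (i : Fin n) : BMWAlgebra n Q :=
  RingQuot.mkAlgHom BMWField (BMWRel n Q) (FreeAlgebra.ι BMWField (.inl i))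

/-- The generator `e i` of the Birman–Murakami–Wenzl algebra. -/
noncomputable def bmwE (i : Fin n) : BMWAlgebra n Q :=
  RingQuot.mkAlgHom BMWField (BMWRel n Q) (FreeAlgebra.ι BMWField (.inr i))

lemma bmwParams_idem_bmwG (i : Fin n) :
    bmwParams.idem 1 (bmwG Q i) = deltaVar⁻¹ • bmwE Q i := by
  have quad : mVar • bmwE Q i =
      lVar • (bmwG Q i * bmwG Q i + mVar • bmwG Q i - 1) := by
    simpa only [bmwG, bmwE, map_smul, map_sub, map_add, map_mul, map_one] using
      RingQuot.mkAlgHom_rel BMWField (BMWRel.quad (Q := Q) i)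
  have m_ne_zero : mVar ≠ 0 := bmwParams.m_ne_zero
  calc (lVar / (mVar * deltaVar)) • (bmwG Q i * bmwG Q i + mVar • bmwG Q i - 1)
      = (mVar * deltaVar)⁻¹ • mVar • bmwE Q i := by rw [quad, smul_smul, div_eq_inv_mul]
    _ = deltaVar⁻¹ • bmwE Q i := by
        rw [smul_smul, mul_inv_rev, inv_mul_cancel_right₀ m_ne_zero]

theorem isBMWSystem_bmwG : IsBMWSystem bmwParams Q Finset.univ 1 (bmwG Q) where
  comm {i j} _ _ hne hij := by
    simpa only [bmwG, map_mul] using RingQuot.mkAlgHom_rel BMWField (BMWRel.gg i j hne hij)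
  braid {i j} _ _ hij := by
    simpa only [bmwG, map_mul, mul_assoc] using
      RingQuot.mkAlgHom_rel BMWField (BMWRel.braid i j hij)
  unit_mul_unit := one_mul 1
  unit_mul _ := one_mul _
  mul_unit _ := mul_one _
  mul_idem {i} _ := by
    have ge : bmwG Q i * bmwE Q i = lVar⁻¹ • bmwE Q i := by
      simpa only [bmwG, bmwE, map_mul, map_smul] using
        RingQuot.mkAlgHom_rel BMWField (BMWRel.ge (Q := Q) i)
    rw [bmwParams_idem_bmwG, mul_smul_comm, ge, smul_comm]
    rfl
  idem_mul_mul_idem {i j} _ _ hij := by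
    have ege : bmwE Q i * (bmwG Q j * bmwE Q i) = lVar • bmwE Q i := by
      simpa only [bmwG, bmwE, map_mul, map_smul, mul_assoc] using
        RingQuot.mkAlgHom_rel BMWField (BMWRel.ege i j hij)
    rw [bmwParams_idem_bmwG, mul_smul_comm, smul_mul_assoc, mul_smul_comm, ege, smul_comm _ lVar,
      smul_comm _ lVar, div_eq_mul_inv, mul_smul]
    rfl

theorem adjoin_bmwG_eq_top : Algebra.adjoin BMWField
    (Set.range (bmwG Q) ∪ Set.range fun i => bmwParams.idem 1 (bmwG Q i)) = ⊤ := by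
  rw [eq_top_iff, ← (AlgHom.range_eq_top _).2 (RingQuot.mkAlgHom_surjective BMWField (BMWRel n Q)),
    ← Algebra.map_top, ← FreeAlgebra.adjoin_range_ι, AlgHom.map_adjoin, Algebra.adjoin_le_iff]
  rintro _ ⟨_, ⟨i | i, rfl⟩, rfl⟩
  · exact Algebra.subset_adjoin (Or.inl ⟨i, rfl⟩)
  · have bmwE_eq : bmwE Q i = deltaVar • bmwParams.idem 1 (bmwG Q i) := by
      rw [bmwParams_idem_bmwG, smul_inv_smul₀ deltaVar_ne_zero]
    rw [SetLike.mem_coe, ← bmwE, bmwE_eq]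
    refine Subalgebra.smul_mem _ ?_ _
    exact Algebra.subset_adjoin (Or.inr ⟨i, rfl⟩)

end BMWAlgebra

end BMW

theorem bmwAlgebra_isSemisimpleRing_general (n : ℕ) (Q : SimpleGraph (Fin n))
    (hQ : BMW.IsPosDef Q) : IsSemisimpleRing (BMWAlgebra n Q) := by
  obtain ⟨W, _, hW⟩ := BMW.exists_isDegenerate_bmwParams
  exact (BMW.isBMWSystem_bmwG Q).isSemisimpleRing hQ hW (BMW.adjoin_bmwG_eq_top Q)

/-- Let `Q` be one of the graphs `A_n` (`n ≥ 1`), `D_n`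
(`n ≥ 4`), `E_6`, `E_7` or `E_8`. Then the Birman–Murakami–Wenzl algebra
`B(Q)` over `K = ℚ(l,δ)` is a semisimple ring. -/
theorem bmwAlgebra_isSemisimpleRing
    (n : ℕ) (Q : SimpleGraph (Fin n))
    (hQ : (1 ≤ n ∧ Q = typeA n) ∨ (4 ≤ n ∧ Q = typeD n) ∨
      ((n = 6 ∨ n = 7 ∨ n = 8) ∧ Q = typeE n)) :
    IsSemisimpleRing (BMWAlgebra n Q) := by
  refine bmwAlgebra_isSemisimpleRing_general n Q ?_
  rcases hQ with ⟨_, rfl⟩ | ⟨_, rfl⟩ | ⟨hn, rfl⟩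
  exacts [BMW.isPosDef_typeA n, BMW.isPosDef_typeD n, BMW.isPosDef_typeE (by lia)]
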